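/- Suppose R is a commutative coherent ring such that the map f_R from the lattice of wide subcategories of finitely presented R-modules to the lattice of thick subcategories of small objects of D(R) (sending C to {small X : H_n X ∈ C for all n}) is an isomorphism, and let a be a finitely generated ideal of R. Then the corresponding map f_{R/a} for the ring R/a is also an isomorphism. -/

import Mathlib

open CategoryTheory CategoryTheory.Limits CategoryTheory.Pretriangulated ZeroObject

universe w u

/-- A full subcategory (given as a set of objects) of an abelian category is *wide*
if it is closed under isomorphisms, kernels, cokernels and extensions. -/
structure IsWideSubcategory {A : Type*} [Category A] [Abelian A] (C : Set A) : Prop where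
  mem_of_iso : ∀ {X Y : A}, (X ≅ Y) → X ∈ C → Y ∈ C
  kernel_mem : ∀ {X Y : A} (f : X ⟶ Y), X ∈ C → Y ∈ C → kernel f ∈ C
  cokernel_mem : ∀ {X Y : A} (f : X ⟶ Y), X ∈ C → Y ∈ C → cokernel f ∈ C
  extension_mem : ∀ (S : CategoryTheory.ShortComplex A), S.ShortExact →
    S.X₁ ∈ C → S.X₃ ∈ C → S.X₂ ∈ C

/-- The wide subcategory generated by a set of objects: the intersection of all
wide subcategories containing it. -/
def wideClosure {A : Type*} [Category A] [Abelian A] (S : Set A) : Set A :=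
  ⋂₀ {C : Set A | IsWideSubcategory C ∧ S ⊆ C}

/-- `C₀`, the wide subcategory of `R`-modules generated by the module `R`. -/
def wideSubcatGenByRing (R : Type u) [Ring R] : Set (ModuleCat.{u} R) :=
  wideClosure {ModuleCat.of R R}

/-- A thick subcategory of a (pre)triangulated category: a full triangulated
subcategory closed under retracts (direct summands). -/
structure IsThickSubcategory {T : Type*} [Category T] [HasZeroObject T] [Preadditive T]
    [HasShift T ℤ] [∀ n : ℤ, (shiftFunctor T n).Additive] [Pretriangulated T]
    (D : Set T) : Prop where
  mem_of_iso : ∀ {X Y : T}, (X ≅ Y) → X ∈ D → Y ∈ D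
  zero_mem : (0 : T) ∈ D
  shift_mem : ∀ (X : T) (n : ℤ), X ∈ D → X⟦n⟧ ∈ D
  ext₂ : ∀ (T' : Triangle T), T' ∈ (distTriang T) → T'.obj₁ ∈ D → T'.obj₃ ∈ D → T'.obj₂ ∈ D
  retract_mem : ∀ (X Y : T) (i : X ⟶ Y) (r : Y ⟶ X), i ≫ r = 𝟙 X → Y ∈ D → X ∈ D

/-- An object of the derived category of `R`-modules is *small* if it belongs to every
thick subcategory containing the complex `S⁰R` (`R` concentrated in degree `0`), i.e. to
the thick subcategory generated by `S⁰R`; equivalently, `Hom(X,-)` commutes with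
arbitrary direct sums. -/
def IsSmallObject {R : Type u} [Ring R] [HasDerivedCategory.{w} (ModuleCat.{u} R)]
    (X : DerivedCategory (ModuleCat.{u} R)) : Prop :=
  ∀ D : Set (DerivedCategory (ModuleCat.{u} R)), IsThickSubcategory D →
    (DerivedCategory.singleFunctor (ModuleCat.{u} R) 0).obj (ModuleCat.of R R) ∈ D → X ∈ D

/-- The map `f` : it sends a wide subcategory `C` to the collection of small objects `X`
of the derived category such that `Hₙ X ∈ C` for all `n`. -/
def fSet {R : Type u} [Ring R] [HasDerivedCategory.{w} (ModuleCat.{u} R)]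
    (C : Set (ModuleCat.{u} R)) : Set (DerivedCategory (ModuleCat.{u} R)) :=
  {X | IsSmallObject X ∧
    ∀ n : ℤ, (DerivedCategory.homologyFunctor (ModuleCat.{u} R) n).obj X ∈ C}

/-- The map `g` : it sends a thick subcategory `D` to the wide subcategory generated by
the homology modules `Hₙ X` for `X ∈ D` and `n : ℤ`. -/
def gSet {R : Type u} [Ring R] [HasDerivedCategory.{w} (ModuleCat.{u} R)]
    (D : Set (DerivedCategory (ModuleCat.{u} R))) : Set (ModuleCat.{u} R) :=
  wideClosure {M | ∃ X ∈ D, ∃ n : ℤ,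
    Nonempty ((DerivedCategory.homologyFunctor (ModuleCat.{u} R) n).obj X ≅ M)}

/-- A ring is left coherent if every finitely generated left ideal is finitely
presented as a module. -/
def IsLeftCoherentRing (R : Type u) [Ring R] : Prop :=
  ∀ I : Ideal R, I.FG → Module.FinitePresentation R I

/-- The collection of finitely presented `R`-modules. -/
def finPresModules (R : Type u) [Ring R] : Set (ModuleCat.{u} R) :=
  {M : ModuleCat.{u} R | Module.FinitePresentation R M}

/-- The lattice of (nonempty) wide subcategories of finitely presented `R`-modules. -/
def wideLatticeFP (R : Type u) [Ring R] : Set (Set (ModuleCat.{u} R)) :=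
  {C | IsWideSubcategory C ∧ C.Nonempty ∧ C ⊆ finPresModules R}

/-- The lattice of thick subcategories of small objects of the derived category. -/
def thickLatticeSmall (R : Type u) [Ring R] [HasDerivedCategory.{w} (ModuleCat.{u} R)] :
    Set (Set (DerivedCategory (ModuleCat.{u} R))) :=
  {D | IsThickSubcategory D ∧ ∀ X ∈ D, IsSmallObject X}

/-- `f` is a lattice isomorphism from the lattice of wide subcategories of finitely
presented `R`-modules onto the lattice of thick subcategories of small objects of
`D(R)`: it maps the first lattice into the second, preserves and reflects inclusions,
and is surjective. -/
def fIsLatticeIso (R : Type u) [Ring R] [HasDerivedCategory.{w} (ModuleCat.{u} R)] : Prop :=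
  (∀ C ∈ wideLatticeFP R, fSet C ∈ thickLatticeSmall R) ∧
  (∀ C₁ ∈ wideLatticeFP R, ∀ C₂ ∈ wideLatticeFP R, (fSet C₁ ⊆ fSet C₂ ↔ C₁ ⊆ C₂)) ∧
  (∀ D ∈ thickLatticeSmall R, ∃ C ∈ wideLatticeFP R, fSet C = D)

set_option linter.unusedSectionVars false


/-- A differential graded algebra, with the grading only remembered through the involution `σ`. -/
structure SkewDer (A B : Type*) [CommRing A] [Ring B] [Algebra A B] where
  d : B →ₗ[A] B
  σ : B →ₗ[A] B
  leib : ∀ x y, d (x * y) = d x * y + σ x * d y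
  dd : ∀ x, d (d x) = 0
  dσ : ∀ x, d (σ x) = - σ (d x)
  σσ : ∀ x, σ (σ x) = x
  σ_one : σ 1 = 1

namespace SkewDer
variable {A B : Type*} [CommRing A] [Ring B] [Algebra A B] (S : SkewDer A B)

/-- boundaries plus multiples of an ideal -/
def bdI (I : Ideal A) : Submodule A B := LinearMap.range S.d ⊔ I • (⊤ : Submodule A B)

lemma mem_bdI {I : Ideal A} {x : B} :
    x ∈ S.bdI I ↔ ∃ u, x - S.d u ∈ I • (⊤ : Submodule A B) := by
  constructor
  · intro h
    obtain ⟨_, ⟨u, rfl⟩, z, hz, rfl⟩ := Submodule.mem_sup.1 h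
    exact ⟨u, by simpa using hz⟩
  · rintro ⟨u, hu⟩
    exact Submodule.mem_sup.2 ⟨S.d u, ⟨u, rfl⟩, _, hu, by simp⟩

lemma d_one : S.d 1 = 0 := by
  have := S.leib 1 1
  simpa [S.σ_one] using this

lemma smul_top_mul_left {I : Ideal A} {x : B} (y : B) (hx : x ∈ I • (⊤ : Submodule A B)) :
    y * x ∈ I • (⊤ : Submodule A B) := by
  have := Submodule.mem_map_of_mem (f := LinearMap.mulLeft A y) hx
  rw [Submodule.map_smul''] at this
  exact Submodule.smul_mono le_rfl le_top this

lemma smul_top_mul_right {I : Ideal A} {x : B} (y : B) (hx : x ∈ I • (⊤ : Submodule A B)) :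
    x * y ∈ I • (⊤ : Submodule A B) := by
  have := Submodule.mem_map_of_mem (f := LinearMap.mulRight A y) hx
  rw [Submodule.map_smul''] at this
  exact Submodule.smul_mono le_rfl le_top this

lemma smul_top_map {M N : Type*} [AddCommGroup M] [Module A M] [AddCommGroup N] [Module A N]
    {I : Ideal A} {x : M} (f : M →ₗ[A] N) (hx : x ∈ I • (⊤ : Submodule A M)) :
    f x ∈ I • (⊤ : Submodule A N) := by
  have := Submodule.mem_map_of_mem (f := f) hx
  rw [Submodule.map_smul''] at this
  exact Submodule.smul_mono le_rfl le_top this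

lemma mem_smul_top_sup_span {M : Type*} [AddCommGroup M] [Module A M] {I : Ideal A} {a : A}
    {x : M} (hx : x ∈ (I ⊔ Ideal.span {a}) • (⊤ : Submodule A M)) :
    ∃ v, x - a • v ∈ I • (⊤ : Submodule A M) := by
  rw [Submodule.sup_smul] at hx
  obtain ⟨y, hy, z, hz, rfl⟩ := Submodule.mem_sup.1 hx
  rw [Submodule.ideal_span_singleton_smul] at hz
  obtain ⟨v, -, rfl⟩ := hz
  exact ⟨v, by simpa using hy⟩

lemma smul_mem_smul_top_of_prime {M : Type*} [AddCommGroup M] [Module A M] [Module.Free A M]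
    {p : Ideal A} [p.IsPrime] {s : A} (hs : s ∉ p) {x : M}
    (hx : s • x ∈ p • (⊤ : Submodule A M)) : x ∈ p • (⊤ : Submodule A M) := by
  let b := Module.Free.chooseBasis A M
  have h1 : ∀ i, b.repr x i ∈ p := by
    intro i
    have h2 := smul_top_map (b.coord i) hx
    rw [smul_eq_mul, Ideal.mul_top] at h2
    simp only [map_smul, smul_eq_mul, Module.Basis.coord_apply] at h2
    exact (Ideal.IsPrime.mem_or_mem ‹_› h2).resolve_left hs
  rw [← b.linearCombination_repr x, Finsupp.linearCombination_apply]
  exact Submodule.sum_mem _ fun i _ => Submodule.smul_mem_smul (h1 i) trivial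

theorem one_mem_range [Module.Free A B]
    (h : ∀ p : Ideal A, p.IsPrime → ∃ s ∉ p, algebraMap A B s ∈ S.bdI p) :
    ∃ t, S.d t = 1 := by
  by_contra hne
  have h0 : (1 : B) ∉ S.bdI ⊥ := by
    intro h1
    obtain ⟨u, hu⟩ := S.mem_bdI.1 h1
    rw [Submodule.bot_smul, Submodule.mem_bot, sub_eq_zero] at hu
    exact hne ⟨u, hu.symm⟩
  obtain ⟨p, -, hp⟩ := zorn_le_nonempty₀ {I : Ideal A | (1 : B) ∉ S.bdI I} (by
    intro c hc hchain y hy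
    refine ⟨sSup c, ?_, fun z hz => le_sSup hz⟩
    intro hmem
    obtain ⟨u, hu⟩ := S.mem_bdI.1 hmem
    have : (sSup c) • (⊤ : Submodule A B) = sSup ((fun I : Ideal A => I • (⊤ : Submodule A B)) '' c) := by
      rw [sSup_image, sSup_eq_iSup]
      simp_rw [Submodule.iSup_smul]
    rw [this, Submodule.mem_sSup_of_directed (Set.Nonempty.image _ ⟨y, hy⟩)] at hu
    · obtain ⟨_, ⟨I, hI, rfl⟩, hu⟩ := hu
      exact hc hI (S.mem_bdI.2 ⟨u, hu⟩)
    · rintro _ ⟨I, hI, rfl⟩ _ ⟨J, hJ, rfl⟩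
      rcases hchain.total hI hJ with h | h
      · exact ⟨_, ⟨J, hJ, rfl⟩, Submodule.smul_mono_left h, le_rfl⟩
      · exact ⟨_, ⟨I, hI, rfl⟩, le_rfl, Submodule.smul_mono_left h⟩) ⊥ h0
  have hp1 : (1 : B) ∉ S.bdI p := hp.prop
  have hmax : ∀ x ∉ p, ∃ u v, (1 : B) - S.d u - x • v ∈ p • (⊤ : Submodule A B) := by
    intro x hx
    have : (1 : B) ∈ S.bdI (p ⊔ Ideal.span {x}) := by
      by_contra hcon
      have := hp.le_of_ge (y := p ⊔ Ideal.span {x}) hcon le_sup_left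
      exact hx (this (Ideal.mem_sup_right (Ideal.mem_span_singleton_self x)))
    obtain ⟨u, hu⟩ := S.mem_bdI.1 this
    obtain ⟨v, hv⟩ := mem_smul_top_sup_span hu
    exact ⟨u, v, hv⟩
  have hprime : p.IsPrime := by
    refine ⟨?_, ?_⟩
    · rintro rfl
      apply hp1
      rw [S.mem_bdI]
      exact ⟨0, by simp⟩
    · intro x y hxy
      by_contra hcon
      push Not at hcon
      obtain ⟨u, v, huv⟩ := hmax x hcon.1
      obtain ⟨u', v', huv'⟩ := hmax y hcon.2
      apply hp1
      rw [S.mem_bdI]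
      refine ⟨u + u' - u * S.d u', ?_⟩
      have key : (1 : B) - S.d (u + u' - u * S.d u')
          = (1 - S.d u - x • v) * (1 - S.d u') + (x • v) * (1 - S.d u' - y • v') + (x * y) • (v * v') := by
        rw [map_sub, map_add, S.leib, S.dd]
        simp only [sub_mul, mul_sub, mul_one, one_mul, mul_zero, add_zero, smul_mul_assoc, mul_smul_comm, smul_smul, mul_comm y x]
        abel
      rw [key]
      exact add_mem (add_mem (smul_top_mul_right _ huv) (smul_top_mul_left _ huv'))
        (Submodule.smul_mem_smul hxy trivial)
  obtain ⟨s, hs, hs1⟩ := h p hprime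
  obtain ⟨u, hu⟩ := S.mem_bdI.1 hs1
  obtain ⟨v, w, hvw⟩ := hmax s hs
  have hdw : S.d w ∈ p • (⊤ : Submodule A B) := by
    apply smul_mem_smul_top_of_prime hs
    have := smul_top_map S.d hvw
    rw [map_sub, map_sub, S.d_one, S.dd, map_smul, sub_zero, zero_sub] at this
    simpa using neg_mem this
  apply hp1
  rw [S.mem_bdI]
  refine ⟨v + S.σ w * u, ?_⟩
  have key : (1 : B) - S.d (v + S.σ w * u) =
      (1 - S.d v - s • w) + w * (algebraMap A B s - S.d u) + S.σ (S.d w) * u := by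
    rw [map_add, S.leib, S.dσ, S.σσ, mul_sub, ← Algebra.commutes, ← Algebra.smul_def, neg_mul]
    abel
  rw [key]
  exact add_mem (add_mem hvw (smul_top_mul_left _ hu)) (smul_top_mul_right _ (smul_top_map S.σ hdw))

end SkewDer


/-- a signed matrix differential -/
structure SMat (A : Type*) [CommRing A] (ι : Type*) [Fintype ι] [DecidableEq ι] where
  s : ι → A
  d : Matrix ι ι A
  ss : ∀ i, s i * s i = 1
  sd : ∀ i j, s i * d i j = - (d i j * s j)
  dd : ∀ i j, ∑ a, d i a * d a j = 0


namespace SMat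
variable {A : Type*} [CommRing A] {ι : Type*} [Fintype ι] [DecidableEq ι] (Y : SMat A ι)

/-- the free algebra -/
abbrev T (A : Type*) [CommRing A] (ι : Type*) := FreeAlgebra A (ι × ι)

/-- generators -/
def g (i j : ι) : T A ι := FreeAlgebra.ι A (i, j)

/-- the sign automorphism -/
noncomputable def sig : T A ι →ₐ[A] T A ι :=
  FreeAlgebra.lift A (fun p => (- (Y.s p.1 * Y.s p.2)) • g p.1 p.2)

/-- the differential on generators -/
noncomputable def dg (i j : ι) : T A ι :=
  (if i = j then algebraMap A _ (Y.s i) else 0) + ∑ a, Y.d a i • g a j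
    - ∑ a, (Y.s i * Y.s j * Y.d j a) • g i a

/-- the algebra map to two by two matrices -/
noncomputable def phi : T A ι →ₐ[A] Matrix (Fin 2) (Fin 2) (T A ι) :=
  FreeAlgebra.lift A (fun p => !![Y.sig (g p.1 p.2), Y.dg p.1 p.2; 0, g p.1 p.2])

lemma phi_g (i j : ι) : Y.phi (g i j) = !![Y.sig (g i j), Y.dg i j; 0, g i j] := by
  simp [phi, g]

lemma sig_g (i j : ι) : Y.sig (g i j) = (- (Y.s i * Y.s j)) • g i j := by
  simp [sig, g]

lemma phi_spec (x : T A ι) : Y.phi x 0 0 = Y.sig x ∧ Y.phi x 1 0 = 0 ∧ Y.phi x 1 1 = x := by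
  induction x using FreeAlgebra.induction with
  | grade0 r => simp [Matrix.algebraMap_matrix_apply]
  | grade1 p => 
    have := Y.phi_g p.1 p.2
    simp only [g, Prod.mk.eta] at this
    simp [this]
  | mul a b ha hb => simp [Matrix.mul_apply, Fin.sum_univ_two, ha, hb]
  | add a b ha hb => simp [ha, hb]

/-- the differential -/
noncomputable def dT : T A ι →ₗ[A] T A ι where
  toFun x := Y.phi x 0 1
  map_add' x y := by simp
  map_smul' r x := by simp

lemma dT_g (i j : ι) : Y.dT (g i j) = Y.dg i j := by
  simp [dT, phi_g]

lemma dT_mul (x y : T A ι) : Y.dT (x * y) = Y.dT x * y + Y.sig x * Y.dT y := by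
  have := Y.phi_spec x
  have := Y.phi_spec y
  simp [dT, Matrix.mul_apply, Fin.sum_univ_two, *, add_comm]

lemma dT_algebraMap (r : A) : Y.dT (algebraMap A _ r) = 0 := by
  simp [dT, Matrix.algebraMap_matrix_apply]

lemma dT_one : Y.dT 1 = 0 := by
  simpa using Y.dT_algebraMap 1

lemma sig_sig (x : T A ι) : Y.sig (Y.sig x) = x := by
  induction x using FreeAlgebra.induction with
  | grade0 r => simp
  | grade1 p => 
    have := Y.sig_g p.1 p.2
    simp only [g, Prod.mk.eta] at this
    rw [this, map_smul, this, smul_smul]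
    rw [show (-(Y.s p.1 * Y.s p.2) * -(Y.s p.1 * Y.s p.2)) = (Y.s p.1 * Y.s p.1) * (Y.s p.2 * Y.s p.2) by ring]
    simp [Y.ss]
  | mul a b ha hb => simp [ha, hb]
  | add a b ha hb => simp [ha, hb]

lemma sig_dg (i j : ι) : Y.sig (Y.dg i j) = (Y.s i * Y.s j) • Y.dg i j := by
  simp only [dg, map_add, map_sub, map_sum, smul_add, smul_sub, Finset.smul_sum, map_smul, sig_g, smul_smul]
  congr 1
  · congr 1
    · split_ifs with h
      · subst h
        simp [Y.ss]
      · simp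
    · refine Finset.sum_congr rfl fun a _ => ?_
      congr 1
      linear_combination (-Y.s j) * Y.sd a i
  · refine Finset.sum_congr rfl fun a _ => ?_
    congr 1
    linear_combination (-Y.s i * Y.s j * Y.s i) * Y.sd j a

lemma dT_sig (x : T A ι) : Y.dT (Y.sig x) = - Y.sig (Y.dT x) := by
  induction x using FreeAlgebra.induction with
  | grade0 r => simp [dT_algebraMap]
  | grade1 p => 
    have h := Y.sig_g p.1 p.2
    have h1 := Y.dT_g p.1 p.2
    simp only [g, Prod.mk.eta] at h h1
    rw [h, map_smul, h1, sig_dg, neg_smul]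
  | mul a b ha hb => simp [dT_mul, ha, hb, sig_sig, add_comm]
  | add a b ha hb => simp [ha, hb, add_comm]

lemma dT_dg (i j : ι) : Y.dT (Y.dg i j) = 0 := by
  have h1 : ∀ a b, Y.dT (if a = b then algebraMap A _ (Y.s a) else 0) = 0 := by
    intro a b; split_ifs <;> simp [dT_algebraMap]
  rw [dg, map_sub, map_add, h1, zero_add, map_sum, map_sum]
  simp only [map_smul, dT_g, dg, smul_add, smul_sub, Finset.sum_add_distrib, Finset.sum_sub_distrib,
    Finset.smul_sum, smul_smul, smul_ite, smul_zero, Finset.sum_ite_eq, Finset.sum_ite_eq', Finset.mem_univ, if_true]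
  have e1 : ∑ x, ∑ y, (Y.d x i * Y.d y x) • g (A := A) y j = 0 := by
    rw [Finset.sum_comm]
    refine Finset.sum_eq_zero fun y _ => ?_
    rw [← Finset.sum_smul]
    simp_rw [mul_comm]
    rw [Y.dd, zero_smul]
  have e2 : ∑ x, ∑ y, (Y.s i * Y.s j * Y.d j x * (Y.s i * Y.s x * Y.d x y)) • g (A := A) i y = 0 := by
    rw [Finset.sum_comm]
    refine Finset.sum_eq_zero fun y _ => ?_
    rw [← Finset.sum_smul]
    have : ∀ x, (Y.s i * Y.s j * Y.d j x * (Y.s i * Y.s x * Y.d x y)) = -(Y.s i * Y.s i * Y.s j * Y.s j) * (Y.d j x * Y.d x y) := by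
      intro x
      linear_combination (Y.s i * Y.s j * Y.s i * Y.d x y) * Y.sd j x
    simp_rw [this]
    rw [← Finset.mul_sum, Y.dd, mul_zero, zero_smul]
  have e3 : ∑ x, ∑ y, (Y.d x i * (Y.s x * Y.s j * Y.d j y)) • g (A := A) x y
      = - ∑ x, ∑ y, (Y.s i * Y.s j * Y.d j x * Y.d y i) • g (A := A) y x := by
    rw [Finset.sum_comm, ← Finset.sum_neg_distrib]
    refine Finset.sum_congr rfl fun y _ => ?_
    rw [← Finset.sum_neg_distrib]
    refine Finset.sum_congr rfl fun x _ => ?_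
    rw [← neg_smul]
    congr 1
    linear_combination (Y.s j * Y.d j y) * Y.sd x i
  rw [e1, e2, e3]
  have e4 : Y.d j i • (algebraMap A (T A ι)) (Y.s j) = (Y.s i * Y.s j * Y.d j i) • (algebraMap A (T A ι)) (Y.s i) := by
    rw [Algebra.algebraMap_eq_smul_one, Algebra.algebraMap_eq_smul_one, smul_smul, smul_smul]
    congr 1
    linear_combination (-Y.s j * Y.d j i) * Y.ss i
  rw [e4]
  abel

lemma dT_dT (x : T A ι) : Y.dT (Y.dT x) = 0 := by
  induction x using FreeAlgebra.induction with
  | grade0 r => simp [dT_algebraMap]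
  | grade1 p => 
    have h1 := Y.dT_g p.1 p.2
    simp only [g, Prod.mk.eta] at h1
    rw [h1, dT_dg]
  | mul a b ha hb => simp [dT_mul, ha, hb, dT_sig]
  | add a b ha hb => simp [ha, hb]

variable {κ : Type*} [Fintype κ] [DecidableEq κ] (X : SMat A κ)

/-- sign on matrices -/
noncomputable def sigB : Matrix κ κ (T A ι) →ₗ[A] Matrix κ κ (T A ι) where
  toFun m := Matrix.of fun k l => (X.s k * X.s l) • Y.sig (m k l)
  map_add' x y := by ext; simp
  map_smul' r x := by ext; simp [smul_smul, mul_comm]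

/-- matrix of scalars in the free algebra -/
noncomputable def dM : Matrix κ κ (T A ι) := X.d.map (algebraMap A (T A ι))

/-- differential on matrices -/
noncomputable def dB : Matrix κ κ (T A ι) →ₗ[A] Matrix κ κ (T A ι) where
  toFun m := Matrix.of (fun k l => X.s k • Y.dT (m k l)) + (dM X * m - sigB Y X m * dM X)
  map_add' x y := by
    simp only [map_add, mul_add, add_mul, Matrix.add_apply, smul_add]
    ext; simp; abel
  map_smul' r x := by
    simp only [map_smul, Matrix.smul_apply, RingHom.id_apply, Algebra.mul_smul_comm, Algebra.smul_mul_assoc,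
      smul_add, smul_sub]
    ext; simp [smul_smul, mul_comm]

lemma sigB_mul (m n : Matrix κ κ (T A ι)) : sigB Y X (m * n) = sigB Y X m * sigB Y X n := by
  ext k l
  simp only [sigB, LinearMap.coe_mk, AddHom.coe_mk, Matrix.of_apply, Matrix.mul_apply, map_sum, map_mul, Finset.smul_sum,
    smul_mul_smul_comm]
  refine Finset.sum_congr rfl fun p _ => ?_
  congr 1
  linear_combination (-X.s k * X.s l) * X.ss p

lemma sigB_dM : sigB Y X (dM X) = - dM X := by
  ext k l
  simp only [sigB, LinearMap.coe_mk, AddHom.coe_mk, Matrix.of_apply, dM, Matrix.map_apply, AlgHom.commutes, Matrix.neg_apply,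
    Algebra.smul_def, ← map_mul, ← map_neg]
  congr 1
  linear_combination (X.s l) * X.sd k l - X.d k l * X.ss l

lemma sigB_sigB (m : Matrix κ κ (T A ι)) : sigB Y X (sigB Y X m) = m := by
  ext k l
  simp only [sigB, LinearMap.coe_mk, AddHom.coe_mk, Matrix.of_apply, map_smul, sig_sig, smul_smul]
  rw [show X.s k * X.s l * (X.s k * X.s l) = (X.s k * X.s k) * (X.s l * X.s l) by ring, X.ss, X.ss]
  simp

/-- entrywise part of the differential -/
noncomputable def dE (m : Matrix κ κ (T A ι)) : Matrix κ κ (T A ι) := Matrix.of (fun k l => X.s k • Y.dT (m k l))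

lemma dB_eq (m : Matrix κ κ (T A ι)) : dB Y X m = dE Y X m + (dM X * m - sigB Y X m * dM X) := rfl

lemma dE_mul (m n : Matrix κ κ (T A ι)) : dE Y X (m * n) = dE Y X m * n + sigB Y X m * dE Y X n := by
  ext k l
  simp only [sigB, dE, LinearMap.coe_mk, AddHom.coe_mk, Matrix.of_apply, Matrix.mul_apply, map_sum, Finset.smul_sum,
    Matrix.add_apply, dT_mul, smul_add, Finset.sum_add_distrib, smul_mul_assoc, mul_smul_comm, smul_smul]
  congr 1
  refine Finset.sum_congr rfl fun p _ => ?_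
  congr 1
  linear_combination (-X.s k) * X.ss p

lemma dE_dM : dE Y X (dM X) = 0 := by
  ext k l
  simp [dE, dM, dT_algebraMap]

lemma dE_sigB (m : Matrix κ κ (T A ι)) : dE Y X (sigB Y X m) = - sigB Y X (dE Y X m) := by
  ext k l
  simp [dE, sigB, dT_sig, smul_smul]
  congr 1
  ring

lemma dE_dE (m : Matrix κ κ (T A ι)) : dE Y X (dE Y X m) = 0 := by
  ext k l
  simp [dE, dT_dT]

lemma dE_add (m n : Matrix κ κ (T A ι)) : dE Y X (m + n) = dE Y X m + dE Y X n := by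
  ext k l
  simp [dE]

lemma dE_sub (m n : Matrix κ κ (T A ι)) : dE Y X (m - n) = dE Y X m - dE Y X n := by
  ext k l
  simp [dE, smul_sub]

lemma dM_dM : dM X * dM X = (0 : Matrix κ κ (T A ι)) := by
  ext k l
  simp only [dM, Matrix.mul_apply, Matrix.map_apply, ← map_mul, ← map_sum, X.dd, map_zero, Matrix.zero_apply]

/-- the dg algebra of matrices -/
noncomputable def skewB : SkewDer A (Matrix κ κ (T A ι)) where
  d := dB Y X
  σ := sigB Y X
  leib m n := by
    rw [dB_eq, dB_eq, dB_eq, dE_mul, sigB_mul]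
    noncomm_ring
  dd m := by
    have h := dM_dM (ι := ι) X
    rw [dB_eq, dB_eq]
    simp only [dE_add, dE_sub, dE_dE, dE_mul, dE_dM, dE_sigB, sigB_dM, map_add, map_sub, sigB_mul, sigB_sigB]
    simp only [mul_add, mul_sub, add_mul, sub_mul, mul_assoc, h, ← mul_assoc (dM X) (dM X), mul_zero, zero_mul]
    noncomm_ring
    rw [h, mul_zero, smul_zero]
  dσ m := by
    rw [dB_eq, dB_eq, dE_sigB]
    simp only [map_add, map_sub, sigB_mul, sigB_dM, sigB_sigB]
    noncomm_ring
  σσ m := sigB_sigB Y X m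
  σ_one := by
    ext k l
    simp only [sigB, LinearMap.coe_mk, AddHom.coe_mk, Matrix.of_apply, Matrix.one_apply]
    split_ifs with h
    · subst h
      simp [X.ss]
    · simp

/-- differential on vectors -/
noncomputable def dV : (κ → T A ι) →ₗ[A] (κ → T A ι) where
  toFun v k := X.s k • Y.dT (v k) + ∑ l, X.d k l • v l
  map_add' x y := by
    ext k; simp [Finset.sum_add_distrib]; abel
  map_smul' r x := by
    ext k; simp [Finset.smul_sum, smul_smul, mul_comm]

/-- sign on vectors -/
noncomputable def sigV : (κ → T A ι) →ₗ[A] (κ → T A ι) where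
  toFun v k := X.s k • Y.sig (v k)
  map_add' x y := by
    ext k; simp
  map_smul' r x := by
    ext k; simp [smul_smul, mul_comm]

lemma dV_apply (v : κ → T A ι) (k : κ) : dV Y X v k = X.s k • Y.dT (v k) + ∑ l, X.d k l • v l := rfl
lemma sigV_apply (v : κ → T A ι) (k : κ) : sigV Y X v k = X.s k • Y.sig (v k) := rfl

lemma dV_dV (v : κ → T A ι) : dV Y X (dV Y X v) = 0 := by
  ext k
  simp only [dV_apply, map_add, map_smul, dT_dT, smul_zero, zero_add, map_sum, smul_add, Finset.sum_add_distrib,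
    Finset.smul_sum, smul_smul, Pi.zero_apply]
  have h1 : ∑ x, ∑ y, (X.d k x * X.d x y) • v y = 0 := by
    rw [Finset.sum_comm]
    refine Finset.sum_eq_zero fun y _ => ?_
    rw [← Finset.sum_smul, X.dd, zero_smul]
  rw [h1, add_zero, ← Finset.sum_add_distrib]
  refine Finset.sum_eq_zero fun y _ => ?_
  rw [← add_smul, X.sd, neg_add_cancel, zero_smul]

lemma dV_mulVec (m : Matrix κ κ (T A ι)) (v : κ → T A ι) :
    dV Y X (m.mulVec v) = (dB Y X m).mulVec v + (sigB Y X m).mulVec (dV Y X v) := by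
  have h1 : ∀ v, dV Y X v = (fun k => X.s k • Y.dT (v k)) + (dM X).mulVec v := by
    intro v
    ext k
    simp [dV_apply, dM, Matrix.mulVec, dotProduct, Algebra.smul_def]
  have h2 : (fun k => X.s k • Y.dT (m.mulVec v k)) = (dE Y X m).mulVec v + (sigB Y X m).mulVec (fun k => X.s k • Y.dT (v k)) := by
    ext k
    simp only [sigB, dE, LinearMap.coe_mk, AddHom.coe_mk, Matrix.of_apply, Matrix.mulVec, dotProduct, map_sum, Finset.smul_sum,
      Pi.add_apply, dT_mul, smul_add, Finset.sum_add_distrib, smul_mul_assoc, mul_smul_comm, smul_smul]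
    congr 1
    refine Finset.sum_congr rfl fun p _ => ?_
    congr 1
    linear_combination (-X.s k) * X.ss p
  rw [h1, h2, h1, dB_eq]
  simp only [Matrix.add_mulVec, Matrix.sub_mulVec, Matrix.mulVec_add, Matrix.mulVec_mulVec]
  abel

lemma sigV_mulVec (m : Matrix κ κ (T A ι)) (v : κ → T A ι) :
    (sigB Y X m).mulVec v = sigV Y X (m.mulVec (sigV Y X v)) := by
  ext k
  simp [sigB, sigV_apply, Matrix.mulVec, dotProduct, Finset.smul_sum, smul_smul, sig_sig]

end SMat


/-- a finite free complex given by matrices -/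
structure MC (A : Type*) [CommRing A] (ι : Type*) [Fintype ι] [DecidableEq ι] where
  deg : ι → ℤ
  d : Matrix ι ι A
  hd : ∀ i j, d i j ≠ 0 → deg i = deg j + 1
  dd : d * d = 0

/-- signs in a ring -/
def sgn (A : Type*) [CommRing A] (n : ℤ) : A := ((n.negOnePow : ℤˣ) : ℤ)

section
variable {A : Type*} [CommRing A]
lemma sgn_add (m n : ℤ) : sgn A (m + n) = sgn A m * sgn A n := by
  simp [sgn, Int.negOnePow_add]
lemma sgn_one : sgn A 1 = -1 := by simp [sgn]
lemma sgn_zero : sgn A 0 = 1 := by simp [sgn]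
lemma sgn_sq (n : ℤ) : sgn A n * sgn A n = 1 := by
  rw [← sgn_add]
  rcases Int.even_or_odd n with h | h <;> simp [sgn, Int.negOnePow_even]
lemma sgn_neg (n : ℤ) : sgn A (-n) = sgn A n := by simp [sgn]
lemma sgn_sub (m n : ℤ) : sgn A (m - n) = sgn A m * sgn A n := by
  rw [sub_eq_add_neg, sgn_add, sgn_neg]
end

namespace MC
variable {A : Type*} [CommRing A] {ι : Type*} [Fintype ι] [DecidableEq ι] (Y : MC A ι)

/-- signed matrix -/
def sm : SMat A ι where
  s i := sgn A (Y.deg i)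
  d := Y.d
  ss i := sgn_sq _
  sd i j := by
    by_cases h : Y.d i j = 0
    · simp [h]
    · rw [Y.hd i j h, sgn_add, sgn_one]; ring
  dd i j := by
    have := congrFun (congrFun Y.dd i) j
    simpa [Matrix.mul_apply] using this

/-- `y` annihilates the homology -/
def Kills (y : A) : Prop := ∀ v : ι → A, Y.d.mulVec v = 0 → ∃ w, Y.d.mulVec w = y • v

lemma kills_of_htpy (c : A) (K : Matrix ι ι A) (h : Y.d * K + K * Y.d = c • 1) : Y.Kills c := by
  intro v hv
  refine ⟨K.mulVec v, ?_⟩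
  have := congrArg (fun m => m.mulVec v) h
  simpa [Matrix.add_mulVec, ← Matrix.mulVec_mulVec, hv, Matrix.smul_mulVec] using this

/-- projection to one degree -/
def pr (k : ℤ) (v : ι → A) : ι → A := fun i => if Y.deg i = k then v i else 0

lemma d_pr (k : ℤ) (v : ι → A) : Y.d.mulVec (Y.pr k v) = Y.pr (k+1) (Y.d.mulVec v) := by
  ext i
  simp only [Matrix.mulVec, dotProduct, pr]
  split_ifs with h
  · refine Finset.sum_congr rfl fun j _ => ?_
    split_ifs with h2
    · rfl
    · by_cases h3 : Y.d i j = 0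
      · simp [h3]
      · have := Y.hd i j h3; omega
  · refine Finset.sum_eq_zero fun j _ => ?_
    split_ifs with h2
    · by_cases h3 : Y.d i j = 0
      · simp [h3]
      · have := Y.hd i j h3; omega
    · simp

lemma exists_htpy (y : A) (hy : Y.Kills y) : ∃ N, ∃ h : Matrix ι ι A,
    (∀ i j, h i j ≠ 0 → Y.deg i = Y.deg j - 1) ∧ Y.d * h + h * Y.d = y ^ N • 1 := by
  obtain ⟨t, ht⟩ : ∃ t : ℤ, ∀ i, Y.deg i < t := by
    obtain ⟨t, ht⟩ := (Set.finite_range Y.deg).bddAbove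
    exact ⟨t + 1, fun i => Int.lt_add_one_of_le (ht ⟨i, rfl⟩)⟩
  obtain ⟨b, hb⟩ : ∃ t : ℤ, ∀ i, t ≤ Y.deg i := by
    obtain ⟨t, ht⟩ := (Set.finite_range Y.deg).bddBelow
    exact ⟨t, fun i => ht ⟨i, rfl⟩⟩
  have main : ∀ n : ℕ, ∃ N, ∃ h : Matrix ι ι A,
      (∀ i j, h i j ≠ 0 → Y.deg i = Y.deg j - 1) ∧
        ∀ j, t - n ≤ Y.deg j → ∀ i, (Y.d * h + h * Y.d) i j = (y ^ N • (1 : Matrix ι ι A)) i j := by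
    intro n
    induction n with
    | zero => 
      refine ⟨0, 0, by simp, fun j hj => ?_⟩
      have := ht j
      simp at hj
      omega
    | succ n ih => 
      obtain ⟨N, h, hdeg, hh⟩ := ih
      let c : ι → ι → A := fun j => y ^ N • (Pi.single j 1) - h.mulVec (Y.d.mulVec (Pi.single j 1))
      have hc : ∀ j, t - (n + 1 : ℕ) ≤ Y.deg j → Y.d.mulVec (c j) = 0 := by
        intro j hj
        have h1 : (Y.d * h + h * Y.d).mulVec (Y.d.mulVec (Pi.single j 1)) = (y ^ N • (1 : Matrix ι ι A)).mulVec (Y.d.mulVec (Pi.single j 1)) := by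
          ext i
          rw [Matrix.mulVec_single_one]
          simp only [Matrix.mulVec, dotProduct, Matrix.col_apply]
          refine Finset.sum_congr rfl fun k _ => ?_
          by_cases h3 : Y.d k j = 0
          · simp [h3]
          · rw [hh k (by have := Y.hd k j h3; push_cast at hj; omega)]
        simp only [Matrix.add_mulVec, ← Matrix.mulVec_mulVec, Matrix.smul_mulVec, Matrix.one_mulVec] at h1
        rw [Matrix.mulVec_mulVec (Pi.single j 1) Y.d Y.d, Y.dd, Matrix.zero_mulVec, Matrix.mulVec_zero, add_zero] at h1
        simp only [c, Matrix.mulVec_sub, Matrix.mulVec_smul]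
        rw [h1, sub_self]
      choose! W hW using fun j (hj : t - (n + 1 : ℕ) ≤ Y.deg j) => hy (c j) (hc j hj)
      refine ⟨N + 1, Matrix.of fun i j => if t - n ≤ Y.deg j then y * h i j else
        Y.pr (Y.deg j - 1) (W j) i, ?_, ?_⟩
      · intro i j hij
        simp only [Matrix.of_apply] at hij
        split_ifs at hij with h1
        · exact hdeg _ _ (right_ne_zero_of_mul hij)
        · simp only [pr] at hij
          by_contra hne
          simp [hne] at hij
      · intro j hj i
        have hlow : ∀ k, ((Matrix.of fun i j => if t - n ≤ Y.deg j then y * h i j else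
            Y.pr (Y.deg j - 1) (W j) i) k j) = if t - n ≤ Y.deg j then y * h k j else
            Y.pr (Y.deg j - 1) (W j) k := fun k => rfl
        have e2 : ((Matrix.of fun i j => if t - n ≤ Y.deg j then y * h i j else
            Y.pr (Y.deg j - 1) (W j) i) * Y.d) i j = y * (h * Y.d) i j := by
          simp only [Matrix.mul_apply, Finset.mul_sum, Matrix.of_apply]
          refine Finset.sum_congr rfl fun k _ => ?_
          by_cases h3 : Y.d k j = 0
          · simp [h3]
          · rw [if_pos (by have := Y.hd k j h3; push_cast at hj; omega), mul_assoc]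
        rw [Matrix.add_apply, e2, Matrix.mul_apply]
        simp only [hlow]
        split_ifs with h1
        · have := hh j h1 i
          rw [Matrix.add_apply, Matrix.mul_apply] at this
          simp only [Matrix.smul_apply] at this ⊢
          rw [pow_succ, mul_comm _ y, mul_smul, ← this, smul_add, Finset.smul_sum]
          congr 1
          refine Finset.sum_congr rfl fun k _ => ?_
          rw [smul_eq_mul]; ring
        · have h4 : ∑ k, Y.d i k * Y.pr (Y.deg j - 1) (W j) k = Y.d.mulVec (Y.pr (Y.deg j - 1) (W j)) i := rfl
          rw [h4, d_pr, hW j hj]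
          have h5 : (h * Y.d) i j = (h.mulVec (Y.d.mulVec (Pi.single j 1))) i := by
            rw [Matrix.mulVec_mulVec, Matrix.mulVec_single_one]; rfl
          simp only [pr]
          split_ifs with h6
          · simp only [c, Pi.smul_apply, Pi.sub_apply, ← h5, smul_eq_mul, Matrix.smul_apply, Matrix.one_apply, Pi.single_apply]
            rw [pow_succ]; ring
          · have h7 : i ≠ j := by rintro rfl; omega
            have h8 : (h * Y.d) i j = 0 := by
              rw [Matrix.mul_apply]
              refine Finset.sum_eq_zero fun k _ => ?_
              by_contra hne
              have a1 := hdeg _ _ (left_ne_zero_of_mul hne)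
              have a2 := Y.hd _ _ (right_ne_zero_of_mul hne)
              omega
            simp [h8, Matrix.one_apply, h7]
  obtain ⟨N, h, h1, h2⟩ := main (t - b).toNat
  refine ⟨N, h, h1, ?_⟩
  ext i j
  exact h2 j (by have := hb j; have := ht j; omega) i

end MC

section LA
variable {ι : Type*} [Fintype ι] [DecidableEq ι] {F : Type*} [Field F]

lemma exists_contraction (d : Matrix ι ι F) (hdd : d * d = 0)
    (hex : ∀ v, d.mulVec v = 0 → ∃ w, d.mulVec w = v) : ∃ h : Matrix ι ι F, d * h + h * d = 1 := by
  let D := Matrix.toLin' d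
  obtain ⟨r, hr⟩ := (D.rangeRestrict).exists_rightInverse_of_surjective (LinearMap.range_rangeRestrict D)
  obtain ⟨g, hg⟩ := LinearMap.exists_extend r
  have hdgd : ∀ v, D (g (D v)) = D v := by
    intro v
    have h1 := congrArg (fun f => f ⟨D v, ⟨v, rfl⟩⟩) hg
    have h2 := congrArg (fun f => f ⟨D v, ⟨v, rfl⟩⟩) hr
    simp at h1 h2
    rw [h1]
    simpa using congrArg Subtype.val h2
  have hDD : ∀ v, D (D v) = 0 := by
    intro v
    simp [D, Matrix.toLin'_apply, Matrix.mulVec_mulVec, hdd]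
  have key : D ∘ₗ (g ∘ₗ (1 - g ∘ₗ D)) + (g ∘ₗ (1 - g ∘ₗ D)) ∘ₗ D = 1 := by
    ext1 i
    apply LinearMap.ext
    intro c
    simp only [LinearMap.comp_apply, LinearMap.add_apply, LinearMap.sub_apply, Module.End.one_apply, hDD, map_zero, sub_zero]
    set v := (LinearMap.single F (fun _ => F) i) c
    obtain ⟨w, hw⟩ := hex (v - g (D v)) (by
      have := hdgd v
      change D _ = 0
      rw [map_sub, this, sub_self])
    change D w = _ at hw
    rw [← hw, hdgd, hw]
    abel
  refine ⟨LinearMap.toMatrix' (g ∘ₗ (1 - g ∘ₗ D)), ?_⟩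
  have := congrArg LinearMap.toMatrix' key
  rw [map_add, LinearMap.toMatrix'_comp D, LinearMap.toMatrix'_comp _ D, LinearMap.toMatrix'_toLin'] at this
  rw [this]
  exact LinearMap.toMatrix'_one

lemma exists_functional (d : Matrix ι ι F) (v : ι → F) (hv : ¬ ∃ w, d.mulVec w = v) :
    ∃ z : ι → F, Matrix.vecMul z d = 0 ∧ ∑ i, v i * z i ≠ 0 := by
  obtain ⟨f, hf, hf2⟩ := Submodule.exists_le_ker_of_notMem (p := LinearMap.range (Matrix.toLin' d)) (v := v) (by
    rintro ⟨w, hw⟩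
    exact hv ⟨w, hw⟩)
  have hfe : ∀ w : ι → F, f w = ∑ i, w i * f (Pi.single i 1) := by
    intro w
    conv_lhs => rw [pi_eq_sum_univ' w]
    simp
  refine ⟨fun i => f (Pi.single i 1), ?_, ?_⟩
  · ext j
    have h1 := hf2 ⟨Pi.single j 1, rfl⟩
    rw [LinearMap.mem_ker, hfe] at h1
    simpa [Matrix.vecMul, dotProduct, mul_comm, Matrix.toLin'_apply] using h1
  · rwa [← hfe]
end LA


lemma exists_clear {A : Type*} [CommRing A] (p : Ideal A) [p.IsPrime] {J : Type*} [Finite J]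
    (v : J → FractionRing (A ⧸ p)) : ∃ s ∉ p, ∃ v0 : J → A, ∀ j,
      algebraMap (A ⧸ p) (FractionRing (A ⧸ p)) (Ideal.Quotient.mk p (v0 j)) =
        algebraMap (A ⧸ p) (FractionRing (A ⧸ p)) (Ideal.Quotient.mk p s) * v j := by
  obtain ⟨b, hb⟩ := IsLocalization.exist_integer_multiples_of_finite (nonZeroDivisors (A ⧸ p)) v
  obtain ⟨s, hs⟩ := Ideal.Quotient.mk_surjective (b : A ⧸ p)
  refine ⟨s, ?_, ?_⟩
  · intro h
    rw [← Ideal.Quotient.eq_zero_iff_mem, hs] at h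
    exact nonZeroDivisors.ne_zero b.2 h
  · choose w hw using hb
    choose v0 hv0 using fun j => Ideal.Quotient.mk_surjective (w j)
    refine ⟨v0, fun j => ?_⟩
    rw [hv0, hw, hs, Algebra.smul_def]

namespace MC
variable {A : Type*} [CommRing A] {ι : Type*} [Fintype ι] [DecidableEq ι] (Y : MC A ι)

lemma exists_point (p : Ideal A) [p.IsPrime] (hp : ∀ x, Y.Kills x → x ∈ p) :
    ∃ x z : ι → A, (∀ i, Y.d.mulVec x i ∈ p) ∧ (∀ i, Matrix.vecMul z Y.d i ∈ p) ∧ ∑ i, x i * z i ∉ p := by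
  let φ : A →+* FractionRing (A ⧸ p) := (algebraMap (A ⧸ p) (FractionRing (A ⧸ p))).comp (Ideal.Quotient.mk p)
  have hφ : ∀ a, φ a = 0 ↔ a ∈ p := by
    intro a
    rw [← Ideal.Quotient.eq_zero_iff_mem]
    simp [φ]
  by_contra hcon
  push Not at hcon
  obtain ⟨h, hh⟩ := exists_contraction (Y.d.map φ) (by rw [← Matrix.map_mul, Y.dd]; simp) (by
    intro v hv
    by_contra hne
    obtain ⟨z, hz, hvz⟩ := exists_functional _ v hne
    obtain ⟨s, hs, v0, hv0⟩ := exists_clear p v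
    obtain ⟨s', hs', z0, hz0⟩ := exists_clear p z
    change ∀ j, φ (v0 j) = φ s * v j at hv0
    change ∀ j, φ (z0 j) = φ s' * z j at hz0
    have := hcon v0 z0 (by
      intro i
      rw [← hφ]
      have := congrFun hv i
      simp only [Matrix.mulVec, dotProduct, Matrix.map_apply, Pi.zero_apply] at this
      simp only [Matrix.mulVec, dotProduct, map_sum, map_mul, hv0]
      calc _ = φ s * ∑ x, φ (Y.d i x) * v x := by
            rw [Finset.mul_sum]; exact Finset.sum_congr rfl fun _ _ => by ring
        _ = 0 := by rw [this, mul_zero]) (by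
      intro i
      rw [← hφ]
      have := congrFun hz i
      simp only [Matrix.vecMul, dotProduct, Matrix.map_apply, Pi.zero_apply] at this
      simp only [Matrix.vecMul, dotProduct, map_sum, map_mul, hz0]
      calc _ = φ s' * ∑ x, z x * φ (Y.d x i) := by
            rw [Finset.mul_sum]; exact Finset.sum_congr rfl fun _ _ => by ring
        _ = 0 := by rw [this, mul_zero])
    rw [← hφ] at this
    simp only [map_sum, map_mul, hz0, hv0] at this
    have h2 : φ s * φ s' * ∑ i, v i * z i = 0 := by
      rw [← this, Finset.mul_sum]; exact Finset.sum_congr rfl fun _ _ => by ring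
    simp [hφ, hs, hs', hvz] at h2)
  obtain ⟨s, hs, h0, hh0⟩ := exists_clear p (fun q : ι × ι => h q.1 q.2)
  let H : Matrix ι ι A := Matrix.of fun i j => h0 (i, j)
  have hH : H.map φ = φ s • h := by
    ext i j
    exact hh0 (i, j)
  let U := Y.d * H + H * Y.d
  have hU : U.map φ = φ s • 1 := by
    rw [← hh, smul_add]
    simp only [U]
    rw [Matrix.map_add _ (map_add φ), Matrix.map_mul, Matrix.map_mul, hH]
    simp
  have hdet : U.det ∉ p := by
    rw [← hφ, RingHom.map_det, RingHom.mapMatrix_apply, hU, Matrix.det_smul, Matrix.det_one]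
    have : φ s ≠ 0 := by rwa [Ne, hφ]
    simp [this]
  have hdd := Y.dd
  have hcomm : Y.d * U = U * Y.d := by
    simp only [U, mul_add, add_mul, ← mul_assoc, hdd]
    simp [mul_assoc, hdd]
  have hcomm2 : Y.d * (U.det • U.adjugate) = (U.det • U.adjugate) * Y.d := by
    calc Y.d * (U.det • U.adjugate) = (U.det • 1) * Y.d * U.adjugate := by simp
      _ = U.adjugate * (U * Y.d) * U.adjugate := by rw [← Matrix.adjugate_mul, ← mul_assoc]
      _ = U.adjugate * Y.d * (U * U.adjugate) := by rw [← hcomm]; simp only [mul_assoc]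
      _ = _ := by rw [Matrix.mul_adjugate]; simp
  refine (fun hx => hdet (Ideal.IsPrime.mem_of_pow_mem ‹_› 2 hx)) (hp (U.det ^ 2)
    (Y.kills_of_htpy _ ((U.det • U.adjugate) * H) ?_))
  rw [← mul_assoc, hcomm2, mul_assoc, mul_assoc, ← mul_add]
  change U.det • U.adjugate * U = _
  rw [Matrix.smul_mul, Matrix.adjugate_mul, smul_smul, sq]

lemma exists_point' (p : Ideal A) [p.IsPrime] (hp : ∀ x, Y.Kills x → x ∈ p) :
    ∃ k : ℤ, ∃ x z : ι → A, (∀ i, Y.deg i ≠ k → x i = 0) ∧ (∀ i, Y.deg i ≠ k → z i = 0) ∧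
     (∀ i, Y.d.mulVec x i ∈ p) ∧ (∀ i, Matrix.vecMul z Y.d i ∈ p) ∧ ∑ i, x i * z i ∉ p := by
  obtain ⟨x, z, hx, hz, hxz⟩ := Y.exists_point p hp
  have : ∃ k, ∑ i with Y.deg i = k, x i * z i ∉ p := by
    by_contra hcon
    push Not at hcon
    apply hxz
    rw [← Finset.sum_fiberwise_of_maps_to (s := Finset.univ) (t := Finset.univ.image Y.deg) (g := Y.deg)
      (fun i _ => Finset.mem_image_of_mem _ (Finset.mem_univ i))]
    exact Ideal.sum_mem _ fun k _ => hcon k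
  obtain ⟨k, hk⟩ := this
  refine ⟨k, Y.pr k x, Y.pr k z, fun i hi => by simp [pr, hi], fun i hi => by simp [pr, hi], ?_, ?_, ?_⟩
  · intro i
    rw [d_pr]
    simp only [pr]
    split_ifs
    · exact hx i
    · simp
  · intro j
    by_cases hj : Y.deg j + 1 = k
    · have : Matrix.vecMul (Y.pr k z) Y.d j = Matrix.vecMul z Y.d j := by
        simp only [Matrix.vecMul, dotProduct, pr]
        refine Finset.sum_congr rfl fun i _ => ?_
        split_ifs with h1
        · rfl
        · by_cases h3 : Y.d i j = 0
          · simp [h3]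
          · have := Y.hd i j h3; omega
      rw [this]
      exact hz j
    · have : Matrix.vecMul (Y.pr k z) Y.d j = 0 := by
        simp only [Matrix.vecMul, dotProduct, pr]
        refine Finset.sum_eq_zero fun i _ => ?_
        split_ifs with h1
        · by_cases h3 : Y.d i j = 0
          · simp [h3]
          · have := Y.hd i j h3; omega
        · simp
      rw [this]
      simp
  · have e : ∑ i, Y.pr k x i * Y.pr k z i = ∑ i with Y.deg i = k, x i * z i := by
      rw [Finset.sum_filter]
      refine Finset.sum_congr rfl fun i _ => ?_
      simp only [pr]
      split_ifs <;> simp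
    rwa [e]

open SMat

lemma exists_odd (p : Ideal A) [p.IsPrime] (hp : ∀ x, Y.Kills x → x ∈ p) :
    ∃ t : T A ι, Y.sm.sig t = - t ∧ ∃ s ∉ p, algebraMap A _ s - Y.sm.dT t ∈ p • (⊤ : Submodule A (T A ι)) := by
  obtain ⟨k, x, z, hx, hz, h1, h2, h3⟩ := Y.exists_point' p hp
  refine ⟨∑ i, ∑ j, (x i * (sgn A (Y.deg j) * z j)) • (g i j : T A ι), ?_, _, h3, ?_⟩
  · simp only [map_sum, map_smul, ← Finset.sum_neg_distrib]
    refine Finset.sum_congr rfl fun i _ => Finset.sum_congr rfl fun j _ => ?_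
    rw [sig_g, smul_smul, ← neg_smul]
    congr 1
    by_cases hi : Y.deg i = k
    · by_cases hj : Y.deg j = k
      · simp only [sm, hi, hj, sgn_sq]
        ring
      · simp [hz j hj]
    · simp [hx i hi]
  · have key : Y.sm.dT (∑ i, ∑ j, (x i * (sgn A (Y.deg j) * z j)) • g i j) =
        algebraMap A _ (∑ i, x i * z i) + ∑ a, ∑ j, (Y.d.mulVec x a * (sgn A (Y.deg j) * z j)) • g a j
          - ∑ i, ∑ a, (Matrix.vecMul z Y.d a * (sgn A (Y.deg i) * x i)) • g i a := by
      simp only [map_sum, map_smul, dT_g, dg, smul_add, smul_sub, Finset.sum_add_distrib, Finset.sum_sub_distrib]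
      congr 1
      · congr 1
        · refine Finset.sum_congr rfl fun i _ => ?_
          simp only [smul_ite, smul_zero, Finset.sum_ite_eq, Finset.mem_univ, if_true]
          rw [Algebra.smul_def, ← map_mul]
          congr 1
          simp only [sm]
          linear_combination (x i * z i) * sgn_sq (A := A) (Y.deg i)
        · simp only [Finset.smul_sum, smul_smul, Matrix.mulVec, dotProduct, Finset.sum_mul, Finset.sum_smul]
          rw [Finset.sum_comm]
          conv_rhs => rw [Finset.sum_comm]
          refine Finset.sum_congr rfl fun j _ => ?_
          rw [Finset.sum_comm]
          refine Finset.sum_congr rfl fun i _ => Finset.sum_congr rfl fun a _ => ?_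
          congr 1
          simp only [sm]
          ring
      · refine Finset.sum_congr rfl fun i _ => ?_
        simp only [Finset.smul_sum, smul_smul, Matrix.vecMul, dotProduct, Finset.sum_mul, Finset.sum_smul]
        rw [Finset.sum_comm]
        refine Finset.sum_congr rfl fun a _ => Finset.sum_congr rfl fun j _ => ?_
        congr 1
        simp only [sm]
        linear_combination (x i * z j * sgn A (Y.deg i) * Y.d j a) * sgn_sq (A := A) (Y.deg j)
    rw [key]
    have : ∀ (a b c : T A ι), a - (a + b - c) = c - b := by intros; abel
    rw [this]
    refine sub_mem ?_ ?_
    · exact Submodule.sum_mem _ fun i _ => Submodule.sum_mem _ fun a _ =>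
        Submodule.smul_mem_smul (Ideal.mul_mem_right _ _ (h2 a)) trivial
    · exact Submodule.sum_mem _ fun i _ => Submodule.sum_mem _ fun a _ =>
        Submodule.smul_mem_smul (Ideal.mul_mem_right _ _ (h1 i)) trivial

variable {κ : Type*} [Fintype κ] [DecidableEq κ] (X : MC A κ)

theorem exists_unit_bd (h : ∀ x, Y.Kills x → ∃ m : ℕ, X.Kills (x ^ m)) :
    ∃ t : Matrix κ κ (T A ι), dB Y.sm X.sm t = 1 := by
  have hfree : Module.Free A (T A ι) := Module.Free.of_basis (FreeAlgebra.basisFreeMonoid A (ι × ι))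
  have : Module.Free A (Matrix κ κ (T A ι)) := Module.Free.matrix _ _
  refine (skewB Y.sm X.sm).one_mem_range ?_
  intro p hp
  by_cases hx : ∀ x, Y.Kills x → x ∈ p
  · obtain ⟨t, ht, s, hs, hst⟩ := Y.exists_odd p hx
    refine ⟨s, hs, (SkewDer.mem_bdI _).2 ⟨Matrix.diagonal fun k => X.sm.s k • t, ?_⟩⟩
    have key : dB Y.sm X.sm (Matrix.diagonal fun k => X.sm.s k • t) = Matrix.diagonal fun _ => Y.sm.dT t := by
      ext k l
      rw [dB_eq]
      simp only [Matrix.add_apply, Matrix.sub_apply, dE, Matrix.of_apply, Matrix.mul_diagonal]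
      have e1 : sigB Y.sm X.sm (Matrix.diagonal fun k => X.sm.s k • t) = Matrix.diagonal fun k => - (X.sm.s k • t) := by
        ext k l
        simp only [sigB, LinearMap.coe_mk, AddHom.coe_mk, Matrix.of_apply, Matrix.diagonal_apply]
        split_ifs with h
        · subst h
          simp [X.sm.ss, ht]
        · simp
      rw [e1, Matrix.diagonal_mul]
      have e2 : (dM X.sm k l : T A ι) * X.sm.s l • t - -(X.sm.s k • t) * dM X.sm k l = 0 := by
        simp only [dM, Matrix.map_apply]
        rw [← Algebra.commutes, ← Algebra.smul_def, ← Algebra.smul_def, smul_neg, sub_neg_eq_add, smul_smul, smul_smul,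
          ← add_smul]
        rw [show X.sm.d k l * X.sm.s l + X.sm.d k l * X.sm.s k = 0 by linear_combination X.sm.sd k l, zero_smul]
      rw [e2, add_zero, Matrix.diagonal_apply, Matrix.diagonal_apply]
      split_ifs with h
      · subst h
        rw [map_smul, smul_smul, X.sm.ss, one_smul]
      · simp
    change _ - dB Y.sm X.sm _ ∈ _
    rw [key]
    have := SkewDer.smul_top_map (Matrix.diagonalLinearMap κ A (T A ι) ∘ₗ LinearMap.pi (fun _ : κ => LinearMap.id)) hst
    convert this using 1
    ext k l
    simp [Matrix.algebraMap_matrix_apply, Matrix.diagonal_apply]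
    split_ifs <;> simp
  · push Not at hx
    obtain ⟨x, hx, hxp⟩ := hx
    obtain ⟨m, hm⟩ := h x hx
    obtain ⟨N, H, hdeg, hH⟩ := X.exists_htpy _ hm
    refine ⟨(x ^ m) ^ N, fun hc => hxp (hp.mem_of_pow_mem _ (hp.mem_of_pow_mem _ hc)), ?_⟩
    refine (SkewDer.mem_bdI _).2 ⟨H.map (algebraMap A (T A ι)), ?_⟩
    have key : dB Y.sm X.sm (H.map (algebraMap A (T A ι))) = algebraMap A _ ((x ^ m) ^ N) := by
      rw [dB_eq]
      have e1 : dE Y.sm X.sm (H.map (algebraMap A (T A ι))) = 0 := by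
        ext k l
        simp [dE, dT_algebraMap]
      have e2 : sigB Y.sm X.sm (H.map (algebraMap A (T A ι))) = - H.map (algebraMap A (T A ι)) := by
        ext k l
        simp only [sigB, LinearMap.coe_mk, AddHom.coe_mk, Matrix.of_apply, Matrix.map_apply, AlgHom.commutes,
          Algebra.smul_def, ← map_mul, Matrix.neg_apply, ← map_neg]
        congr 1
        by_cases h0 : H k l = 0
        · simp [h0]
        · simp only [sm]
          rw [hdeg k l h0, sgn_sub, sgn_one]
          linear_combination (- H k l) * sgn_sq (A := A) (X.deg l)
      rw [e1, e2, zero_add, neg_mul, sub_neg_eq_add, dM]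
      have := congrArg (fun M => M.map (algebraMap A (T A ι))) hH
      simp only [Matrix.map_add _ (map_add (algebraMap A (T A ι))), Matrix.map_mul] at this
      change _ = Matrix.map _ _ at this
      refine this.trans ?_
      ext k l
      simp [Matrix.algebraMap_matrix_apply, Matrix.one_apply]
      split_ifs <;> simp
    change _ - dB Y.sm X.sm _ ∈ _
    rw [key, sub_self]
    exact zero_mem _
end MC


/-- a complex given by a graded basis -/
structure GC (A : Type*) [CommRing A] (M : Type*) [AddCommGroup M] [Module A M] (L : Type*) where
  b : Module.Basis L A M
  D : M →ₗ[A] M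
  deg : L → ℤ
  DD : ∀ x, D (D x) = 0
  hD : ∀ l, D (b l) ∈ Submodule.span A (b '' {m | deg m = deg l + 1})

namespace GC
variable {A : Type u} [CommRing A] {M : Type u} [AddCommGroup M] [Module A M] {L : Type*} (G : GC A M L)

/-- span of a set of basis elements -/
def sp (s : Set L) : Submodule A M := Submodule.span A (G.b '' s)

lemma mem_sp {s : Set L} {x : M} : x ∈ G.sp s ↔ ∀ l, G.b.repr x l ≠ 0 → l ∈ s := by
  rw [sp, Module.Basis.mem_span_image]
  simp [Set.subset_def]

lemma b_mem {s : Set L} {l : L} (h : l ∈ s) : G.b l ∈ G.sp s := Submodule.subset_span ⟨l, h, rfl⟩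

lemma sp_mono {s t : Set L} (h : s ⊆ t) : G.sp s ≤ G.sp t := Submodule.span_mono (Set.image_mono h)

lemma sp_inter {s t : Set L} {x : M} (h : x ∈ G.sp s) (h' : x ∈ G.sp t) : x ∈ G.sp (s ∩ t) := by
  rw [mem_sp] at *
  exact fun l hl => ⟨h l hl, h' l hl⟩

lemma sp_induction {s : Set L} {N : Submodule A M} (h : ∀ l ∈ s, G.b l ∈ N) {x : M} (hx : x ∈ G.sp s) : x ∈ N := by
  have : G.sp s ≤ N := by
    rw [sp, Submodule.span_le]
    rintro _ ⟨l, hl, rfl⟩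
    exact h l hl
  exact this hx

lemma sp_map {N : Type*} [AddCommGroup N] [Module A N] {s : Set L} (f : M →ₗ[A] N) {P : Submodule A N}
    (h : ∀ l ∈ s, f (G.b l) ∈ P) {x : M} (hx : x ∈ G.sp s) : f x ∈ P :=
  G.sp_induction (N := P.comap f) h hx

/-- closed sets of basis elements -/
def Closed (s : Set L) : Prop := ∀ l ∈ s, G.D (G.b l) ∈ G.sp s

/-- graded pieces -/
def gr (s : Set L) (k : ℤ) : Submodule A M := G.sp {l | l ∈ s ∧ G.deg l = k}

lemma D_mem {s : Set L} (hs : G.Closed s) {i j : ℤ} (h : i + 1 = j) : ∀ x ∈ G.gr s i, G.D x ∈ G.gr s j := by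
  intro x hx
  refine G.sp_map G.D ?_ hx
  rintro l ⟨hl, rfl⟩
  subst h
  exact G.sp_inter (hs l hl) (G.hD l)

/-- the differential on graded pieces -/
noncomputable def dres {s : Set L} (hs : G.Closed s) (i j : ℤ) : G.gr s i →ₗ[A] G.gr s j :=
  if h : i + 1 = j then G.D.restrict (G.D_mem hs h) else 0

lemma dres_coe {s : Set L} (hs : G.Closed s) {i j : ℤ} (h : i + 1 = j) (x : G.gr s i) :
    (G.dres hs i j x : M) = G.D x := by
  simp [dres, h]

/-- the cochain complex -/
noncomputable def real {s : Set L} (hs : G.Closed s) : CochainComplex (ModuleCat.{u} A) ℤ where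
  X k := ModuleCat.of A (G.gr s k)
  d i j := ModuleCat.ofHom (G.dres hs i j)
  shape i j h := by
    have : ¬ (i + 1 = j) := h
    simp [dres, this]
  d_comp_d' i j k hij hjk := by
    ext x
    change (G.dres hs j k (G.dres hs i j x) : M) = 0
    rw [dres_coe _ _ hjk, dres_coe _ _ hij, G.DD]

lemma real_d {s : Set L} (hs : G.Closed s) {i j : ℤ} (h : i + 1 = j) (x : G.gr s i) :
    ((show G.gr s j from (G.real hs).d i j x) : M) = G.D x := G.dres_coe hs h x

/-- build chain maps -/
noncomputable def mkMap {M' : Type u} [AddCommGroup M'] [Module A M'] {L' : Type*} (G' : GC A M' L')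
    {s : Set L} (hs : G.Closed s) {s' : Set L'} (hs' : G'.Closed s') (f : M →ₗ[A] M')
    (hf : ∀ k, ∀ x ∈ G.gr s k, f x ∈ G'.gr s' k) (hfD : ∀ k, ∀ x ∈ G.gr s k, G'.D (f x) = f (G.D x)) :
    G.real hs ⟶ G'.real hs' where
  f k := ModuleCat.ofHom (f.restrict (hf k))
  comm' i j h := by
    ext x
    change G.gr s i at x
    apply Subtype.ext
    have h' : i + 1 = j := h
    change (G'.dres hs' i j (f.restrict (hf i) x) : M') = f (G.dres hs i j x)
    rw [dres_coe _ _ h', dres_coe _ _ h']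
    exact hfD i _ x.2

lemma gr_mono {s t : Set L} (h : s ⊆ t) (k : ℤ) : G.gr s k ≤ G.gr t k :=
  G.sp_mono fun _ hl => ⟨h hl.1, hl.2⟩

/-- inclusion -/
noncomputable def incl {s t : Set L} (hs : G.Closed s) (ht : G.Closed t) (h : s ⊆ t) :
    G.real hs ⟶ G.real ht where
  f k := ModuleCat.ofHom (Submodule.inclusion (G.gr_mono h k))
  comm' i j hij := by
    ext x
    change G.gr s i at x
    apply Subtype.ext
    have h' : i + 1 = j := hij
    change (G.dres ht i j (Submodule.inclusion (G.gr_mono h i) x) : M) = (G.dres hs i j x)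
    rw [dres_coe _ _ h', dres_coe _ _ h']
    rfl

lemma incl_comp {s t r : Set L} (hs : G.Closed s) (ht : G.Closed t) (hr : G.Closed r) (h : s ⊆ t) (h' : t ⊆ r) :
    G.incl hs ht h ≫ G.incl ht hr h' = G.incl hs hr (h.trans h') := by
  ext k x
  rfl

/-- components of a null homotopy -/
noncomputable def htpyComp {s t : Set L} (hs : G.Closed s) (ht : G.Closed t)
    (H : ∀ k : ℤ, G.gr s k →ₗ[A] M) (hH : ∀ k x, H k x ∈ G.gr t (k - 1)) (i j : ℤ) :
    (G.real hs).X i ⟶ (G.real ht).X j :=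
  open Classical in
  if e : j = i - 1 then ModuleCat.ofHom ((H i).codRestrict (G.gr t j) (by subst e; exact hH i)) else 0

lemma htpyComp_eq {s t : Set L} (hs : G.Closed s) (ht : G.Closed t)
    (H : ∀ k : ℤ, G.gr s k →ₗ[A] M) (hH : ∀ k x, H k x ∈ G.gr t (k - 1)) (i j : ℤ) (e : j = i - 1) :
    G.htpyComp hs ht H hH i j = ModuleCat.ofHom ((H i).codRestrict (G.gr t j) (by subst e; exact hH i)) :=
  dif_pos e

/-- null homotopy of an inclusion -/
noncomputable def inclHtpy {s t : Set L} (hs : G.Closed s) (ht : G.Closed t) (h : s ⊆ t)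
    (H : ∀ k : ℤ, G.gr s k →ₗ[A] M) (hH : ∀ k x, H k x ∈ G.gr t (k - 1))
    (hHD : ∀ k (x : G.gr s k), G.D (H k x) + H (k+1) (G.dres hs k (k+1) x) = x) :
    Homotopy (G.incl hs ht h) 0 where
  hom := G.htpyComp hs ht H hH
  zero i j hij := by
    refine dif_neg ?_
    intro e; apply hij; subst e; simp
  comm i := by
    ext x
    rw [dNext_eq _ (show (ComplexShape.up ℤ).Rel i (i+1) from rfl), prevD_eq _ (show (ComplexShape.up ℤ).Rel (i-1) i by simp)]
    rw [htpyComp_eq _ _ _ _ _ _ _ (by simp), htpyComp_eq _ _ _ _ _ _ _ rfl]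
    change G.gr s i at x
    apply Subtype.ext
    have e := hHD i x
    change (x : M) = ((H (i+1) (G.dres hs i (i+1) x) + (G.dres ht (i-1) i (((H i).codRestrict (G.gr t (i-1)) (hH i)) x) : M)) + 0)
    rw [dres_coe _ _ (by simp)]
    rw [add_zero, add_comm]
    exact e.symm

section ses
variable {M' : Type u} [AddCommGroup M'] [Module A M'] {L' : Type*} (G' : GC A M' L')
variable {s t : Set L} (j : L' → L) (hj : Function.Injective j) (m : ℤ) (ε : ℤˣ)

/-- projection -/
noncomputable def proj : M →ₗ[A] M' :=
  G'.b.repr.symm.toLinearMap ∘ₗ Finsupp.lcomapDomain j hj ∘ₗ G.b.repr.toLinearMap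

lemma proj_repr (x : M) (i : L') : G'.b.repr (G.proj G' j hj x) i = G.b.repr x (j i) := by
  simp [proj, Finsupp.lcomapDomain]

lemma proj_eq_zero (hjs : ∀ i, j i ∉ s) {x : M} (hx : x ∈ G.sp s) : G.proj G' j hj x = 0 := by
  apply G'.b.ext_elem
  intro i
  rw [proj_repr]
  rw [mem_sp] at hx
  by_contra hne
  exact hjs i (hx _ (by simpa using hne))

lemma proj_emb (y : M') : G.proj G' j hj (G'.b.constr A (fun i => G.b (j i)) y) = y := by
  have : G.proj G' j hj ∘ₗ (G'.b.constr A (fun i => G.b (j i))) = LinearMap.id := by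
    apply G'.b.ext
    intro i
    apply G'.b.ext_elem
    intro i'
    rw [LinearMap.comp_apply, proj_repr]
    simp only [Module.Basis.constr_basis, LinearMap.id_apply, Module.Basis.repr_self]
    classical
    simp only [Finsupp.single_apply, hj.eq_iff]
  exact LinearMap.congr_fun this y

lemma proj_gr (hm : ∀ i, G'.deg i = G.deg (j i) + m) (k k' : ℤ) (hk : k' = k + m) (x : M) (hx : x ∈ G.gr t k) :
    G.proj G' j hj x ∈ G'.gr Set.univ k' := by
  rw [gr, mem_sp] at *
  intro i hi
  rw [proj_repr] at hi
  have := hx _ hi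
  refine ⟨trivial, ?_⟩
  rw [hm, this.2, hk]

lemma proj_D (hs : G.Closed s) (hjt : ∀ l, l ∈ t ↔ l ∈ s ∨ ∃ i, j i = l) (hjs : ∀ i, j i ∉ s)
    (hε : ∀ i, G.D (G.b (j i)) - (ε : ℤ) • (G'.b.constr A (fun i => G.b (j i))) (G'.D (G'.b i)) ∈ G.sp s)
    {x : M} (hx : x ∈ G.sp t) : G.proj G' j hj (G.D x) = (ε : ℤ) • G'.D (G.proj G' j hj x) := by
  have : (G.proj G' j hj ∘ₗ G.D - (ε : ℤ) • G'.D ∘ₗ G.proj G' j hj) x ∈ (⊥ : Submodule A M') := by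
    refine G.sp_map _ ?_ hx
    intro l hl
    rw [Submodule.mem_bot]
    simp only [LinearMap.sub_apply, LinearMap.comp_apply, LinearMap.smul_apply]
    rcases (hjt l).1 hl with h | ⟨i, rfl⟩
    · rw [G.proj_eq_zero G' j hj hjs (hs l h), G.proj_eq_zero G' j hj hjs (G.b_mem h)]
      simp
    · have h1 := G.proj_eq_zero G' j hj hjs (hε i)
      rw [map_sub, map_zsmul, proj_emb] at h1
      have h2 : G.proj G' j hj (G.b (j i)) = G'.b i := by
        have := G.proj_emb G' j hj (G'.b i)
        rwa [Module.Basis.constr_basis] at this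
      rw [h2]
      exact h1
  simpa [sub_eq_zero] using this

/-- the quotient map -/
noncomputable def quot (hs : G.Closed s) (ht : G.Closed t) (hu : G'.Closed Set.univ) (hjt : ∀ l, l ∈ t ↔ l ∈ s ∨ ∃ i, j i = l) (hjs : ∀ i, j i ∉ s)
    (hm : ∀ i, G'.deg i = G.deg (j i) + m)
    (hε : ∀ i, G.D (G.b (j i)) - (ε : ℤ) • (G'.b.constr A (fun i => G.b (j i))) (G'.D (G'.b i)) ∈ G.sp s) :
    G.real ht ⟶ (G'.real hu)⟦m⟧ where
  f k := ModuleCat.ofHom ((((ε * m.negOnePow) ^ k : ℤˣ) : ℤ) • (G.proj G' j hj).restrict (G.proj_gr G' j hj m hm k (k + m) rfl))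
  comm' i i' h := by
    have h' : i + 1 = i' := h
    ext x
    change G.gr t i at x
    rw [CochainComplex.shiftFunctor_obj_d']
    apply Subtype.ext
    change ((m.negOnePow : ℤˣ) : ℤ) • (G'.dres hu (i+m) (i'+m) ((((ε * m.negOnePow) ^ i : ℤˣ) : ℤ) • (G.proj G' j hj).restrict (G.proj_gr G' j hj m hm i (i + m) rfl) x) : M') = 
      (((ε * m.negOnePow) ^ i' : ℤˣ) : ℤ) • G.proj G' j hj (G.dres ht i i' x)
    rw [dres_coe _ _ (by omega), dres_coe _ _ h', G.proj_D G' j hj ε hs hjt hjs hε (G.sp_mono (fun l hl => hl.1) x.2)]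
    have e0 : (((((ε * m.negOnePow) ^ i : ℤˣ) : ℤ) • (G.proj G' j hj).restrict (G.proj_gr G' j hj m hm i (i + m) rfl) x : G'.gr Set.univ (i + m)) : M')
      = (((ε * m.negOnePow) ^ i : ℤˣ) : ℤ) • G.proj G' j hj x := rfl
    rw [e0, ← h', zpow_add_one, map_zsmul, smul_smul, smul_smul, ← Units.val_mul, ← Units.val_mul]
    congr 2
    rw [mul_assoc, mul_right_comm ε, Int.units_mul_self, one_mul, mul_comm]

/-- the short complex -/
noncomputable def sesSC (hs : G.Closed s) (ht : G.Closed t) (hst : s ⊆ t) (hu : G'.Closed Set.univ) (hjt : ∀ l, l ∈ t ↔ l ∈ s ∨ ∃ i, j i = l) (hjs : ∀ i, j i ∉ s)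
    (hm : ∀ i, G'.deg i = G.deg (j i) + m)
    (hε : ∀ i, G.D (G.b (j i)) - (ε : ℤ) • (G'.b.constr A (fun i => G.b (j i))) (G'.D (G'.b i)) ∈ G.sp s) :
    ShortComplex (CochainComplex (ModuleCat.{u} A) ℤ) :=
  ShortComplex.mk (G.incl hs ht hst) (G.quot G' j hj m ε hs ht hu hjt hjs hm hε) (by
    ext k x
    change G.gr s k at x
    apply Subtype.ext
    change (((ε * m.negOnePow) ^ k : ℤˣ) : ℤ) • G.proj G' j hj x = 0
    rw [G.proj_eq_zero G' j hj hjs (G.sp_mono (fun l hl => hl.1) x.2), smul_zero])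

lemma sesSC_shortExact (hs : G.Closed s) (ht : G.Closed t) (hst : s ⊆ t) (hu : G'.Closed Set.univ) (hjt : ∀ l, l ∈ t ↔ l ∈ s ∨ ∃ i, j i = l) (hjs : ∀ i, j i ∉ s)
    (hm : ∀ i, G'.deg i = G.deg (j i) + m)
    (hε : ∀ i, G.D (G.b (j i)) - (ε : ℤ) • (G'.b.constr A (fun i => G.b (j i))) (G'.D (G'.b i)) ∈ G.sp s) :
    (G.sesSC G' j hj m ε hs ht hst hu hjt hjs hm hε).ShortExact := by
  have hc : ∀ k : ℤ, ∀ y : M', (((ε * m.negOnePow) ^ k : ℤˣ) : ℤ) • (((ε * m.negOnePow) ^ k : ℤˣ) : ℤ) • y = y := by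
    intro k y
    rw [smul_smul, ← Units.val_mul, Int.units_mul_self, Units.val_one, one_smul]
  apply HomologicalComplex.shortExact_of_degreewise_shortExact
  intro k
  refine { exact := ?_, mono_f := ?_, epi_g := ?_ }
  · rw [ShortComplex.moduleCat_exact_iff]
    intro x hx
    change G.gr t k at x
    have hx' : (((ε * m.negOnePow) ^ k : ℤˣ) : ℤ) • G.proj G' j hj x = 0 := congrArg Subtype.val hx
    have h2 : G.proj G' j hj x = 0 := by rw [← hc k (G.proj G' j hj x), hx', smul_zero]
    have h3 : (x : M) ∈ G.gr s k := by
      have h4 : (x : M) ∈ G.gr t k := x.2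
      refine G.mem_sp.2 ?_
      replace h4 := G.mem_sp.1 h4
      intro l hl
      refine ⟨?_, (h4 l hl).2⟩
      rcases (hjt l).1 (h4 l hl).1 with h | ⟨i, rfl⟩
      · exact h
      · rw [← G.proj_repr G' j hj, h2] at hl
        simp at hl
    exact ⟨⟨x.1, h3⟩, rfl⟩
  · rw [ModuleCat.mono_iff_injective]
    exact Submodule.inclusion_injective (G.gr_mono hst k)
  · rw [ModuleCat.epi_iff_surjective]
    intro y
    change G'.gr Set.univ (k + m) at y
    refine ⟨⟨(((ε * m.negOnePow) ^ k : ℤˣ) : ℤ) • G'.b.constr A (fun i => G.b (j i)) y, ?_⟩, ?_⟩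
    · refine zsmul_mem ?_ _
      refine G'.sp_map _ ?_ y.2
      rintro i ⟨-, hi⟩
      rw [Module.Basis.constr_basis]
      refine G.b_mem ⟨(hjt _).2 (Or.inr ⟨i, rfl⟩), ?_⟩
      have := hm i
      omega
    · apply Subtype.ext
      change (((ε * m.negOnePow) ^ k : ℤˣ) : ℤ) • G.proj G' j hj ((((ε * m.negOnePow) ^ k : ℤˣ) : ℤ) • G'.b.constr A (fun i => G.b (j i)) y) = y
      rw [map_zsmul, hc, proj_emb]

end ses
end GC


namespace MC
section gc
variable {A : Type u} [CommRing A] {ι : Type} [Fintype ι] [DecidableEq ι] (Y : MC A ι)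

/-- the graded-basis complex of a matrix complex -/
noncomputable def gc : GC A (ι → A) ι where
  b := Pi.basisFun A ι
  D := Matrix.toLin' Y.d
  deg := Y.deg
  DD x := by
    rw [Matrix.toLin'_apply, Matrix.toLin'_apply, Matrix.mulVec_mulVec, Y.dd, Matrix.zero_mulVec]
  hD l := by
    rw [Module.Basis.mem_span_image]
    intro i hi
    have hi' : Y.d i l ≠ 0 := by simpa using hi
    exact Y.hd i l hi'

lemma gc_closed : Y.gc.Closed Set.univ := fun l _ => by
  rw [GC.mem_sp]; exact fun _ _ => trivial

lemma gc_D (i : ι) : Y.gc.D (Y.gc.b i) = ∑ a, Y.d a i • Y.gc.b a := by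
  ext k
  simp [gc, Finset.sum_apply, Pi.single_apply]

end gc
end MC

namespace SMat
variable {A : Type u} [CommRing A] {ι : Type} [Fintype ι] [DecidableEq ι]

/-- words -/
def wd (w : List (ι × ι)) : T A ι := (w.map (fun p => g p.1 p.2)).prod

lemma wd_nil : wd ([] : List (ι × ι)) = (1 : T A ι) := rfl
lemma wd_cons (i j : ι) (w : List (ι × ι)) : wd ((i,j)::w) = (g i j * wd w : T A ι) := by simp [wd]

/-- basis of words -/
noncomputable def tb : Module.Basis (List (ι × ι)) A (T A ι) :=
  (FreeAlgebra.basisFreeMonoid A (ι × ι)).reindex (FreeMonoid.toList)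

lemma tb_apply (w : List (ι × ι)) : (tb w : T A ι) = wd w := by
  have : (tb w : T A ι) = MonoidAlgebra.lift A (T A ι) (FreeMonoid (ι × ι)) (FreeMonoid.lift (FreeAlgebra.ι A))
      (MonoidAlgebra.single (FreeMonoid.ofList w) 1) := by
    simp only [tb, Module.Basis.reindex_apply, FreeAlgebra.basisFreeMonoid, Module.Basis.map_apply, Finsupp.basisSingleOne,
      Module.Basis.coe_ofRepr]
    rfl
  rw [this, MonoidAlgebra.lift_single, one_smul, FreeMonoid.lift_apply]
  rfl

/-- span of a set of words -/
def spT (P : List (ι × ι) → Prop) : Submodule A (T A ι) := Submodule.span A (wd '' {w | P w})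

lemma wd_mem {P : List (ι × ι) → Prop} {w : List (ι × ι)} (h : P w) : (wd w : T A ι) ∈ spT P :=
  Submodule.subset_span ⟨w, h, rfl⟩

lemma spT_map {N : Type*} [AddCommGroup N] [Module A N] {P : List (ι × ι) → Prop} (f : T A ι →ₗ[A] N) (Q : Submodule A N)
    (h : ∀ w, P w → f (wd w) ∈ Q) {x : T A ι} (hx : x ∈ spT P) : f x ∈ Q := by
  have : spT P ≤ Q.comap f := by
    rw [spT, Submodule.span_le]
    rintro _ ⟨w, hw, rfl⟩
    exact h w hw
  exact this hx

lemma spT_le {P Q : List (ι × ι) → Prop} (h : ∀ w, P w → Q w) : spT (A := A) P ≤ spT Q :=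
  Submodule.span_mono (Set.image_mono h)

lemma exists_len (x : T A ι) : ∃ n, x ∈ spT (A := A) (fun w => w.length ≤ n) := by
  have hx : x ∈ Submodule.span A (Set.range (tb (A := A) (ι := ι))) := by rw [Module.Basis.span_eq]; trivial
  induction hx using Submodule.span_induction with
  | mem x h =>
    obtain ⟨w, rfl⟩ := h
    exact ⟨w.length, by rw [tb_apply]; exact wd_mem le_rfl⟩
  | zero => exact ⟨0, zero_mem _⟩
  | add x y _ _ hx hy =>
    obtain ⟨n, hn⟩ := hx
    obtain ⟨m, hm⟩ := hy
    refine ⟨n + m, Submodule.add_mem _ (spT_le ?_ hn) (spT_le ?_ hm)⟩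
    · intro w hw; omega
    · intro w hw; omega
  | smul a x hx' hx =>
    obtain ⟨n, hn⟩ := hx
    exact ⟨n, Submodule.smul_mem _ _ hn⟩

end SMat

namespace MC
open SMat
variable {A : Type u} [CommRing A] {ι : Type} [Fintype ι] [DecidableEq ι] (Y : MC A ι)
variable {κ : Type} [Fintype κ] [DecidableEq κ] (X : MC A κ)

/-- degree of a word -/
def wdeg (w : List (ι × ι)) : ℤ := (w.map (fun p => Y.deg p.1 - Y.deg p.2 - 1)).sum

lemma wdeg_nil : Y.wdeg [] = 0 := rfl
lemma wdeg_cons (i j : ι) (w : List (ι × ι)) : Y.wdeg ((i,j)::w) = Y.deg i - Y.deg j - 1 + Y.wdeg w := by simp [wdeg]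

lemma dT_cons (i j : ι) (w : List (ι × ι)) : Y.sm.dT (wd ((i,j)::w)) =
    (if i = j then Y.sm.s i • wd w else 0) + ∑ a, Y.d a i • wd ((a,j)::w)
    - ∑ a, (Y.sm.s i * Y.sm.s j * Y.d j a) • wd ((i,a)::w) - (Y.sm.s i * Y.sm.s j) • (g i j * Y.sm.dT (wd w)) := by
  rw [wd_cons, dT_mul, dT_g, sig_g, dg]
  simp only [wd_cons, sub_mul, add_mul, Finset.sum_mul, smul_mul_assoc, neg_mul, neg_smul, ite_mul, zero_mul, ← Algebra.smul_def]
  rw [sub_eq_add_neg _ ((Y.sm.s i * Y.sm.s j) • (g i j * Y.sm.dT (wd w)))]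
  rfl

lemma dT_wd (w : List (ι × ι)) : Y.sm.dT (wd w) ∈ spT (A := A) (fun w' => Y.wdeg w' = Y.wdeg w + 1 ∧ w'.length ≤ w.length) := by
  induction w with
  | nil => rw [wd_nil, dT_one]; exact zero_mem _
  | cons p w ih =>
    obtain ⟨i, j⟩ := p
    rw [dT_cons]
    refine sub_mem (sub_mem (add_mem ?_ ?_) ?_) ?_
    · split_ifs with h
      · subst h
        refine Submodule.smul_mem _ _ (wd_mem ⟨?_, ?_⟩)
        · rw [wdeg_cons]; ring
        · simp
      · exact zero_mem _
    · refine sum_mem fun a _ => ?_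
      by_cases h : Y.d a i = 0
      · rw [h, zero_smul]; exact zero_mem _
      · refine Submodule.smul_mem _ _ (wd_mem ⟨?_, ?_⟩)
        · rw [wdeg_cons, wdeg_cons, Y.hd _ _ h]; ring
        · simp
    · refine sum_mem fun a _ => ?_
      by_cases h : Y.d j a = 0
      · rw [h, mul_zero, zero_smul]; exact zero_mem _
      · refine Submodule.smul_mem _ _ (wd_mem ⟨?_, ?_⟩)
        · rw [wdeg_cons, wdeg_cons, Y.hd _ _ h]; ring
        · simp
    · refine Submodule.smul_mem _ _ ?_
      refine spT_map (LinearMap.mulLeft A (g i j)) _ ?_ ih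
      rintro w' ⟨h1, h2⟩
      rw [LinearMap.mulLeft_apply, ← wd_cons]
      refine wd_mem ⟨?_, ?_⟩
      · rw [wdeg_cons, wdeg_cons, h1]; ring
      · simpa using h2

/-- basis of vectors -/
noncomputable def vb (A : Type u) [CommRing A] (ι : Type) (κ : Type) [Fintype ι] [DecidableEq ι] [Fintype κ] [DecidableEq κ] :
    Module.Basis (κ × List (ι × ι)) A (κ → T A ι) :=
  (Pi.basis (fun _ : κ => tb)).reindex (Equiv.sigmaEquivProd _ _)

lemma vb_apply (k : κ) (w : List (ι × ι)) : vb A ι κ (k, w) = Pi.single k (wd w) := by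
  rw [vb, Module.Basis.reindex_apply]
  simp [Pi.basis_apply, tb_apply]

lemma dV_single (k : κ) (x : T A ι) : dV Y.sm X.sm (Pi.single k x) =
    X.sm.s k • (Pi.single k (Y.sm.dT x) : κ → T A ι) + ∑ k', X.d k' k • (Pi.single k' x : κ → T A ι) := by
  ext l
  rw [dV_apply]
  simp only [Pi.add_apply, Pi.smul_apply, Finset.sum_apply, Pi.single_apply]
  congr 1
  · by_cases h : l = k
    · subst h; simp
    · simp [h]
  · simp
    rfl

/-- degree -/
def vdeg (p : κ × List (ι × ι)) : ℤ := X.deg p.1 + Y.wdeg p.2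

/-- the ambient complex -/
noncomputable def amb : GC A (κ → T A ι) (κ × List (ι × ι)) where
  b := vb A ι κ
  D := dV Y.sm X.sm
  deg := vdeg Y X
  DD x := dV_dV _ _ x
  hD := by
    rintro ⟨k, w⟩
    rw [vb_apply, dV_single]
    refine add_mem (Submodule.smul_mem _ _ ?_) (sum_mem fun k' _ => ?_)
    · refine spT_map (LinearMap.single A (fun _ : κ => T A ι) k) _ ?_ (Y.dT_wd w)
      rintro w' ⟨h, -⟩
      refine Submodule.subset_span ⟨(k, w'), ?_, vb_apply _ _⟩
      simp only [vdeg, Set.mem_setOf_eq, h]; ring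
    · by_cases h : X.d k' k = 0
      · rw [h, zero_smul]; exact zero_mem _
      · refine Submodule.smul_mem _ _ (Submodule.subset_span ⟨(k', w), ?_, vb_apply _ _⟩)
        simp only [vdeg, Set.mem_setOf_eq, X.hd _ _ h]; ring

lemma amb_b (k : κ) (w : List (ι × ι)) : (amb Y X).b (k, w) = Pi.single k (wd w) := vb_apply k w

/-- degree of a label -/
def ldeg (l : ι × List (ι × ι) × κ) : ℤ := - Y.deg l.1 - 1 + Y.wdeg l.2.1 + X.deg l.2.2

/-- rank of a label -/
def rk (l : ι × List (ι × ι) × κ) : ℕ ×ₗ ℤ := toLex (l.2.1.length, - ldeg Y X l)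

/-- index in the ambient complex -/
def lam (i : ι) (l : ι × List (ι × ι) × κ) : κ × List (ι × ι) := (l.2.2, (i, l.1) :: l.2.1)

/-- low part -/
def low (l : ι × List (ι × ι) × κ) : Set (κ × List (ι × ι)) :=
  {p | p.2 = [] ∨ ∃ i l', rk Y X l' < rk Y X l ∧ p = lam i l'}

lemma mem_low (l : ι × List (ι × ι) × κ) (i j : ι) (w : List (ι × ι)) (k : κ)
    (h1 : w.length < l.2.1.length ∨ (w.length ≤ l.2.1.length ∧ ldeg Y X (j,w,k) = ldeg Y X l + 1)) :
    (k, (i,j)::w) ∈ low Y X l := by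
  refine Or.inr ⟨i, (j,w,k), ?_, rfl⟩
  rw [rk, rk, Prod.Lex.toLex_lt_toLex]
  rcases h1 with h | ⟨h, h'⟩
  · exact Or.inl h
  · rcases h.lt_or_eq with h | h
    · exact Or.inl h
    · exact Or.inr ⟨h, by change - ldeg Y X (j,w,k) < - ldeg Y X l; omega⟩

lemma amb_D_lam (i : ι) (l : ι × List (ι × ι) × κ) :
    (amb Y X).D ((amb Y X).b (lam i l)) - X.sm.s l.2.2 • ∑ a, Y.d a i • (amb Y X).b (lam a l) ∈ (amb Y X).sp (low Y X l) := by
  obtain ⟨j, w, k⟩ := l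
  have key : (amb Y X).D ((amb Y X).b (lam i (j,w,k))) - X.sm.s k • ∑ a, Y.d a i • (amb Y X).b (lam a (j,w,k)) =
     X.sm.s k • ((LinearMap.single A (fun _ : κ => T A ι) k) (if i = j then Y.sm.s i • wd w else 0)
       - (LinearMap.single A (fun _ : κ => T A ι) k) (∑ a, (Y.sm.s i * Y.sm.s j * Y.d j a) • wd ((i,a)::w))
       - (Y.sm.s i * Y.sm.s j) • (LinearMap.single A (fun _ : κ => T A ι) k ∘ₗ LinearMap.mulLeft A (g i j)) (Y.sm.dT (wd w)))
     + ∑ k', X.d k' k • (amb Y X).b (k', (i,j)::w) := by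
    have e : (amb Y X).D ((amb Y X).b (lam i (j,w,k))) = X.sm.s k • (LinearMap.single A (fun _ : κ => T A ι) k) (Y.sm.dT (wd ((i,j)::w)))
      + ∑ k', X.d k' k • (amb Y X).b (k', (i,j)::w) := by
      rw [lam, amb_b]
      simp only [amb_b]
      exact dV_single Y X k _
    rw [e, dT_cons]
    simp only [lam, amb_b, map_sub, map_add, map_sum, map_smul, LinearMap.comp_apply, LinearMap.mulLeft_apply, LinearMap.single_apply]
    module
  rw [key]
  refine add_mem (Submodule.smul_mem _ _ (sub_mem (sub_mem ?_ ?_) ?_)) (sum_mem fun k' _ => ?_)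
  · split_ifs with h
    · rw [map_smul]
      refine Submodule.smul_mem _ _ ?_
      change (Pi.single k (wd w) : κ → T A ι) ∈ _
      rw [← amb_b Y X]
      apply GC.b_mem
      rcases w with _ | ⟨⟨i', j'⟩, w'⟩
      · exact Or.inl rfl
      · apply mem_low
        left; simp
    · rw [map_zero]; exact zero_mem _
  · rw [map_sum]
    refine sum_mem fun a _ => ?_
    by_cases h : Y.d j a = 0
    · rw [h, mul_zero, zero_smul, map_zero]; exact zero_mem _
    · rw [map_smul]
      refine Submodule.smul_mem _ _ ?_
      change (Pi.single k (wd _) : κ → T A ι) ∈ _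
      rw [← amb_b Y X]
      apply GC.b_mem
      apply mem_low
      right
      refine ⟨le_rfl, ?_⟩
      simp only [ldeg, Y.hd _ _ h]; ring
  · refine Submodule.smul_mem _ _ ?_
    refine spT_map _ _ ?_ (Y.dT_wd w)
    rintro w' ⟨h, h'⟩
    rw [LinearMap.comp_apply, LinearMap.mulLeft_apply, ← wd_cons]
    change (Pi.single k (wd _) : κ → T A ι) ∈ _
    rw [← amb_b Y X]
    apply GC.b_mem
    apply mem_low
    right
    refine ⟨h', ?_⟩
    simp only [ldeg, h]; ring
  · by_cases h : X.d k' k = 0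
    · rw [h, zero_smul]; exact zero_mem _
    · refine Submodule.smul_mem _ _ ?_
      apply GC.b_mem
      apply mem_low
      right
      refine ⟨le_rfl, ?_⟩
      simp only [ldeg, X.hd _ _ h]; ring

end MC


namespace MC
open SMat
variable {A : Type u} [CommRing A] {ι : Type} [Fintype ι] [DecidableEq ι] (Y : MC A ι)
variable {κ : Type} [Fintype κ] [DecidableEq κ] (X : MC A κ)

/-- cells -/
def cells (F : Finset (ι × List (ι × ι) × κ)) : Set (κ × List (ι × ι)) :=
  {p | p.2 = [] ∨ ∃ i, ∃ l ∈ F, p = lam i l}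

/-- lower sets of labels -/
def Good (F : Finset (ι × List (ι × ι) × κ)) : Prop :=
  ∀ l ∈ F, ∀ l', rk Y X l' < rk Y X l → l' ∈ F

lemma low_sub {F : Finset (ι × List (ι × ι) × κ)} {l : ι × List (ι × ι) × κ}
    (h : ∀ l', rk Y X l' < rk Y X l → l' ∈ F) : low Y X l ⊆ cells F := by
  rintro p (hp | ⟨i, l', h1, h2⟩)
  · exact Or.inl hp
  · exact Or.inr ⟨i, l', h l' h1, h2⟩

lemma good_closed {F : Finset (ι × List (ι × ι) × κ)} (hF : Good Y X F) : (amb Y X).Closed (cells F) := by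
  rintro p (hp | ⟨i, l, hl, rfl⟩)
  · obtain ⟨k, w⟩ := p
    have hp' : w = [] := hp
    subst hp'
    rw [amb_b]
    have e : (amb Y X).D (Pi.single k (wd [])) = ∑ k', X.d k' k • (amb Y X).b (k', []) := by
      have := dV_single Y X k (wd [])
      rw [wd_nil, dT_one, Pi.single_zero, smul_zero, zero_add] at this
      simp only [amb_b, wd_nil]
      exact this
    rw [e]
    refine sum_mem fun k' _ => Submodule.smul_mem _ _ (GC.b_mem _ (Or.inl rfl))
  · have h := (amb Y X).sp_mono (low_sub Y X (hF l hl)) (amb_D_lam Y X i l)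
    have h2 : X.sm.s l.2.2 • ∑ a, Y.d a i • (amb Y X).b (lam a l) ∈ (amb Y X).sp (cells F) :=
      Submodule.smul_mem _ _ (sum_mem fun a _ => Submodule.smul_mem _ _ (GC.b_mem _ (Or.inr ⟨a, l, hl, rfl⟩)))
    simpa using add_mem h h2

lemma good_empty : Good Y X ∅ := by intro l hl; simp at hl

lemma lam_inj (l : ι × List (ι × ι) × κ) : Function.Injective (fun i => lam i l) := by
  intro i i' h
  simp [lam] at h
  exact h

lemma lam_inj' {i i' : ι} {l l' : ι × List (ι × ι) × κ} (h : lam i l = lam i' l') : l = l' := by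
  obtain ⟨j, w, k⟩ := l
  obtain ⟨j', w', k'⟩ := l'
  simp [lam] at h ⊢
  tauto

variable [HasDerivedCategory.{w} (ModuleCat.{u} A)] {D : Set (DerivedCategory (ModuleCat.{u} A))}

lemma cells_triangle (hD : IsThickSubcategory D) (hY : DerivedCategory.Q.obj (Y.gc.real Y.gc_closed) ∈ D)
    (F : Finset (ι × List (ι × ι) × κ)) : ∀ (hF : Good Y X F) (hsub : cells (∅ : Finset (ι × List (ι × ι) × κ)) ⊆ cells F),
    ∃ Z ∈ D, ∃ g h, Triangle.mk (DerivedCategory.Q.map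
      ((amb Y X).incl (good_closed Y X (good_empty Y X)) (good_closed Y X hF) hsub)) g (h : Z ⟶ _) ∈ distTriang _ := by
  classical
  induction F using Finset.induction_on_max_value (rk Y X) with
  | empty =>
    intro hF hsub
    have e : (amb Y X).incl (good_closed Y X (good_empty Y X)) (good_closed Y X hF) hsub = 𝟙 _ := by
      ext k x; rfl
    rw [e, CategoryTheory.Functor.map_id]
    exact ⟨0, hD.zero_mem, 0, 0, contractible_distinguished _⟩
  | insert l F hl hmax ih =>
    intro hF hsub
    have hF' : Good Y X F := by
      intro l₁ h₁ l' hlt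
      rcases Finset.mem_insert.1 (hF l₁ (Finset.mem_insert_of_mem h₁) l' hlt) with h | h
      · subst h
        exact absurd hlt (not_lt.2 (hmax _ h₁))
      · exact h
    have hs1 : cells (∅ : Finset (ι × List (ι × ι) × κ)) ⊆ cells F := by
      rintro p (hp | ⟨i, l, h, -⟩)
      · exact Or.inl hp
      · simp at h
    have hs2 : cells F ⊆ cells (insert l F) := by
      rintro p (hp | ⟨i, l', h, h'⟩)
      · exact Or.inl hp
      · exact Or.inr ⟨i, l', Finset.mem_insert_of_mem h, h'⟩
    obtain ⟨Z, hZ, g, h, hT⟩ := ih hF' hs1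
    have hlow : ∀ l', rk Y X l' < rk Y X l → l' ∈ F := by
      intro l' hlt
      rcases Finset.mem_insert.1 (hF l (Finset.mem_insert_self _ _) l' hlt) with h | h
      · subst h; exact absurd hlt (lt_irrefl _)
      · exact h
    have hse := (amb Y X).sesSC_shortExact Y.gc (fun i => lam i l) (lam_inj l) (- ldeg Y X l) ((X.deg l.2.2).negOnePow)
      (good_closed Y X hF') (good_closed Y X hF) hs2 Y.gc_closed
      (by
        intro p
        constructor
        · rintro (hp | ⟨i, l', h, h'⟩)
          · exact Or.inl (Or.inl hp)
          · rcases Finset.mem_insert.1 h with h | h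
            · subst h; exact Or.inr ⟨i, h'.symm⟩
            · exact Or.inl (Or.inr ⟨i, l', h, h'⟩)
        · rintro (hp | ⟨i, h⟩)
          · exact hs2 hp
          · exact Or.inr ⟨i, l, Finset.mem_insert_self _ _, h.symm⟩)
      (by
        rintro i (hp | ⟨i, l', h, h'⟩)
        · simp [lam] at hp
        · exact hl (lam_inj' h' ▸ h))
      (by
        intro i
        change Y.deg i = X.deg l.2.2 + Y.wdeg ((i, l.1) :: l.2.1) + _
        rw [wdeg_cons, ldeg]
        ring)
      (by
        intro i
        have h := (amb Y X).sp_mono (low_sub Y X hlow) (amb_D_lam Y X i l)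
        rw [gc_D, map_sum]
        simp only [map_smul, Module.Basis.constr_basis]
        rw [← Int.cast_smul_eq_zsmul A]
        exact h)
    have hT2 := DerivedCategory.triangleOfSES_distinguished hse
    have hZ2 : DerivedCategory.Q.obj ((Y.gc.real Y.gc_closed)⟦- ldeg Y X l⟧) ∈ D :=
      hD.mem_of_iso ((DerivedCategory.Q.commShiftIso (- ldeg Y X l)).app _).symm (hD.shift_mem _ _ hY)
    obtain ⟨Z3, g3, h3, hT3⟩ := distinguished_cocone_triangle (DerivedCategory.Q.map
      ((amb Y X).incl (good_closed Y X (good_empty Y X)) (good_closed Y X hF) hsub))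
    refine ⟨Z3, ?_, g3, h3, hT3⟩
    have comm : DerivedCategory.Q.map ((amb Y X).incl (good_closed Y X (good_empty Y X)) (good_closed Y X hF') hs1) ≫
      DerivedCategory.Q.map ((amb Y X).incl (good_closed Y X hF') (good_closed Y X hF) hs2) = 
       DerivedCategory.Q.map ((amb Y X).incl (good_closed Y X (good_empty Y X)) (good_closed Y X hF) hsub) := by
      rw [← Functor.map_comp, GC.incl_comp]
    have oct := Triangulated.someOctahedron comm hT hT2 hT3
    exact hD.ext₂ _ oct.mem hZ hZ2

end MC


namespace GC
variable {A : Type u} [CommRing A] {M : Type u} [AddCommGroup M] [Module A M] {L : Type*} (G : GC A M L)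

/-- projection to a degree -/
noncomputable def P (k : ℤ) : M →ₗ[A] M := G.b.constr A (fun l => if G.deg l = k then G.b l else 0)

lemma P_b (k : ℤ) (l : L) : G.P k (G.b l) = if G.deg l = k then G.b l else 0 := by
  rw [P, Module.Basis.constr_basis]

lemma P_mem {s : Set L} {x : M} (hx : x ∈ G.sp s) (k : ℤ) : G.P k x ∈ G.gr s k := by
  refine G.sp_map _ ?_ hx
  intro l hl
  rw [P_b]
  split_ifs with h
  · exact G.b_mem ⟨hl, h⟩
  · exact zero_mem _

lemma P_self {k : ℤ} {x : M} (hx : x ∈ G.sp {l | G.deg l = k}) : G.P k x = x := by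
  have : (G.P k - LinearMap.id : M →ₗ[A] M) x ∈ (⊥ : Submodule A M) := by
    refine G.sp_map _ ?_ hx
    intro l hl
    have hl' : G.deg l = k := hl
    simp [P_b, hl']
  simpa [sub_eq_zero] using this

lemma P_ne {k j : ℤ} (h : j ≠ k) {x : M} (hx : x ∈ G.sp {l | G.deg l = j}) : G.P k x = 0 := by
  have : G.P k x ∈ (⊥ : Submodule A M) := by
    refine G.sp_map _ ?_ hx
    intro l hl
    have hl' : G.deg l = j := hl
    simp [P_b, hl', h]
  simpa using this

lemma D_P (k j : ℤ) (h : k + 1 = j) (x : M) : G.D (G.P k x) = G.P j (G.D x) := by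
  have : G.D ∘ₗ G.P k = G.P j ∘ₗ G.D := by
    apply G.b.ext
    intro l
    simp only [LinearMap.comp_apply, P_b]
    have h1 : G.D (G.b l) ∈ G.sp {m | G.deg m = G.deg l + 1} := G.hD l
    split_ifs with h'
    · rw [h', h] at h1
      exact (G.P_self h1).symm
    · rw [G.P_ne (by omega) h1, map_zero]
  exact LinearMap.congr_fun this x
end GC

namespace MC
open SMat
variable {A : Type u} [CommRing A] {ι : Type} [Fintype ι] [DecidableEq ι] (Y : MC A ι)
variable {κ : Type} [Fintype κ] [DecidableEq κ] (X : MC A κ)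

lemma sig_wd (w : List (ι × ι)) : Y.sm.sig (wd w) = sgn A (Y.wdeg w) • wd w := by
  induction w with
  | nil => rw [wd_nil, map_one, wdeg_nil, sgn_zero, one_smul]
  | cons p w ih =>
    obtain ⟨i, j⟩ := p
    rw [wd_cons, map_mul, ih, sig_g, wdeg_cons, sgn_add, sgn_sub, sgn_sub, sgn_one, smul_mul_smul_comm]
    congr 1
    change (-(sgn A (Y.deg i) * sgn A (Y.deg j))) * _ = _
    ring

lemma sigV_b (p : κ × List (ι × ι)) : sigV Y.sm X.sm ((amb Y X).b p) = sgn A ((amb Y X).deg p) • (amb Y X).b p := by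
  obtain ⟨k, w⟩ := p
  rw [amb_b]
  ext l
  rw [sigV_apply]
  change _ = sgn A (X.deg k + Y.wdeg w) • (Pi.single k (wd w) : κ → T A ι) l
  by_cases h : l = k
  · subst h
    simp only [Pi.single_eq_same]
    rw [sig_wd, smul_smul, sgn_add]
    rfl
  · simp [h]

lemma sigV_deg {k : ℤ} {x : κ → T A ι} (hx : x ∈ (amb Y X).sp {l | (amb Y X).deg l = k}) :
    sigV Y.sm X.sm x = sgn A k • x := by
  have : (sigV Y.sm X.sm - sgn A k • LinearMap.id : (κ → T A ι) →ₗ[A] (κ → T A ι)) x ∈ (⊥ : Submodule A (κ → T A ι)) := by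
    refine (amb Y X).sp_map _ ?_ hx
    intro l hl
    have hl' : (amb Y X).deg l = k := hl
    simp [sigV_b, hl']
  simpa [sub_eq_zero] using this

lemma P_sigV (k : ℤ) (x : κ → T A ι) : (amb Y X).P k (sigV Y.sm X.sm x) = sgn A k • (amb Y X).P k x := by
  have : (amb Y X).P k ∘ₗ sigV Y.sm X.sm = sgn A k • (amb Y X).P k := by
    apply (amb Y X).b.ext
    intro l
    rw [LinearMap.comp_apply, sigV_b, map_smul, LinearMap.smul_apply, GC.P_b]
    split_ifs with h
    · rw [h]
    · simp
  exact LinearMap.congr_fun this x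

/-- multiplication by a matrix -/
def tv (t : Matrix κ κ (T A ι)) : (κ → T A ι) →ₗ[A] (κ → T A ι) where
  toFun v := t.mulVec v
  map_add' := t.mulVec_add
  map_smul' := t.mulVec_smul

/-- finite set of labels -/
noncomputable def Fn (ι κ : Type) [Fintype ι] [Fintype κ] (n : ℕ) : Finset (ι × List (ι × ι) × κ) :=
  (Set.Finite.toFinset (s := {l : ι × List (ι × ι) × κ | l.2.1.length ≤ n}) (by
    have h : Set.Finite ((Set.univ : Set ι) ×ˢ ({w : List (ι × ι) | w.length ≤ n} ×ˢ (Set.univ : Set κ))) :=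
      Set.finite_univ.prod ((List.finite_length_le _ n).prod Set.finite_univ)
    refine h.subset ?_
    rintro ⟨i, w, k⟩ hl
    exact ⟨trivial, hl, trivial⟩))

lemma mem_Fn (n : ℕ) (l : ι × List (ι × ι) × κ) : l ∈ Fn ι κ n ↔ l.2.1.length ≤ n := by
  simp [Fn]

lemma good_Fn (n : ℕ) : Good Y X (Fn ι κ n) := by
  intro l hl l' hlt
  rw [mem_Fn] at *
  rw [rk, rk, Prod.Lex.toLex_lt_toLex] at hlt
  rcases hlt with h | h
  · exact (le_of_lt h).trans hl
  · exact h.1.le.trans hl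

lemma exists_len_mat (t : Matrix κ κ (T A ι)) : ∃ n, ∀ k l, t k l ∈ spT (A := A) (fun w => w.length ≤ n) := by
  choose n hn using fun k l => exists_len (t k l)
  refine ⟨∑ k, ∑ l, n k l, fun k l => spT_le ?_ (hn k l)⟩
  intro w hw
  refine hw.trans ?_
  exact (Finset.single_le_sum (f := fun l => n k l) (fun _ _ => Nat.zero_le _) (Finset.mem_univ l)).trans
    (Finset.single_le_sum (f := fun k => ∑ l, n k l) (fun _ _ => Nat.zero_le _) (Finset.mem_univ k))

lemma tv_mem (t : Matrix κ κ (T A ι)) (n : ℕ) (hn : ∀ k l, t k l ∈ spT (A := A) (fun w => w.length ≤ n))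
    {x : κ → T A ι} (hx : x ∈ (amb Y X).sp (cells ∅)) : tv t x ∈ (amb Y X).sp (cells (Fn ι κ n)) := by
  refine (amb Y X).sp_map _ ?_ hx
  rintro ⟨l, w⟩ (hp | ⟨i, l, h, -⟩)
  · have hp' : w = [] := hp
    subst hp'
    rw [amb_b, wd_nil]
    have : tv t (Pi.single l 1) = ∑ k, (LinearMap.single A (fun _ : κ => T A ι) k) (t k l) := by
      ext k
      change t.mulVec (Pi.single l 1) k = _
      simp [Finset.sum_apply]
    rw [this]
    refine sum_mem fun k _ => spT_map _ _ ?_ (hn k l)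
    intro w hw
    change (Pi.single k (wd w) : κ → T A ι) ∈ _
    rw [← amb_b Y X]
    apply GC.b_mem
    rcases w with _ | ⟨⟨i, j⟩, w⟩
    · exact Or.inl rfl
    · refine Or.inr ⟨i, (j, w, k), ?_, rfl⟩
      rw [mem_Fn]
      have : w.length + 1 ≤ n := hw
      change w.length ≤ n
      omega
  · simp at h

variable [HasDerivedCategory.{w} (ModuleCat.{u} A)] {D : Set (DerivedCategory (ModuleCat.{u} A))}

lemma base_mem (hD : IsThickSubcategory D) (hY : DerivedCategory.Q.obj (Y.gc.real Y.gc_closed) ∈ D)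
    (h : ∀ x, Y.Kills x → ∃ m : ℕ, X.Kills (x ^ m)) :
    DerivedCategory.Q.obj ((amb Y X).real (good_closed Y X (good_empty Y X))) ∈ D := by
  obtain ⟨t, ht⟩ := Y.exists_unit_bd X h
  obtain ⟨n, hn⟩ := exists_len_mat t
  have hsub : cells (∅ : Finset (ι × List (ι × ι) × κ)) ⊆ cells (Fn ι κ n) := by
    rintro p (hp | ⟨i, l, h, -⟩)
    · exact Or.inl hp
    · simp at h
  obtain ⟨Z, hZ, g, g', hT⟩ := cells_triangle Y X hD hY (Fn ι κ n) (good_Fn Y X n) hsub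
  have hh : Homotopy ((amb Y X).incl (good_closed Y X (good_empty Y X)) (good_closed Y X (good_Fn Y X n)) hsub) 0 := by
    refine (amb Y X).inclHtpy _ _ _ (fun k => (amb Y X).P (k-1) ∘ₗ tv t ∘ₗ Submodule.subtype _) ?_ ?_
    · intro k x
      exact (amb Y X).P_mem (tv_mem Y X t n hn ((amb Y X).sp_mono (fun l hl => hl.1) x.2)) _
    · intro k x
      have hx : (x : κ → T A ι) ∈ (amb Y X).sp {l | (amb Y X).deg l = k} := (amb Y X).sp_mono (fun l hl => hl.2) x.2
      have hx' : (amb Y X).D x ∈ (amb Y X).sp {l | (amb Y X).deg l = k + 1} := 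
        (amb Y X).sp_mono (fun l hl => hl.2) ((amb Y X).D_mem (good_closed Y X (good_empty Y X)) rfl _ x.2)
      simp only [LinearMap.comp_apply, Submodule.subtype_apply]
      rw [GC.dres_coe _ _ rfl, (amb Y X).D_P (k-1) k (by ring)]
      have e1 : (amb Y X).D (tv t x) = x + sigV Y.sm X.sm (tv t (sigV Y.sm X.sm ((amb Y X).D x))) := by
        have := dV_mulVec Y.sm X.sm t (x : κ → T A ι)
        rw [ht, Matrix.one_mulVec, sigV_mulVec] at this
        exact this
      rw [e1, map_add, P_sigV, sigV_deg Y X hx', map_smul, map_smul, smul_smul, (amb Y X).P_self hx, add_sub_cancel_right,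
        sgn_add, sgn_one, mul_neg, mul_one, mul_neg, sgn_sq]
      simp
  have hzero : DerivedCategory.Q.map ((amb Y X).incl (good_closed Y X (good_empty Y X)) (good_closed Y X (good_Fn Y X n)) hsub) = 0 := by
    rw [DerivedCategory.Q_map_eq_of_homotopy _ hh, Functor.map_zero]
  obtain ⟨r, hr⟩ := Triangle.coyoneda_exact₁ _ hT (𝟙 _) (by
    change 𝟙 _ ≫ (DerivedCategory.Q.map _)⟦1⟧' = 0
    rw [hzero, Functor.map_zero, comp_zero])
  have h1 := hD.retract_mem _ _ r g' hr.symm hZ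
  exact hD.mem_of_iso (shiftShiftNeg _ (1:ℤ)) (hD.shift_mem _ (-1) h1)

lemma X_gc_retract : ∃ (i : X.gc.real X.gc_closed ⟶ (amb Y X).real (good_closed Y X (good_empty Y X))) 
    (r : (amb Y X).real (good_closed Y X (good_empty Y X)) ⟶ X.gc.real X.gc_closed), i ≫ r = 𝟙 _ := by
  have hj : Function.Injective (fun k : κ => (k, ([] : List (ι × ι)))) := fun a b h => by simpa using h
  have hDb : ∀ k, (amb Y X).D ((amb Y X).b (k, [])) = ∑ k', X.d k' k • (amb Y X).b (k', []) := by
    intro k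
    have := dV_single Y X k (wd [])
    rw [wd_nil, dT_one, Pi.single_zero, smul_zero, zero_add] at this
    simp only [amb_b, wd_nil]
    exact this
  have hD' : ∀ y, (amb Y X).D (X.gc.b.constr A (fun i => (amb Y X).b (i, [])) y) = 
      X.gc.b.constr A (fun i => (amb Y X).b (i, [])) (X.gc.D y) := by
    intro y
    have : (amb Y X).D ∘ₗ (X.gc.b.constr A (fun i => (amb Y X).b (i, []))) = 
      X.gc.b.constr A (fun i => (amb Y X).b (i, [])) ∘ₗ (X.gc.D) := by
      apply X.gc.b.ext
      intro k
      rw [LinearMap.comp_apply, LinearMap.comp_apply, Module.Basis.constr_basis, hDb, gc_D, map_sum]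
      simp only [map_smul, Module.Basis.constr_basis]
    exact LinearMap.congr_fun this y
  have hm : ∀ k : κ, X.gc.deg k = (amb Y X).deg (k, []) + 0 := by
    intro k
    change X.deg k = X.deg k + Y.wdeg [] + 0
    rw [wdeg_nil]; ring
  refine ⟨X.gc.mkMap (amb Y X) _ _ (X.gc.b.constr A (fun i => (amb Y X).b (i, []))) ?_ ?_,
    (amb Y X).mkMap X.gc _ _ ((amb Y X).proj X.gc _ hj) ?_ ?_, ?_⟩
  · intro k x hx
    refine X.gc.sp_map _ ?_ hx
    rintro i ⟨-, hi⟩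
    rw [Module.Basis.constr_basis]
    refine GC.b_mem _ ⟨Or.inl rfl, ?_⟩
    have := hm i
    omega
  · intro k x _
    exact hD' x
  · intro k x hx
    exact (amb Y X).proj_gr X.gc _ hj 0 hm k k (by ring) x hx
  · intro k x hx
    have := (amb Y X).proj_D X.gc (s := ∅) (t := cells ∅) _ hj 1 (by intro l hl; simp at hl) ?_ (by simp) ?_
      ((amb Y X).sp_mono (fun l hl => hl.1) hx)
    · rw [this]; simp
    · rintro ⟨k, w⟩
      simp [cells, eq_comm]
    · intro i
      have := hD' (X.gc.b i)
      rw [Module.Basis.constr_basis] at this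
      rw [this]
      simp
  · ext k x
    change X.gc.gr _ k at x
    apply Subtype.ext
    change (amb Y X).proj X.gc _ hj (X.gc.b.constr A (fun i => (amb Y X).b (i, [])) (x : κ → A)) = (x : κ → A)
    exact (amb Y X).proj_emb X.gc _ hj (x : κ → A)

theorem thomason (hD : IsThickSubcategory D) (hY : DerivedCategory.Q.obj (Y.gc.real Y.gc_closed) ∈ D)
    (h : ∀ x, Y.Kills x → ∃ m : ℕ, X.Kills (x ^ m)) :
    DerivedCategory.Q.obj (X.gc.real X.gc_closed) ∈ D := by
  obtain ⟨i, r, hir⟩ := X_gc_retract Y X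
  refine hD.retract_mem _ _ (DerivedCategory.Q.map i) (DerivedCategory.Q.map r) ?_ (base_mem Y X hD hY h)
  rw [← Functor.map_comp, hir, CategoryTheory.Functor.map_id]

end MC


/-- classes of `b`-torsion modules which are wide among `b`-torsion modules -/
structure HW {A : Type u} [CommRing A] (b : Ideal A) (E : Set (ModuleCat.{u} A)) : Prop where
  iso : ∀ {M N : Type u} [AddCommGroup M] [Module A M] [AddCommGroup N] [Module A N], (M ≃ₗ[A] N) →
    ModuleCat.of A M ∈ E → ModuleCat.of A N ∈ E
  zero : ModuleCat.of A PUnit.{u+1} ∈ E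
  ker : ∀ {M N : Type u} [AddCommGroup M] [Module A M] [AddCommGroup N] [Module A N] (f : M →ₗ[A] N),
    ModuleCat.of A M ∈ E → ModuleCat.of A N ∈ E → ModuleCat.of A (LinearMap.ker f) ∈ E
  coker : ∀ {M N : Type u} [AddCommGroup M] [Module A M] [AddCommGroup N] [Module A N] (f : M →ₗ[A] N),
    ModuleCat.of A M ∈ E → ModuleCat.of A N ∈ E → ModuleCat.of A (N ⧸ LinearMap.range f) ∈ E
  killed : ∀ {M : Type u} [AddCommGroup M] [Module A M], ModuleCat.of A M ∈ E → ∀ x ∈ b, ∀ m : M, x • m = 0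
  ext : ∀ {L N Q : Type u} [AddCommGroup L] [Module A L] [AddCommGroup N] [Module A N] [AddCommGroup Q] [Module A Q]
    (f : L →ₗ[A] N) (g : N →ₗ[A] Q), Function.Injective f → Function.Surjective g → Function.Exact f g →
    (∀ x ∈ b, ∀ m : N, x • m = 0) → ModuleCat.of A L ∈ E → ModuleCat.of A Q ∈ E → ModuleCat.of A N ∈ E

section
variable {A : Type u} [CommRing A]

/-- extensions of objects of E -/
def ExtC (E : Set (ModuleCat.{u} A)) : Set (ModuleCat.{u} A) :=
  {N | ∃ (L Q : ModuleCat.{u} A) (f : L →ₗ[A] N) (g : N →ₗ[A] Q), L ∈ E ∧ Q ∈ E ∧ Function.Injective f ∧ Function.Surjective g ∧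
    Function.Exact f g}

variable {L N Q P : Type u} [AddCommGroup L] [Module A L] [AddCommGroup N] [Module A N] [AddCommGroup Q] [Module A Q]
   [AddCommGroup P] [Module A P]

lemma exists_nu (f : L →ₗ[A] N) (g : N →ₗ[A] Q) (hg : Function.Surjective g) (h : Function.Exact f g) (x : A)
    (hx : ∀ l : L, x • l = 0) : ∃ ν : Q →ₗ[A] N, ∀ n, ν (g n) = x • n := by
  have hk : LinearMap.ker g ≤ LinearMap.ker (x • (LinearMap.id : N →ₗ[A] N)) := by
    intro n hn
    obtain ⟨l, rfl⟩ := (h n).1 hn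
    simp [← map_smul, hx]
  refine ⟨(LinearMap.ker g).liftQ _ hk ∘ₗ (g.quotKerEquivOfSurjective hg).symm.toLinearMap, fun n => ?_⟩
  have : (g.quotKerEquivOfSurjective hg).symm (g n) = Submodule.Quotient.mk n := by
    rw [LinearEquiv.symm_apply_eq]; rfl
  simp [this]

lemma exists_lift (f : L →ₗ[A] N) (g : N →ₗ[A] Q) (hf : Function.Injective f) (h : Function.Exact f g) (φ : P →ₗ[A] N)
    (hφ : ∀ p, g (φ p) = 0) : ∃ ψ : P →ₗ[A] L, ∀ p, f (ψ p) = φ p := by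
  have hr : ∀ p, φ p ∈ LinearMap.range f := fun p => (h _).1 (hφ p)
  refine ⟨(LinearEquiv.ofInjective f hf).symm.toLinearMap ∘ₗ φ.codRestrict _ hr, fun p => ?_⟩
  have := (LinearEquiv.ofInjective f hf).apply_symm_apply (φ.codRestrict _ hr p)
  exact congrArg Subtype.val this

/-- multiplication by a family -/
def mu {r : ℕ} (x : Fin r → A) (N : Type u) [AddCommGroup N] [Module A N] : (Fin r → N) →ₗ[A] N :=
  ∑ i, x i • LinearMap.proj i

lemma mu_apply {r : ℕ} (x : Fin r → A) (v : Fin r → N) : mu x N v = ∑ i, x i • v i := by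
  simp [mu, LinearMap.sum_apply]

lemma range_mu {r : ℕ} (x : Fin r → A) (b : Ideal A) (hb : Submodule.span A (Set.range x) = b) : 
    LinearMap.range (mu x N) = b • (⊤ : Submodule A N) := by
  subst hb
  apply le_antisymm
  · rintro _ ⟨v, rfl⟩
    rw [mu_apply]
    exact sum_mem fun i _ => Submodule.smul_mem_smul (Submodule.subset_span ⟨i, rfl⟩) trivial
  · rw [Submodule.smul_le]
    intro a ha n _
    induction ha using Submodule.span_induction with
    | mem a h =>
      obtain ⟨i, rfl⟩ := h
      refine ⟨Pi.single i n, ?_⟩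
      rw [mu_apply, Finset.sum_eq_single i]
      · simp
      · intro j _ hj; simp [hj]
      · simp
    | zero => rw [zero_smul]; exact zero_mem _
    | add a b _ _ ha hb => rw [add_smul]; exact add_mem ha hb
    | smul c a _ ha => rw [smul_assoc]; exact Submodule.smul_mem _ _ ha

end

namespace HW
variable {A : Type u} [CommRing A] {b : Ideal A} {E : Set (ModuleCat.{u} A)} (h : HW b E)
variable {L N Q P : Type u} [AddCommGroup L] [Module A L] [AddCommGroup N] [Module A N] [AddCommGroup Q] [Module A Q]
   [AddCommGroup P] [Module A P]
include h

lemma subsing [Subsingleton N] : ModuleCat.of A N ∈ E :=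
  h.iso (LinearEquiv.ofSubsingleton (R := A) PUnit.{u+1} N) h.zero

lemma range (f : N →ₗ[A] P) (hN : ModuleCat.of A N ∈ E) (hP : ModuleCat.of A P ∈ E) : ModuleCat.of A (LinearMap.range f) ∈ E := by
  have h1 := h.coker (LinearMap.ker f).subtype (h.ker f hN hP) hN
  rw [Submodule.range_subtype] at h1
  exact h.iso f.quotKerEquivRange h1

lemma prod (hN : ModuleCat.of A N ∈ E) (hP : ModuleCat.of A P ∈ E) : ModuleCat.of A (N × P) ∈ E := by
  refine h.ext (LinearMap.inl A N P) (LinearMap.snd A N P) LinearMap.inl_injective LinearMap.snd_surjective ?_ ?_ hN hP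
  · exact .inl_snd
  · rintro x hx ⟨m, n⟩
    rw [Prod.smul_mk, h.killed hN x hx, h.killed hP x hx]; rfl

lemma pow (hN : ModuleCat.of A N ∈ E) (r : ℕ) : ModuleCat.of A (Fin r → N) ∈ E := by
  induction r with
  | zero => exact h.subsing
  | succ r ih => exact h.iso (Fin.consLinearEquiv A (fun _ : Fin (r+1) => N)) (h.prod hN ih)

lemma sup (S T : Submodule A N) (hN : ModuleCat.of A N ∈ E) (hS : ModuleCat.of A S ∈ E) (hT : ModuleCat.of A T ∈ E) :
    ModuleCat.of A (S ⊔ T : Submodule A N) ∈ E := by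
  have := h.range (S.subtype.coprod T.subtype) (h.prod hS hT) hN
  rwa [LinearMap.range_coprod, Submodule.range_subtype, Submodule.range_subtype] at this

section five
variable {M₁ M₂ M₃ M₄ M₅ : Type u} [AddCommGroup M₁] [Module A M₁] [AddCommGroup M₂] [Module A M₂] [AddCommGroup M₃] [Module A M₃]
  [AddCommGroup M₄] [Module A M₄] [AddCommGroup M₅] [Module A M₅]
  (f₁ : M₁ →ₗ[A] M₂) (f₂ : M₂ →ₗ[A] M₃) (f₃ : M₃ →ₗ[A] M₄) (f₄ : M₄ →ₗ[A] M₅)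

lemma five_ext (h₁ : Function.Exact f₁ f₂) (h₂ : Function.Exact f₂ f₃) (h₃ : Function.Exact f₃ f₄) 
    (m₁ : ModuleCat.of A M₁ ∈ E) (m₂ : ModuleCat.of A M₂ ∈ E) (m₄ : ModuleCat.of A M₄ ∈ E) (m₅ : ModuleCat.of A M₅ ∈ E) :
    ModuleCat.of A M₃ ∈ ExtC E := by
  refine ⟨ModuleCat.of A (M₂ ⧸ LinearMap.range f₁), ModuleCat.of A (LinearMap.ker f₄), 
    (LinearMap.range f₁).liftQ f₂ h₁.linearMap_ker_eq.ge, f₃.codRestrict _ (fun x => h₃.apply_apply_eq_zero x), h.coker _ m₁ m₂, h.ker _ m₄ m₅, ?_, ?_, ?_⟩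
  · rw [← LinearMap.ker_eq_bot]
    exact Submodule.ker_liftQ_eq_bot _ _ _ h₁.linearMap_ker_eq.le
  · rintro ⟨y, hy⟩
    obtain ⟨x, rfl⟩ := (h₃ y).1 hy
    exact ⟨x, rfl⟩
  · intro x
    constructor
    · intro hx
      obtain ⟨y, rfl⟩ := (h₂ x).1 (congrArg Subtype.val hx)
      exact ⟨Submodule.Quotient.mk y, rfl⟩
    · rintro ⟨y, rfl⟩
      obtain ⟨y, rfl⟩ := Submodule.Quotient.mk_surjective _ y
      apply Subtype.ext
      exact h₂.apply_apply_eq_zero y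

lemma five (h₁ : Function.Exact f₁ f₂) (h₂ : Function.Exact f₂ f₃) (h₃ : Function.Exact f₃ f₄) 
    (m₁ : ModuleCat.of A M₁ ∈ E) (m₂ : ModuleCat.of A M₂ ∈ E) (m₄ : ModuleCat.of A M₄ ∈ E) (m₅ : ModuleCat.of A M₅ ∈ E) 
    (hk : ∀ x ∈ b, ∀ m : M₃, x • m = 0) : ModuleCat.of A M₃ ∈ E := by
  obtain ⟨L, Q, f, g, hL, hQ, hf, hg, he⟩ := h.five_ext f₁ f₂ f₃ f₄ h₁ h₂ h₃ m₁ m₂ m₄ m₅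
  exact h.ext f g hf hg he hk hL hQ

end five

lemma ext_canon_aux (f : L →ₗ[A] N) (g : N →ₗ[A] Q) (hf : Function.Injective f) (hg : Function.Surjective g) (he : Function.Exact f g)
    (hL : ModuleCat.of A L ∈ E) (hQ : ModuleCat.of A Q ∈ E) (I : Ideal A) (hI : I.FG) : I ≤ b →
    ∃ S : Submodule A L, ModuleCat.of A S ∈ E ∧ S.map f = I • ⊤ := by
  induction I, hI using Submodule.fg_induction with
  | singleton x =>
    intro hx
    have hx' : x ∈ b := hx (Submodule.mem_span_singleton_self x)
    obtain ⟨ν, hν⟩ := exists_nu f g hg he x (h.killed hL x hx')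
    obtain ⟨ψ, hψ⟩ := exists_lift f g hf he ν (by
      intro p
      obtain ⟨n, rfl⟩ := hg p
      rw [hν, map_smul, h.killed hQ x hx'])
    refine ⟨LinearMap.range ψ, h.range ψ hQ hL, ?_⟩
    have : Ideal.span {x} • (⊤ : Submodule A N) = LinearMap.range (f ∘ₗ ψ) := by
      rw [Submodule.ideal_span_singleton_smul]
      ext n
      constructor
      · intro hn
        obtain ⟨m, -, rfl⟩ := (Submodule.mem_smul_pointwise_iff_exists _ _ _).1 hn
        exact ⟨g m, by simp [hψ, hν]⟩
      · rintro ⟨q, rfl⟩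
        obtain ⟨m, rfl⟩ := hg q
        rw [LinearMap.comp_apply, hψ, hν]
        exact Submodule.smul_mem_pointwise_smul _ _ _ trivial
    exact (LinearMap.range_comp ψ f).symm.trans this.symm
  | sup I J _ _ hI hJ =>
    intro hIJ
    obtain ⟨S, hS, eS⟩ := hI (le_sup_left.trans hIJ)
    obtain ⟨T, hT, eT⟩ := hJ (le_sup_right.trans hIJ)
    refine ⟨S ⊔ T, h.sup S T hL hS hT, ?_⟩
    rw [Submodule.map_sup, eS, eT]
    exact (Submodule.sup_smul I J ⊤).symm

omit h in
lemma quot_killed (x : A) (hx : x ∈ b) (m : N ⧸ (b • (⊤ : Submodule A N))) : x • m = 0 := by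
  obtain ⟨m, rfl⟩ := Submodule.Quotient.mk_surjective _ m
  rw [← Submodule.Quotient.mk_smul, Submodule.Quotient.mk_eq_zero]
  exact Submodule.smul_mem_smul hx trivial

lemma ext_canon (hb : b.FG) (hN : ModuleCat.of A N ∈ ExtC E) : ModuleCat.of A (b • (⊤ : Submodule A N) : Submodule A N) ∈ E ∧
    ModuleCat.of A (N ⧸ (b • (⊤ : Submodule A N))) ∈ E := by
  obtain ⟨L, Q, f, g, hL, hQ, hf, hg, he⟩ := hN
  change L →ₗ[A] N at f
  change N →ₗ[A] Q at g
  obtain ⟨S, hS, eS⟩ := h.ext_canon_aux f g hf hg he hL hQ b hb le_rfl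
  constructor
  · rw [← eS]
    exact h.iso (S.equivMapOfInjective f hf) hS
  · have hgb : b • (⊤ : Submodule A N) ≤ LinearMap.ker g := by
      rw [Submodule.smul_le]
      intro x hx n _
      rw [LinearMap.mem_ker, map_smul, h.killed hQ x hx]
    refine h.five S.subtype ((b • (⊤ : Submodule A N)).mkQ ∘ₗ f) ((b • (⊤ : Submodule A N)).liftQ g hgb) (0 : Q →ₗ[A] PUnit.{u+1}) ?_ ?_ ?_ 
      hS hL hQ h.zero quot_killed
    · intro l
      simp only [LinearMap.comp_apply, Submodule.mkQ_apply, Submodule.Quotient.mk_eq_zero, ← eS, Submodule.mem_map]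
      constructor
      · rintro ⟨s, hs, h2⟩
        rw [← hf h2]; exact ⟨⟨s, hs⟩, rfl⟩
      · rintro ⟨s, rfl⟩
        exact ⟨s, s.2, rfl⟩
    · intro n
      obtain ⟨n, rfl⟩ := Submodule.Quotient.mk_surjective _ n
      constructor
      · intro hn
        obtain ⟨l, rfl⟩ := (he n).1 hn
        exact ⟨l, rfl⟩
      · rintro ⟨l, hl⟩
        rw [← hl]
        exact he.apply_apply_eq_zero l
    · intro q
      refine ⟨fun _ => ?_, fun _ => rfl⟩
      obtain ⟨n, rfl⟩ := hg q
      exact ⟨Submodule.Quotient.mk n, rfl⟩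

end HW


namespace HW
variable {A : Type u} [CommRing A] {b : Ideal A} {E : Set (ModuleCat.{u} A)} (h : HW b E)
variable {L N Q P : Type u} [AddCommGroup L] [Module A L] [AddCommGroup N] [Module A N] [AddCommGroup Q] [Module A Q]
   [AddCommGroup P] [Module A P]

section snake
variable (φ : N →ₗ[A] P) (b)

lemma smul_top_le_comap : b • (⊤ : Submodule A N) ≤ (b • (⊤ : Submodule A P)).comap φ := by
  rw [Submodule.smul_le]
  intro x hx n _
  rw [Submodule.mem_comap, map_smul]
  exact Submodule.smul_mem_smul hx trivial

/-- restriction to `bN` -/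
def i1 : (b • (⊤ : Submodule A N) : Submodule A N) →ₗ[A] (b • (⊤ : Submodule A P) : Submodule A P) :=
  φ.restrict (smul_top_le_comap b φ)
/-- map on `N/bN` -/
def i3 : (N ⧸ (b • (⊤ : Submodule A N))) →ₗ[A] (P ⧸ (b • (⊤ : Submodule A P))) :=
  Submodule.mapQ _ _ φ (smul_top_le_comap b φ)

lemma ex (S : Submodule A N) : Function.Exact S.subtype S.mkQ := by
  intro x
  simp

lemma snake_aux : ∃ δ : LinearMap.ker (i3 b φ) →ₗ[A] ((b • (⊤ : Submodule A P) : Submodule A P) ⧸ LinearMap.range (i1 b φ)),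
    (∃ F : LinearMap.ker φ →ₗ[A] LinearMap.ker (i3 b φ), (∀ x, (F x : N ⧸ (b • (⊤ : Submodule A N))) = Submodule.Quotient.mk (x : N)) ∧ 
       Function.Exact F δ) ∧
    ∃ G : ((b • (⊤ : Submodule A P) : Submodule A P) ⧸ LinearMap.range (i1 b φ)) →ₗ[A] P ⧸ LinearMap.range φ,
      (∀ x : (b • (⊤ : Submodule A P) : Submodule A P), G (Submodule.Quotient.mk x) = Submodule.Quotient.mk (x : P)) ∧ Function.Exact δ G := by
  have hf := ex (b • (⊤ : Submodule A N))
  have hg := ex (b • (⊤ : Submodule A P))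
  have hι₃ : Function.Exact (LinearMap.ker (i3 b φ)).subtype (i3 b φ) := LinearMap.exact_subtype_ker_map _
  have hι₂ : Function.Exact (LinearMap.ker φ).subtype φ := LinearMap.exact_subtype_ker_map _
  have hπ₁ : Function.Exact (i1 b φ) (LinearMap.range (i1 b φ)).mkQ := LinearMap.exact_map_mkQ_range _
  have hπ₂ : Function.Exact φ (LinearMap.range φ).mkQ := LinearMap.exact_map_mkQ_range _
  have h₁ : (b • (⊤ : Submodule A P)).subtype.comp (i1 b φ) = φ.comp (b • (⊤ : Submodule A N)).subtype := rfl
  have h₂ : (b • (⊤ : Submodule A P)).mkQ.comp φ = (i3 b φ).comp (b • (⊤ : Submodule A N)).mkQ := rfl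
  have hs : Function.Surjective (b • (⊤ : Submodule A N)).mkQ := Submodule.mkQ_surjective _
  have hi : Function.Injective (b • (⊤ : Submodule A P)).subtype := Subtype.val_injective
  refine ⟨SnakeLemma.δ' (i1 b φ) φ (i3 b φ) _ _ hf _ _ hg h₁ h₂ _ hι₃ _ hπ₁ hs hi, ?_, ?_⟩
  · refine ⟨LinearMap.codRestrict _ ((b • (⊤ : Submodule A N)).mkQ ∘ₗ (LinearMap.ker φ).subtype) ?_, fun x => rfl, ?_⟩
    · rintro ⟨x, hx⟩
      have hx' : φ x = 0 := hx
      change (b • (⊤ : Submodule A P)).mkQ (φ x) = 0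
      rw [hx', map_zero]
    · exact SnakeLemma.exact_δ'_right (i1 b φ) φ (i3 b φ) _ _ hf _ _ hg h₁ h₂ _ hι₂ _ hι₃ _ hπ₁ hs hi _ rfl Subtype.val_injective
  · refine ⟨(LinearMap.range (i1 b φ)).liftQ ((LinearMap.range φ).mkQ ∘ₗ (b • (⊤ : Submodule A P)).subtype) ?_, fun x => rfl, ?_⟩
    · rintro _ ⟨x, rfl⟩
      change (LinearMap.range φ).mkQ (φ x) = 0
      rw [Submodule.mkQ_apply, Submodule.Quotient.mk_eq_zero]
      exact ⟨x, rfl⟩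
    · exact SnakeLemma.exact_δ'_left (i1 b φ) φ (i3 b φ) _ _ hf _ _ hg h₁ h₂ _ hι₃ _ hπ₁ _ hπ₂ hs hi _ rfl (Submodule.mkQ_surjective _)
end snake

include h

lemma ext_ker (hb : b.FG) (φ : N →ₗ[A] P) (hN : ModuleCat.of A N ∈ ExtC E) (hP : ModuleCat.of A P ∈ ExtC E) :
    ModuleCat.of A (LinearMap.ker φ) ∈ ExtC E := by
  obtain ⟨hN1, hN2⟩ := h.ext_canon hb hN
  obtain ⟨hP1, hP2⟩ := h.ext_canon hb hP
  obtain ⟨δ, ⟨F, hF, hδ⟩, -⟩ := snake_aux b φ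
  have hinc : ∀ x : LinearMap.ker (i1 b φ), (x : N) ∈ LinearMap.ker φ := by
    rintro ⟨x, hx⟩
    exact congrArg Subtype.val hx
  refine h.five_ext (0 : PUnit.{u+1} →ₗ[A] LinearMap.ker (i1 b φ)) 
    (LinearMap.codRestrict _ ((b • (⊤ : Submodule A N)).subtype ∘ₗ (LinearMap.ker (i1 b φ)).subtype) hinc) F δ ?_ ?_ hδ h.zero 
      (h.ker _ hN1 hP1) (h.ker _ hN2 hP2) (h.coker _ hN1 hP1)
  · intro x
    constructor
    · intro hx
      refine ⟨0, ?_⟩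
      apply Subtype.ext
      apply Subtype.ext
      exact (congrArg Subtype.val hx).symm
    · rintro ⟨y, rfl⟩
      exact map_zero _
  · intro x
    have e : F x = 0 ↔ (x : N) ∈ b • (⊤ : Submodule A N) := by
      rw [← Subtype.coe_inj, hF, ZeroMemClass.coe_zero, Submodule.Quotient.mk_eq_zero]
    rw [e]
    constructor
    · intro hx
      exact ⟨⟨⟨x, hx⟩, Subtype.ext x.2⟩, rfl⟩
    · rintro ⟨y, rfl⟩
      exact y.1.2

lemma ext_coker (hb : b.FG) (φ : N →ₗ[A] P) (hN : ModuleCat.of A N ∈ ExtC E) (hP : ModuleCat.of A P ∈ ExtC E) :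
    ModuleCat.of A (P ⧸ LinearMap.range φ) ∈ ExtC E := by
  obtain ⟨hN1, hN2⟩ := h.ext_canon hb hN
  obtain ⟨hP1, hP2⟩ := h.ext_canon hb hP
  obtain ⟨δ, -, ⟨G, hG, hδ⟩⟩ := snake_aux b φ
  refine h.five_ext δ G ((LinearMap.range φ).liftQ ((LinearMap.range (i3 b φ)).mkQ ∘ₗ (b • (⊤ : Submodule A P)).mkQ) ?_)
    (0 : _ →ₗ[A] PUnit.{u+1}) hδ ?_ ?_ (h.ker _ hN2 hP2) (h.coker _ hN1 hP1) (h.coker _ hN2 hP2) h.zero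
  · rintro _ ⟨x, rfl⟩
    change (LinearMap.range (i3 b φ)).mkQ (i3 b φ (Submodule.Quotient.mk x)) = 0
    rw [Submodule.mkQ_apply, Submodule.Quotient.mk_eq_zero]
    exact ⟨_, rfl⟩
  · intro x
    obtain ⟨x, rfl⟩ := Submodule.Quotient.mk_surjective _ x
    constructor
    · intro hx
      change (LinearMap.range (i3 b φ)).mkQ (Submodule.Quotient.mk x) = 0 at hx
      rw [Submodule.mkQ_apply, Submodule.Quotient.mk_eq_zero] at hx
      obtain ⟨n, hn⟩ := hx
      obtain ⟨n, rfl⟩ := Submodule.Quotient.mk_surjective _ n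
      change Submodule.Quotient.mk (φ n) = _ at hn
      rw [Submodule.Quotient.eq] at hn
      refine ⟨- Submodule.Quotient.mk ⟨_, hn⟩, ?_⟩
      rw [map_neg, hG, ← Submodule.Quotient.mk_neg, Submodule.Quotient.eq]
      exact ⟨-n, by rw [map_neg]; change -φ n = -(φ n - x) - x; abel⟩
    · rintro ⟨y, hy⟩
      obtain ⟨y, rfl⟩ := Submodule.Quotient.mk_surjective _ y
      rw [← hy, hG]
      change (LinearMap.range (i3 b φ)).mkQ (Submodule.Quotient.mk (y : P)) = 0
      rw [(Submodule.Quotient.mk_eq_zero _).2 y.2, map_zero]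
  · intro q
    refine ⟨fun _ => ?_, fun _ => rfl⟩
    obtain ⟨n, rfl⟩ := Submodule.Quotient.mk_surjective _ q
    obtain ⟨n, rfl⟩ := Submodule.Quotient.mk_surjective _ n
    exact ⟨Submodule.Quotient.mk n, rfl⟩

omit h in
lemma ext_pow (hN : ModuleCat.of A N ∈ ExtC E) (r : ℕ) (hpow : ∀ (M : ModuleCat.{u} A), M ∈ E → ModuleCat.of A (Fin r → M) ∈ E) :
    ModuleCat.of A (Fin r → N) ∈ ExtC E := by
  obtain ⟨L, Q, f, g, hL, hQ, hf, hg, he⟩ := hN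
  refine ⟨ModuleCat.of A (Fin r → L), ModuleCat.of A (Fin r → Q), f.compLeft _, g.compLeft _, hpow L hL, hpow Q hQ, ?_, ?_, ?_⟩
  · intro x y hxy
    ext i
    exact hf (congrFun hxy i)
  · intro y
    choose x hx using fun i => hg (y i)
    exact ⟨x, funext hx⟩
  · intro x
    constructor
    · intro hx
      choose y hy using fun i => (he (x i)).1 (congrFun hx i)
      exact ⟨y, funext hy⟩
    · rintro ⟨y, rfl⟩
      ext i
      exact he.apply_apply_eq_zero _

lemma ext_ext_aux (hb : b.FG) (f : L →ₗ[A] N) (g : N →ₗ[A] Q) (hf : Function.Injective f) (hg : Function.Surjective g) (he : Function.Exact f g)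
    (hk : ∀ x ∈ b * b, ∀ n : N, x • n = 0) (hL : ModuleCat.of A L ∈ E) (hQ : ModuleCat.of A Q ∈ ExtC E) :
    ModuleCat.of A N ∈ ExtC E := by
  obtain ⟨r, x, hx⟩ := Submodule.fg_iff_exists_fin_generating_family.1 hb
  have hxb : ∀ i, x i ∈ b := fun i => hx ▸ Submodule.subset_span ⟨i, rfl⟩
  choose ν hν using fun i => exists_nu f g hg he (x i) (h.killed hL _ (hxb i))
  have hsyz := h.ext_ker hb (mu x Q) (ext_pow hQ r (fun M hM => h.pow hM r)) hQ
  obtain ⟨-, hs2⟩ := h.ext_canon hb hsyz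
  obtain ⟨hQ1, hQ2⟩ := h.ext_canon hb hQ
  let V : (Fin r → Q) →ₗ[A] N := ∑ i, ν i ∘ₗ LinearMap.proj i
  have hV : ∀ n : Fin r → N, V (fun i => g (n i)) = mu x N n := by
    intro n
    simp [V, mu_apply, hν, LinearMap.sum_apply]
  have hgV : ∀ q : Fin r → Q, g (V q) = mu x Q q := by
    intro q
    choose n hn using fun i => hg (q i)
    have : q = fun i => g (n i) := (funext hn).symm
    rw [this, hV, mu_apply, mu_apply]
    simp
  obtain ⟨ψ, hψ⟩ := exists_lift f g hf he (V ∘ₗ (LinearMap.ker (mu x Q)).subtype) (by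
    rintro ⟨p, hp⟩
    exact (hgV p).trans hp)
  have hψb : b • (⊤ : Submodule A (LinearMap.ker (mu x Q))) ≤ LinearMap.ker ψ := by
    rw [Submodule.smul_le]
    intro y hy n _
    rw [LinearMap.mem_ker, map_smul, h.killed hL y hy]
  have hS := h.range (Submodule.liftQ _ ψ hψb) hs2 hL
  rw [Submodule.range_liftQ] at hS
  have key : ∀ l, l ∈ LinearMap.range ψ ↔ f l ∈ b • (⊤ : Submodule A N) := by
    intro l
    rw [← range_mu x b hx]
    constructor
    · rintro ⟨p, rfl⟩
      rw [hψ]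
      choose n hn using fun i => hg (p.1 i)
      refine ⟨n, ?_⟩
      rw [← hV]
      exact congrArg V (funext hn)
    · rintro ⟨n, hn⟩
      refine ⟨⟨fun i => g (n i), ?_⟩, ?_⟩
      · rw [LinearMap.mem_ker, ← hgV, hV, hn, he.apply_apply_eq_zero]
      · apply hf
        rw [hψ]
        exact (hV n).trans hn
  have hmap : (b • (⊤ : Submodule A N)).map g = b • (⊤ : Submodule A Q) := by
    rw [Submodule.map_smul'', Submodule.map_top, LinearMap.range_eq_top.2 hg]
  refine ⟨ModuleCat.of A (b • (⊤ : Submodule A N) : Submodule A N), ModuleCat.of A (N ⧸ (b • (⊤ : Submodule A N))), 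
    Submodule.subtype _, Submodule.mkQ _, ?_, ?_, Subtype.val_injective, Submodule.mkQ_surjective _, ex _⟩
  · refine h.ext (L := LinearMap.range ψ) (Q := (b • (⊤ : Submodule A Q) : Submodule A Q)) 
      (LinearMap.codRestrict _ (f ∘ₗ (LinearMap.range ψ).subtype) (fun l => (key l).1 l.2)) 
      (i1 b g) ?_ ?_ ?_ ?_ hS hQ1
    · intro l l' hl
      exact Subtype.ext (hf (congrArg Subtype.val hl))
    · rintro ⟨q, hq⟩
      rw [← hmap] at hq
      obtain ⟨n, hn, rfl⟩ := hq
      exact ⟨⟨n, hn⟩, rfl⟩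
    · rintro ⟨n, hn⟩
      constructor
      · intro h0
        obtain ⟨l, rfl⟩ := (he n).1 (congrArg Subtype.val h0)
        exact ⟨⟨l, (key l).2 hn⟩, rfl⟩
      · rintro ⟨l, hl⟩
        rw [← hl]
        exact Subtype.ext (he.apply_apply_eq_zero _)
    · rintro y hy ⟨n, hn⟩
      apply Subtype.ext
      change y • n = 0
      have : ∀ z ∈ b • (⊤ : Submodule A N), y • z = 0 := by
        intro z hz
        induction hz using Submodule.smul_induction_on' with
        | smul a ha n _ => rw [smul_smul]; exact hk _ (Ideal.mul_mem_mul hy ha) n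
        | add p _ q _ hp hq => rw [smul_add, hp, hq, add_zero]
      exact this n hn
  · refine h.five (LinearMap.range ψ).subtype ((b • (⊤ : Submodule A N)).mkQ ∘ₗ f) (i3 b g) 
      (0 : _ →ₗ[A] PUnit.{u+1}) ?_ ?_ ?_ hS hL hQ2 h.zero quot_killed
    · intro l
      simp only [LinearMap.comp_apply, Submodule.mkQ_apply, Submodule.Quotient.mk_eq_zero, ← key]
      simp
    · intro n
      obtain ⟨n, rfl⟩ := Submodule.Quotient.mk_surjective _ n
      constructor
      · intro hn
        change Submodule.Quotient.mk (g n) = 0 at hn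
        rw [Submodule.Quotient.mk_eq_zero, ← hmap] at hn
        obtain ⟨m, hm, hmn⟩ := hn
        obtain ⟨l, hl⟩ := (he (n - m)).1 (by rw [map_sub, hmn, sub_self])
        refine ⟨l, ?_⟩
        rw [LinearMap.comp_apply, hl, Submodule.mkQ_apply, Submodule.Quotient.eq]
        simpa using hm
      · rintro ⟨l, hl⟩
        rw [← hl]
        change Submodule.Quotient.mk (g (f l)) = 0
        rw [he.apply_apply_eq_zero, Submodule.Quotient.mk_zero]
    · intro q
      refine ⟨fun _ => ?_, fun _ => rfl⟩
      obtain ⟨q, rfl⟩ := Submodule.Quotient.mk_surjective _ q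
      obtain ⟨n, rfl⟩ := hg q
      exact ⟨Submodule.Quotient.mk n, rfl⟩

lemma extC_sup : E ⊆ ExtC E := by
  intro M hM
  refine ⟨ModuleCat.of A PUnit.{u+1}, M, 0, LinearMap.id, h.zero, hM, ?_, Function.surjective_id, ?_⟩
  · intro x y _; rfl
  · intro x
    constructor
    · intro hx; exact ⟨0, by rw [LinearMap.zero_apply]; exact hx.symm⟩
    · rintro ⟨y, rfl⟩; rfl

lemma ext_killed (hN : ModuleCat.of A N ∈ ExtC E) : ∀ x ∈ b * b, ∀ n : N, x • n = 0 := by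
  obtain ⟨L, Q, f, g, hL, hQ, hf, hg, he⟩ := hN
  change L →ₗ[A] N at f
  change N →ₗ[A] Q at g
  intro x hx n
  induction hx using Submodule.mul_induction_on' with
  | mem_mul_mem x hx y hy =>
    obtain ⟨l, hl⟩ := (he (y • n)).1 (by rw [map_smul]; exact h.killed hQ y hy _)
    rw [mul_smul, ← hl, ← map_smul]
    rw [h.killed hL x hx l, map_zero]
  | add x _ y _ hx hy => rw [add_smul, hx, hy, add_zero]

lemma ext_iso (e : N ≃ₗ[A] P) (hN : ModuleCat.of A N ∈ ExtC E) : ModuleCat.of A P ∈ ExtC E := by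
  obtain ⟨L, Q, f, g, hL, hQ, hf, hg, he⟩ := hN
  change L →ₗ[A] N at f
  change N →ₗ[A] Q at g
  refine ⟨L, Q, e.toLinearMap ∘ₗ f, g ∘ₗ e.symm.toLinearMap, hL, hQ, e.injective.comp hf, hg.comp e.symm.surjective, ?_⟩
  intro x
  constructor
  · intro hx
    obtain ⟨l, hl⟩ := (he (e.symm x)).1 hx
    exact ⟨l, by change e (f l) = x; rw [hl, e.apply_symm_apply]⟩
  · rintro ⟨l, rfl⟩
    change g (e.symm (e (f l))) = 0
    rw [e.symm_apply_apply, he.apply_apply_eq_zero]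

theorem ext_HW (hb : b.FG) : HW (b * b) (ExtC E) where
  iso e := h.ext_iso e
  zero := h.extC_sup h.zero
  ker φ hM hN := h.ext_ker hb φ hM hN
  coker φ hM hN := h.ext_coker hb φ hM hN
  killed hN := h.ext_killed hN
  ext {L N Q} _ _ _ _ _ _ f g hf hg he hk hL hQ := by
    obtain ⟨hL1, hL2⟩ := h.ext_canon hb hL
    -- N / bL
    let B : Submodule A N := (b • (⊤ : Submodule A L)).map f
    have hgB : B ≤ LinearMap.ker g := by
      rintro _ ⟨l, -, rfl⟩
      exact he.apply_apply_eq_zero l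
    have hfB : b • (⊤ : Submodule A L) ≤ B.comap f := fun l hl => ⟨l, hl, rfl⟩
    have h1 : ModuleCat.of A (N ⧸ B) ∈ ExtC E := by
      refine h.ext_ext_aux hb (Submodule.mapQ _ B f hfB) (B.liftQ g hgB) ?_ ?_ ?_ ?_ hL2 hQ
      · rw [← LinearMap.ker_eq_bot, LinearMap.ker_eq_bot']
        intro l hl
        obtain ⟨l, rfl⟩ := Submodule.Quotient.mk_surjective _ l
        change Submodule.Quotient.mk (f l) = 0 at hl
        rw [Submodule.Quotient.mk_eq_zero] at hl
        obtain ⟨l', hl', e⟩ := hl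
        rw [Submodule.Quotient.mk_eq_zero, ← hf e]
        exact hl'
      · intro q
        obtain ⟨n, rfl⟩ := hg q
        exact ⟨Submodule.Quotient.mk n, rfl⟩
      · intro n
        obtain ⟨n, rfl⟩ := Submodule.Quotient.mk_surjective _ n
        constructor
        · intro hn
          obtain ⟨l, rfl⟩ := (he n).1 hn
          exact ⟨Submodule.Quotient.mk l, rfl⟩
        · rintro ⟨l, hl⟩
          obtain ⟨l, rfl⟩ := Submodule.Quotient.mk_surjective _ l
          rw [← hl]
          exact he.apply_apply_eq_zero l
      · intro x hx n
        obtain ⟨n, rfl⟩ := Submodule.Quotient.mk_surjective _ n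
        rw [← Submodule.Quotient.mk_smul, hk x hx, Submodule.Quotient.mk_zero]
    have h2 : ModuleCat.of A B ∈ E := h.iso (Submodule.equivMapOfInjective f hf _) hL1
    exact h.ext_ext_aux hb B.subtype B.mkQ Subtype.val_injective (Submodule.mkQ_surjective _) (ex _) hk h2 h1

end HW


section WideHW
variable {A : Type u} [CommRing A] {C : Set (ModuleCat.{u} A)}

theorem IsWideSubcategory.hw (h : IsWideSubcategory C) (hne : C.Nonempty) : HW ⊥ C where
  iso e hM := h.mem_of_iso e.toModuleIso hM
  zero := by
    obtain ⟨M, hM⟩ := hne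
    have := h.kernel_mem (𝟙 M) hM hM
    have hz : IsZero (kernel (𝟙 M)) := isZero_kernel_of_mono _
    have hz' : IsZero (ModuleCat.of A PUnit.{u+1}) := ModuleCat.isZero_of_subsingleton _
    exact h.mem_of_iso (hz.iso hz') this
  ker f hM hN := h.mem_of_iso (ModuleCat.kernelIsoKer (ModuleCat.ofHom f)) (h.kernel_mem _ hM hN)
  coker f hM hN := h.mem_of_iso (ModuleCat.cokernelIsoRangeQuotient (ModuleCat.ofHom f)) (h.cokernel_mem _ hM hN)
  killed _ x hx m := by
    rw [Ideal.mem_bot] at hx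
    rw [hx, zero_smul]
  ext {L N Q} _ _ _ _ _ _ f g hf hg he _ hL hQ := by
    let S : ShortComplex (ModuleCat.{u} A) := ShortComplex.mk (ModuleCat.ofHom f) (ModuleCat.ofHom g) (by
      ext x; exact he.apply_apply_eq_zero x)
    exact h.extension_mem S (ModuleCat.shortComplex_shortExact S he hf hg) hL hQ

theorem HW.wide (h : HW ⊥ C) : IsWideSubcategory C where
  mem_of_iso {X Y} e hX := h.iso (M := X) (N := Y) e.toLinearEquiv hX
  kernel_mem {X Y} f hX hY := h.iso (M := LinearMap.ker f.hom) (N := (kernel f : ModuleCat.{u} A))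
    (ModuleCat.kernelIsoKer f).symm.toLinearEquiv (h.ker f.hom hX hY)
  cokernel_mem {X Y} f hX hY := h.iso (M := Y ⧸ LinearMap.range f.hom) (N := (cokernel f : ModuleCat.{u} A))
    (ModuleCat.cokernelIsoRangeQuotient f).symm.toLinearEquiv (h.coker f.hom hX hY)
  extension_mem S hS h₁ h₃ := h.ext (L := S.X₁) (N := S.X₂) (Q := S.X₃) S.f.hom S.g.hom hS.moduleCat_injective_f
    hS.moduleCat_surjective_g ((ShortComplex.ShortExact.moduleCat_exact_iff_function_exact S).1 hS.exact)
    (fun x hx m => by rw [Ideal.mem_bot] at hx; rw [hx, zero_smul]) h₁ h₃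
end WideHW

section Coh
variable {A : Type u} [CommRing A]

/-- every f.g. submodule is f.p. -/
def CohMod (A : Type u) [CommRing A] (M : Type u) [AddCommGroup M] [Module A M] : Prop :=
  ∀ K : Submodule A M, K.FG → Module.FinitePresentation A K

variable {L N Q : Type u} [AddCommGroup L] [Module A L] [AddCommGroup N] [Module A N] [AddCommGroup Q] [Module A Q]

lemma CohMod.of_exact (f : L →ₗ[A] N) (g : N →ₗ[A] Q) (hf : Function.Injective f) (he : Function.Exact f g) 
    (hL : CohMod A L) (hQ : CohMod A Q) : CohMod A N := by
  intro K hK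
  have := hQ (K.map g) (hK.map g)
  let g' : K →ₗ[A] K.map g := g.restrict (fun x hx => ⟨x, hx, rfl⟩)
  have hg' : Function.Surjective g' := by
    rintro ⟨_, x, hx, rfl⟩
    exact ⟨⟨x, hx⟩, rfl⟩
  have : Module.Finite A K := Module.Finite.iff_fg.2 hK
  have hk := Module.FinitePresentation.fg_ker g' hg'
  obtain ⟨t, ht⟩ := exists_lift f g hf he (K.subtype ∘ₗ (LinearMap.ker g').subtype) (fun p => by
    have := p.2
    rw [LinearMap.mem_ker] at this
    exact congrArg Subtype.val this)
  have hti : Function.Injective t := by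
    intro x y hxy
    have := congrArg f hxy
    rw [ht, ht] at this
    exact Subtype.ext (Subtype.ext this)
  have := hL (LinearMap.range t) (by
    have := Module.Finite.iff_fg.2 hk
    rw [← Module.Finite.iff_fg]; infer_instance)
  have : Module.FinitePresentation A (LinearMap.ker g') := .of_equiv (LinearEquiv.ofInjective t hti).symm
  exact Module.finitePresentation_of_ker g' hg'

lemma CohMod.quot (hN : CohMod A N) (f : N →ₗ[A] Q) (hf : Function.Surjective f) (hk : (LinearMap.ker f).FG) : CohMod A Q := by
  intro K hK
  have h1 : (K.comap f).FG := by
    refine Submodule.fg_of_fg_map_of_fg_inf_ker f ?_ ?_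
    · rwa [Submodule.map_comap_eq_of_surjective hf]
    · rwa [inf_eq_right.2]
      intro x hx
      rw [Submodule.mem_comap, hx]; exact zero_mem _
  have := hN _ h1
  let f' : K.comap f →ₗ[A] K := f.restrict (fun x hx => hx)
  refine Module.finitePresentation_of_surjective f' ?_ ?_
  · rintro ⟨x, hx⟩
    obtain ⟨y, rfl⟩ := hf x
    exact ⟨⟨y, hx⟩, rfl⟩
  · have : LinearMap.ker f' = (LinearMap.ker f).comap (K.comap f).subtype := by
      ext x
      rw [LinearMap.mem_ker, Submodule.mem_comap, LinearMap.mem_ker]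
      exact Subtype.ext_iff
    rw [this]
    refine Submodule.fg_of_fg_map_injective (K.comap f).subtype Subtype.val_injective ?_
    rwa [Submodule.map_comap_subtype, inf_eq_right.2]
    intro x hx
    rw [Submodule.mem_comap, hx]; exact zero_mem _

lemma CohMod.pi (h : IsLeftCoherentRing A) (n : ℕ) : CohMod A (Fin n → A) := by
  induction n with
  | zero => intro K _; infer_instance
  | succ n ih =>
    have hA : CohMod A A := h
    refine CohMod.of_exact (L := A) (Q := Fin n → A) ((Fin.consLinearEquiv A (fun _ : Fin (n+1) => A)).toLinearMap ∘ₗ LinearMap.inl A A _) 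
      (LinearMap.snd A A _ ∘ₗ (Fin.consLinearEquiv A (fun _ : Fin (n+1) => A)).symm.toLinearMap) ?_ ?_ hA ih
    · exact (Fin.consLinearEquiv A (fun _ : Fin (n+1) => A)).injective.comp LinearMap.inl_injective
    · intro x
      obtain ⟨⟨x, y⟩, rfl⟩ := (Fin.consLinearEquiv A (fun _ : Fin (n+1) => A)).surjective x
      rw [LinearMap.comp_apply, LinearEquiv.coe_coe, LinearEquiv.symm_apply_apply]
      constructor
      · intro h
        change y = 0 at h
        exact ⟨x, by rw [h]; rfl⟩
      · rintro ⟨z, hz⟩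
        have := (Fin.consLinearEquiv A (fun _ : Fin (n+1) => A)).injective hz
        exact (congrArg Prod.snd this).symm

lemma CohMod.of_fp (h : IsLeftCoherentRing A) [Module.FinitePresentation A N] : CohMod A N := by
  obtain ⟨n, K, e, hK⟩ := Module.FinitePresentation.exists_fin A N
  refine (CohMod.pi h n).quot (e.symm.toLinearMap ∘ₗ K.mkQ) (e.symm.surjective.comp K.mkQ_surjective) ?_
  rwa [LinearEquiv.ker_comp, Submodule.ker_mkQ]

theorem fp_hw (h : IsLeftCoherentRing A) : HW ⊥ (finPresModules A) where
  iso e hM := by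
    change Module.FinitePresentation A _ at hM
    exact .of_equiv e
  zero := by change Module.FinitePresentation A PUnit.{u+1}; infer_instance
  ker {M N} _ _ _ _ f hM hN := by
    change Module.FinitePresentation A M at hM
    change Module.FinitePresentation A N at hN
    change Module.FinitePresentation A (LinearMap.ker f)
    have := CohMod.of_fp (N := N) h (LinearMap.range f) (by rw [← Module.Finite.iff_fg]; infer_instance)
    have := Module.FinitePresentation.fg_ker f.rangeRestrict f.surjective_rangeRestrict
    rw [LinearMap.ker_rangeRestrict] at this
    exact CohMod.of_fp h _ this
  coker {M N} _ _ _ _ f hM hN := by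
    change Module.FinitePresentation A M at hM
    change Module.FinitePresentation A N at hN
    refine Module.finitePresentation_of_surjective (LinearMap.range f).mkQ (Submodule.mkQ_surjective _) ?_
    rw [Submodule.ker_mkQ, ← Module.Finite.iff_fg]; infer_instance
  killed _ x hx m := by
    rw [Ideal.mem_bot] at hx
    rw [hx, zero_smul]
  ext {L N Q} _ _ _ _ _ _ f g hf hg he _ hL hQ := by
    change Module.FinitePresentation A L at hL
    change Module.FinitePresentation A Q at hQ
    have : Module.FinitePresentation A (LinearMap.ker g) := .of_equiv 
      ((LinearEquiv.ofInjective f hf).trans (LinearEquiv.ofEq _ _ (LinearMap.exact_iff.1 he).symm))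
    exact Module.finitePresentation_of_ker g hg

lemma fp_wideLattice (h : IsLeftCoherentRing A) : finPresModules A ∈ wideLatticeFP A :=
  ⟨(fp_hw h).wide, ⟨_, (fp_hw h).zero⟩, subset_rfl⟩

variable (a : Ideal A)

lemma fp_quot_iff (ha : a.FG) [Module (A ⧸ a) N] [IsScalarTower A (A ⧸ a) N] : 
    Module.FinitePresentation (A ⧸ a) N ↔ Module.FinitePresentation A N := by
  have : Module.FinitePresentation A (A ⧸ a) := by
    refine Module.finitePresentation_of_surjective a.mkQ (Submodule.mkQ_surjective _) ?_
    rwa [Submodule.ker_mkQ]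
  refine ⟨fun h => Module.FinitePresentation.trans A N (A ⧸ a), fun h => ?_⟩
  have : Module.Finite (A ⧸ a) N := Module.Finite.of_restrictScalars_finite A _ _
  obtain ⟨n, f, hf⟩ := Module.Finite.exists_fin' (A ⧸ a) N
  refine Module.finitePresentation_of_surjective f hf ?_
  have := Module.FinitePresentation.fg_ker (f.restrictScalars A) hf
  exact Submodule.FG.of_restrictScalars (R := A) this

lemma coh_quot (h : IsLeftCoherentRing A) (ha : a.FG) : IsLeftCoherentRing (A ⧸ a) := by
  intro I hI
  have : Module.FinitePresentation A (A ⧸ a) := by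
    refine Module.finitePresentation_of_surjective a.mkQ (Submodule.mkQ_surjective _) ?_
    rwa [Submodule.ker_mkQ]
  have : Module.Finite (A ⧸ a) I := Module.Finite.iff_fg.2 hI
  have : Module.Finite A I := Module.Finite.trans (A ⧸ a) I
  rw [fp_quot_iff a ha]
  exact CohMod.of_fp h (I.restrictScalars A) (by rw [← Module.Finite.iff_fg]; exact ‹Module.Finite A I›)

/-- restriction of scalars of a class -/
def E0 (C : Set (ModuleCat.{u} (A ⧸ a))) : Set (ModuleCat.{u} A) :=
  {N | ∃ M ∈ C, ∃ e : M ≃+ N, ∀ (r : A) (m : M), e (Ideal.Quotient.mk a r • m) = r • e m}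

variable {a} {C : Set (ModuleCat.{u} (A ⧸ a))}

lemma E0_killed (hN : ModuleCat.of A N ∈ E0 a C) : ∀ x ∈ a, ∀ m : N, x • m = 0 := by
  obtain ⟨M, hM, e, he⟩ := hN
  intro x hx n
  obtain ⟨m, rfl⟩ := e.surjective n
  have := he x m
  rw [Ideal.Quotient.eq_zero_iff_mem.2 hx, zero_smul, map_zero] at this
  exact this.symm

lemma exists_str (hN : ∀ x ∈ a, ∀ m : N, x • m = 0) : ∃ (_ : Module (A ⧸ a) N), IsScalarTower A (A ⧸ a) N := by
  have ht : Module.IsTorsionBySet A N (a : Set A) := fun m x => hN x.1 x.2 m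
  exact ⟨ht.module, ht.isScalarTower⟩

lemma E0_iff [Module (A ⧸ a) N] [IsScalarTower A (A ⧸ a) N] (hC : HW ⊥ C) :
    ModuleCat.of A N ∈ E0 a C ↔ ModuleCat.of (A ⧸ a) N ∈ C := by
  have key : ∀ (r : A) (m : N), Ideal.Quotient.mk a r • m = r • m := fun r m => algebraMap_smul (A ⧸ a) r m
  constructor
  · rintro ⟨M, hM, e, he⟩
    change M ≃+ N at e
    refine hC.iso (M := M) { e with map_smul' := ?_ } hM
    intro r m
    obtain ⟨r, rfl⟩ := Ideal.Quotient.mk_surjective r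
    exact (he r m).trans (key r (e m)).symm
  · intro h
    exact ⟨_, h, AddEquiv.refl _, fun r m => key r m⟩

lemma E0_hw (hC : HW ⊥ C) : HW a (E0 a C) where
  iso {M N} _ _ _ _ e hM := by
    obtain ⟨M', hM', e', he⟩ := hM
    change M' ≃+ M at e'
    refine ⟨M', hM', e'.trans e.toAddEquiv, fun r m => ?_⟩
    change e (e' _) = r • e (e' m)
    rw [← map_smul]
    exact congrArg e (he r m)
  zero := ⟨_, hC.zero, AddEquiv.refl _, fun _ _ => rfl⟩
  ker {M N} _ _ _ _ f hM hN := by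
    obtain ⟨_, _⟩ := exists_str (E0_killed hM)
    obtain ⟨_, _⟩ := exists_str (E0_killed hN)
    rw [E0_iff hC] at hM hN
    exact (E0_iff (N := LinearMap.ker (LinearMap.extendScalarsOfSurjective (S := A ⧸ a) (Ideal.Quotient.mk_surjective) f)) hC).2 
      (hC.ker _ hM hN)
  coker {M N} _ _ _ _ f hM hN := by
    obtain ⟨_, _⟩ := exists_str (E0_killed hM)
    obtain ⟨_, _⟩ := exists_str (E0_killed hN)
    rw [E0_iff hC] at hM hN
    exact (E0_iff (N := N ⧸ LinearMap.range (LinearMap.extendScalarsOfSurjective (S := A ⧸ a) (Ideal.Quotient.mk_surjective) f)) hC).2 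
      (hC.coker _ hM hN)
  killed hM := E0_killed hM
  ext {L N Q} _ _ _ _ _ _ f g hf hg he hk hL hQ := by
    obtain ⟨_, _⟩ := exists_str (E0_killed hL)
    obtain ⟨_, _⟩ := exists_str (E0_killed hQ)
    obtain ⟨_, _⟩ := exists_str hk
    rw [E0_iff hC] at hL hQ ⊢
    exact hC.ext (LinearMap.extendScalarsOfSurjective (S := A ⧸ a) (Ideal.Quotient.mk_surjective) f) 
      (LinearMap.extendScalarsOfSurjective (S := A ⧸ a) (Ideal.Quotient.mk_surjective) g) hf hg he 
      (fun x hx m => by rw [Ideal.mem_bot] at hx; rw [hx, zero_smul]) hL hQ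

/-- iterated extensions -/
def Ej (C : Set (ModuleCat.{u} (A ⧸ a))) : ℕ → Set (ModuleCat.{u} A)
  | 0 => E0 a C
  | j+1 => ExtC (Ej C j)

/-- corresponding ideals -/
def bj (a : Ideal A) : ℕ → Ideal A
  | 0 => a
  | j+1 => bj a j * bj a j

lemma bj_fg (ha : a.FG) (j : ℕ) : (bj a j).FG := by
  induction j with
  | zero => exact ha
  | succ j ih => exact Submodule.FG.mul ih ih

lemma bj_le (j : ℕ) : bj a j ≤ a := by
  induction j with
  | zero => exact le_rfl
  | succ j ih => exact Ideal.mul_le_left.trans ih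

lemma Ej_hw (ha : a.FG) (hC : HW ⊥ C) (j : ℕ) : HW (bj a j) (Ej C j) := by
  induction j with
  | zero => exact E0_hw hC
  | succ j ih => exact ih.ext_HW (bj_fg ha j)

lemma Ej_mono (ha : a.FG) (hC : HW ⊥ C) : Monotone (Ej C) :=
  monotone_nat_of_le_succ fun j => (Ej_hw ha hC j).extC_sup

/-- the wide subcategory generated by restriction -/
def Cup (C : Set (ModuleCat.{u} (A ⧸ a))) : Set (ModuleCat.{u} A) := {M | ∃ j, M ∈ Ej C j}

lemma Cup_hw (ha : a.FG) (hC : HW ⊥ C) : HW ⊥ (Cup C) where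
  iso e := by
    rintro ⟨j, hj⟩
    exact ⟨j, (Ej_hw ha hC j).iso e hj⟩
  zero := ⟨0, (Ej_hw ha hC 0).zero⟩
  ker f := by
    rintro ⟨i, hi⟩ ⟨j, hj⟩
    exact ⟨max i j, (Ej_hw ha hC _).ker f (Ej_mono ha hC (le_max_left i j) hi) (Ej_mono ha hC (le_max_right i j) hj)⟩
  coker f := by
    rintro ⟨i, hi⟩ ⟨j, hj⟩
    exact ⟨max i j, (Ej_hw ha hC _).coker f (Ej_mono ha hC (le_max_left i j) hi) (Ej_mono ha hC (le_max_right i j) hj)⟩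
  killed _ x hx m := by
    rw [Ideal.mem_bot] at hx
    rw [hx, zero_smul]
  ext f g hf hg he hk := by
    rintro ⟨i, hi⟩ ⟨j, hj⟩
    exact ⟨max i j + 1, _, _, f, g, (Ej_mono ha hC (le_max_left i j) hi), (Ej_mono ha hC (le_max_right i j) hj), hf, hg, he⟩

lemma Cup_down (ha : a.FG) (hC : HW ⊥ C) (hN : ModuleCat.of A N ∈ Cup C) (hk : ∀ x ∈ a, ∀ m : N, x • m = 0) : 
    ModuleCat.of A N ∈ E0 a C := by
  obtain ⟨j, hj⟩ := hN
  induction j with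
  | zero => exact hj
  | succ j ih =>
    obtain ⟨L, Q, f, g, hL, hQ, hf, hg, he⟩ := hj
    exact ih ((Ej_hw ha hC j).ext (L := L) (N := N) (Q := Q) f g hf hg he (fun x hx => hk x (bj_le j hx)) hL hQ)

lemma Cup_fp (h : IsLeftCoherentRing A) (ha : a.FG) (hC : HW ⊥ C) (hfp : C ⊆ finPresModules (A ⧸ a)) : Cup C ⊆ finPresModules A := by
  rintro M ⟨j, hj⟩
  induction j generalizing M with
  | zero => 
    change ModuleCat.of A M ∈ E0 a C at hj
    obtain ⟨_, _⟩ := exists_str (E0_killed hj)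
    rw [E0_iff hC] at hj
    exact (fp_quot_iff a ha).1 (hfp hj)
  | succ j ih =>
    obtain ⟨L, Q, f, g, hL, hQ, hf, hg, he⟩ := hj
    exact (fp_hw h).ext (L := L) (N := M) (Q := Q) f g hf hg he (fun x hx m => by rw [Ideal.mem_bot] at hx; rw [hx, zero_smul])
      (ih hL) (ih hQ)
end Coh


section
variable {A : Type u} [CommRing A] [HasDerivedCategory.{w} (ModuleCat.{u} A)]

/-- homology -/
noncomputable abbrev hH (n : ℤ) (X : DerivedCategory (ModuleCat.{u} A)) : ModuleCat.{u} A :=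
  (DerivedCategory.homologyFunctor (ModuleCat.{u} A) n).obj X

/-- homology maps -/
noncomputable abbrev hM (n : ℤ) {X Y : DerivedCategory (ModuleCat.{u} A)} (f : X ⟶ Y) : hH n X →ₗ[A] hH n Y :=
  ((DerivedCategory.homologyFunctor (ModuleCat.{u} A) n).map f).hom

lemma hM_id (n : ℤ) (X : DerivedCategory (ModuleCat.{u} A)) (v : hH n X) : hM n (𝟙 X) v = v := by
  simp [hM]

lemma hM_comp (n : ℤ) {X Y Z : DerivedCategory (ModuleCat.{u} A)} (f : X ⟶ Y) (g : Y ⟶ Z) (v : hH n X) :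
    hM n (f ≫ g) v = hM n g (hM n f v) := by
  simp [hM]

/-- homology equivalence from iso -/
noncomputable def hE (n : ℤ) {X Y : DerivedCategory (ModuleCat.{u} A)} (e : X ≅ Y) : hH n X ≃ₗ[A] hH n Y :=
  ((DerivedCategory.homologyFunctor (ModuleCat.{u} A) n).mapIso e).toLinearEquiv

/-- homology of shift -/
noncomputable def hS (m n n' : ℤ) (h : m + n = n') (X : DerivedCategory (ModuleCat.{u} A)) : hH n (X⟦m⟧) ≃ₗ[A] hH n' X :=
  (((DerivedCategory.homologyFunctor (ModuleCat.{u} A) 0).shiftIso m n n' h).app X).toLinearEquiv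

lemma subsingleton_hH_of_isZero (n : ℤ) {X : DerivedCategory (ModuleCat.{u} A)} (h : IsZero X) : Subsingleton (hH n X) := by
  exact ModuleCat.subsingleton_of_isZero ((DerivedCategory.homologyFunctor (ModuleCat.{u} A) n).map_isZero h)

section LES
variable (T : Triangle (DerivedCategory (ModuleCat.{u} A))) (hT : T ∈ distTriang _)

/-- connecting map -/
noncomputable def hδ (n₀ n₁ : ℤ) (h : n₀ + 1 = n₁) : hH n₀ T.obj₃ →ₗ[A] hH n₁ T.obj₁ :=
  (DerivedCategory.HomologySequence.δ T n₀ n₁ h).hom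

include hT
lemma hex₂ (n : ℤ) : Function.Exact (hM n T.mor₁) (hM n T.mor₂) :=
  (ShortComplex.ShortExact.moduleCat_exact_iff_function_exact _).1 (DerivedCategory.HomologySequence.exact₂ T hT n)

lemma hex₃ (n₀ n₁ : ℤ) (h : n₀ + 1 = n₁) : Function.Exact (hM n₀ T.mor₂) (hδ T n₀ n₁ h) :=
  (ShortComplex.ShortExact.moduleCat_exact_iff_function_exact _).1 (DerivedCategory.HomologySequence.exact₃ T hT n₀ n₁ h)

lemma hex₁ (n₀ n₁ : ℤ) (h : n₀ + 1 = n₁) : Function.Exact (hδ T n₀ n₁ h) (hM n₁ T.mor₁) :=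
  (ShortComplex.ShortExact.moduleCat_exact_iff_function_exact _).1 (DerivedCategory.HomologySequence.exact₁ T hT n₀ n₁ h)
end LES

lemma bot_killed {M : Type*} [AddCommGroup M] [Module A M] : ∀ x ∈ (⊥ : Ideal A), ∀ m : M, x • m = 0 := by
  intro x hx m
  rw [Ideal.mem_bot] at hx
  rw [hx, zero_smul]

lemma HW.retract {C : Set (ModuleCat.{u} A)} (hC : HW ⊥ C) {M N : Type u} [AddCommGroup M] [Module A M] [AddCommGroup N] [Module A N]
    (i : M →ₗ[A] N) (r : N →ₗ[A] M) (h : ∀ m, r (i m) = m) (hN : ModuleCat.of A N ∈ C) : ModuleCat.of A M ∈ C := by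
  have hi : Function.Injective i := fun x y hxy => by rw [← h x, hxy, h]
  have h1 := hC.range (i ∘ₗ r) hN hN
  have h2 : LinearMap.range (i ∘ₗ r) = LinearMap.range i := by
    apply le_antisymm
    · exact LinearMap.range_comp_le_range _ _
    · rintro _ ⟨m, rfl⟩
      exact ⟨i m, by rw [LinearMap.comp_apply, h]⟩
  rw [h2] at h1
  exact hC.iso (LinearEquiv.ofInjective i hi).symm h1

theorem homClass_thick {C : Set (ModuleCat.{u} A)} (hC : HW ⊥ C) : 
    IsThickSubcategory {X : DerivedCategory (ModuleCat.{u} A) | ∀ n : ℤ, hH n X ∈ C} where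
  mem_of_iso {X Y} e hX n := hC.iso (M := hH n X) (N := hH n Y) (hE n e) (hX n)
  zero_mem n := by
    have := subsingleton_hH_of_isZero (A := A) n (isZero_zero _)
    exact hC.subsing (N := hH n (0 : DerivedCategory (ModuleCat.{u} A)))
  shift_mem X m hX n := hC.iso (M := hH (m + n) X) (N := hH n (X⟦m⟧)) (hS m n (m+n) rfl X).symm (hX _)
  ext₂ T hT h₁ h₃ n := hC.five (M₁ := hH (n - 1) T.obj₃) (M₂ := hH n T.obj₁) (M₃ := hH n T.obj₂) (M₄ := hH n T.obj₃) 
    (M₅ := hH (n+1) T.obj₁) (hδ T (n-1) n (by ring)) (hM n T.mor₁) (hM n T.mor₂) (hδ T n (n+1) rfl) 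
    (hex₁ T hT _ _ _) (hex₂ T hT _) (hex₃ T hT _ _ _) (h₃ _) (h₁ _) (h₃ _) (h₁ _) bot_killed
  retract_mem X Y i r h hY n := hC.retract (M := hH n X) (N := hH n Y) (hM n i) (hM n r) (fun m => by 
    rw [← hM_comp, h, hM_id]) (hY n)

theorem small_thick : IsThickSubcategory {X : DerivedCategory (ModuleCat.{u} A) | IsSmallObject X} where
  mem_of_iso e hX D hD h := hD.mem_of_iso e (hX D hD h)
  zero_mem _ hD _ := hD.zero_mem
  shift_mem X n hX D hD h := hD.shift_mem X n (hX D hD h)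
  ext₂ T hT h₁ h₃ D hD h := hD.ext₂ T hT (h₁ D hD h) (h₃ D hD h)
  retract_mem X Y i r hir hY D hD h := hD.retract_mem X Y i r hir (hY D hD h)

theorem IsThickSubcategory.inter {D D' : Set (DerivedCategory (ModuleCat.{u} A))} (h : IsThickSubcategory D) (h' : IsThickSubcategory D') :
    IsThickSubcategory (D ∩ D') where
  mem_of_iso e hX := ⟨h.mem_of_iso e hX.1, h'.mem_of_iso e hX.2⟩
  zero_mem := ⟨h.zero_mem, h'.zero_mem⟩
  shift_mem X n hX := ⟨h.shift_mem X n hX.1, h'.shift_mem X n hX.2⟩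
  ext₂ T hT h₁ h₃ := ⟨h.ext₂ T hT h₁.1 h₃.1, h'.ext₂ T hT h₁.2 h₃.2⟩
  retract_mem X Y i r hir hY := ⟨h.retract_mem X Y i r hir hY.1, h'.retract_mem X Y i r hir hY.2⟩

theorem fSet_mem {C : Set (ModuleCat.{u} A)} (hC : HW ⊥ C) : fSet C ∈ thickLatticeSmall.{w} A :=
  ⟨small_thick.inter (homClass_thick hC), fun _ hX => hX.1⟩

theorem IsThickSubcategory.ext₃ {D : Set (DerivedCategory (ModuleCat.{u} A))} (h : IsThickSubcategory D)
    (T : Triangle (DerivedCategory (ModuleCat.{u} A))) (hT : T ∈ distTriang _) (h₁ : T.obj₁ ∈ D) (h₂ : T.obj₂ ∈ D) : T.obj₃ ∈ D :=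
  h.ext₂ _ (rot_of_distTriang _ hT) h₂ (h.shift_mem _ 1 h₁)

theorem IsThickSubcategory.ext₁ {D : Set (DerivedCategory (ModuleCat.{u} A))} (h : IsThickSubcategory D)
    (T : Triangle (DerivedCategory (ModuleCat.{u} A))) (hT : T ∈ distTriang _) (h₂ : T.obj₂ ∈ D) (h₃ : T.obj₃ ∈ D) : T.obj₁ ∈ D :=
  h.ext₂ _ (inv_rot_of_distTriang _ hT) (h.shift_mem _ (-1) h₃) h₂

theorem IsThickSubcategory.biprod {D : Set (DerivedCategory (ModuleCat.{u} A))} (h : IsThickSubcategory D)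
    (X Y : DerivedCategory (ModuleCat.{u} A)) (hX : X ∈ D) (hY : Y ∈ D) : (X ⊞ Y) ∈ D :=
  h.ext₂ _ (binaryBiproductTriangle_distinguished X Y) hX hY

theorem bounded_thick : 
    IsThickSubcategory {X : DerivedCategory (ModuleCat.{u} A) | ∃ N : ℤ, ∀ n : ℤ, N < |n| → Subsingleton (hH n X)} where
  mem_of_iso {X Y} e := by
    rintro ⟨N, hN⟩
    refine ⟨N, fun n hn => ?_⟩
    have := hN n hn
    exact (hE n e).symm.toEquiv.subsingleton
  zero_mem := ⟨0, fun n _ => subsingleton_hH_of_isZero n (isZero_zero _)⟩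
  shift_mem X m := by
    rintro ⟨N, hN⟩
    refine ⟨N + |m|, fun n hn => ?_⟩
    have := hN (m + n) (by 
      have := abs_sub_abs_le_abs_sub n (-m)
      rw [abs_neg, sub_neg_eq_add, add_comm n m] at this
      linarith)
    exact (hS m n _ rfl X).toEquiv.subsingleton
  ext₂ T hT := by
    rintro ⟨N, hN⟩ ⟨N', hN'⟩
    refine ⟨max N N', fun n hn => ?_⟩
    have h1 := hN n (lt_of_le_of_lt (le_max_left _ _) hn)
    have h2 := hN' n (lt_of_le_of_lt (le_max_right _ _) hn)
    refine ⟨fun x y => ?_⟩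
    have key : ∀ x : hH n T.obj₂, x = 0 := fun x => by
      obtain ⟨y, rfl⟩ := (hex₂ T hT n x).1 (Subsingleton.elim _ _)
      rw [Subsingleton.elim y 0, map_zero]
    rw [key x, key y]
  retract_mem X Y i r h := by
    rintro ⟨N, hN⟩
    refine ⟨N, fun n hn => ?_⟩
    have := hN n hn
    refine ⟨fun x y => ?_⟩
    have key : ∀ x : hH n X, x = 0 := fun x => by
      rw [← hM_id n X x, ← h, hM_comp, Subsingleton.elim (hM n i x) 0, map_zero]
    rw [key x, key y]

/-- homology of Q -/
noncomputable def hQ (n : ℤ) (K : CochainComplex (ModuleCat.{u} A) ℤ) : hH n (DerivedCategory.Q.obj K) ≃ₗ[A] K.homology n :=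
  ((DerivedCategory.homologyFunctorFactors (ModuleCat.{u} A) n).app K).toLinearEquiv

/-- homology of Q as subquotient -/
noncomputable def hQ' (n : ℤ) (K : CochainComplex (ModuleCat.{u} A) ℤ) : 
    hH n (DerivedCategory.Q.obj K) ≃ₗ[A] (LinearMap.ker (K.sc' (n-1) n (n+1)).g.hom ⧸ LinearMap.range (K.sc' (n-1) n (n+1)).moduleCatToCycles) :=
  (hQ n K).trans (K.homologyIsoSc' (n-1) n (n+1) (by simp) (by simp) ≪≫ (K.sc' (n-1) n (n+1)).moduleCatHomologyIso).toLinearEquiv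

lemma sc_kill_iff (S : ShortComplex (ModuleCat.{u} A)) (x : A) :
    (∀ v : LinearMap.ker S.g.hom ⧸ LinearMap.range S.moduleCatToCycles, x • v = 0) ↔
      ∀ v : S.X₂, S.g.hom v = 0 → ∃ w : S.X₁, S.f.hom w = x • v := by
  constructor
  · intro h v hv
    have := h (Submodule.Quotient.mk ⟨v, hv⟩)
    rw [← Submodule.Quotient.mk_smul, Submodule.Quotient.mk_eq_zero] at this
    obtain ⟨w, hw⟩ := this
    exact ⟨w, congrArg Subtype.val hw⟩
  · intro h v
    obtain ⟨v, rfl⟩ := Submodule.Quotient.mk_surjective _ v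
    obtain ⟨w, hw⟩ := h v.1 v.2
    rw [← Submodule.Quotient.mk_smul, Submodule.Quotient.mk_eq_zero]
    exact ⟨w, Subtype.ext hw⟩

lemma kill_iff (n : ℤ) (K : CochainComplex (ModuleCat.{u} A) ℤ) (x : A) : 
    (∀ v : hH n (DerivedCategory.Q.obj K), x • v = 0) ↔ 
      ∀ v : K.X n, K.d n (n+1) v = 0 → ∃ w : K.X (n-1), K.d (n-1) n w = x • v := by
  have h1 : (∀ v : hH n (DerivedCategory.Q.obj K), x • v = 0) ↔ ∀ v : (LinearMap.ker (K.sc' (n-1) n (n+1)).g.hom ⧸ LinearMap.range (K.sc' (n-1) n (n+1)).moduleCatToCycles), x • v = 0 := by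
    constructor
    · intro h v
      obtain ⟨v, rfl⟩ := (hQ' n K).surjective v
      rw [← map_smul, h, map_zero]
    · intro h v
      apply (hQ' n K).injective
      rw [map_smul, map_zero]
      exact h _
  rw [h1, sc_kill_iff]
  exact Iff.rfl

lemma exists_scalar (x : A) (X : DerivedCategory (ModuleCat.{u} A)) : ∃ φ : X ⟶ X, ∀ n v, hM n φ v = x • v := by
  have key : ∀ K : CochainComplex (ModuleCat.{u} A) ℤ, ∃ φ : DerivedCategory.Q.obj K ⟶ DerivedCategory.Q.obj K, ∀ n v, hM n φ v = x • v := by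
    intro K
    refine ⟨DerivedCategory.Q.map (x • 𝟙 K), fun n v => ?_⟩
    apply (hQ n K).injective
    have h1 := DerivedCategory.homologyFunctorFactors_hom_naturality (x • 𝟙 K) n
    have h2 : HomologicalComplex.homologyMap (x • 𝟙 K) n = x • 𝟙 _ := by
      have : (HomologicalComplex.shortComplexFunctor (ModuleCat.{u} A) (ComplexShape.up ℤ) n).map (x • 𝟙 K) = x • 𝟙 _ := by
        ext <;> rfl
      change ShortComplex.homologyMap _ = _
      rw [this, ShortComplex.homologyMap_smul, ShortComplex.homologyMap_id]
      rfl
    rw [h2] at h1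
    have h3 := congrArg (fun f => f.hom v) h1
    rw [map_smul]
    exact h3
  obtain ⟨φ, hφ⟩ := key (DerivedCategory.Q.objPreimage X)
  let e := DerivedCategory.Q.objObjPreimageIso X
  refine ⟨e.inv ≫ φ ≫ e.hom, fun n v => ?_⟩
  rw [hM_comp, hM_comp, hφ, map_smul, ← hM_comp, e.inv_hom_id, hM_id]
end


section
variable {C : Type*} [Category C] [Preadditive C] [HasZeroObject C] [HasShift C ℤ] [∀ n : ℤ, (shiftFunctor C n).Additive]
  [Pretriangulated C]

lemma tri_retract (T : Triangle C) (hT : T ∈ distTriang C) {M N : C} (i : T.obj₁ ⟶ M) (r : M ⟶ T.obj₁) (h : i ≫ r = 𝟙 _)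
    (i' : T.obj₃ ⟶ N) (r' : N ⟶ T.obj₃) (h' : i' ≫ r' = 𝟙 _) :
    ∃ (W : C) (f : M ⟶ W) (g : W ⟶ N) (k : N ⟶ M⟦(1 : ℤ)⟧), Triangle.mk f g k ∈ distTriang C ∧ 
      ∃ (φ : T.obj₂ ⟶ W) (ψ : W ⟶ T.obj₂), φ ≫ ψ = 𝟙 _ := by
  obtain ⟨W, f, g, hW⟩ := distinguished_cocone_triangle₂ (r' ≫ T.mor₃ ≫ i⟦1⟧')
  obtain ⟨φ, hφ1, hφ2⟩ := complete_distinguished_triangle_morphism₂ T _ hT hW i i' (by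
    change T.mor₃ ≫ i⟦1⟧' = i' ≫ r' ≫ T.mor₃ ≫ i⟦1⟧'
    rw [reassoc_of% h'])
  obtain ⟨ψ, hψ1, hψ2⟩ := complete_distinguished_triangle_morphism₂ _ T hW hT r r' (by
    change (r' ≫ T.mor₃ ≫ i⟦1⟧') ≫ r⟦1⟧' = r' ≫ T.mor₃
    rw [Category.assoc, Category.assoc, ← Functor.map_comp, h, CategoryTheory.Functor.map_id, Category.comp_id])
  change T.obj₂ ⟶ W at φ
  change W ⟶ T.obj₂ at ψ
  change T.mor₁ ≫ φ = i ≫ f at hφ1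
  change T.mor₂ ≫ i' = φ ≫ g at hφ2
  change f ≫ ψ = r ≫ T.mor₁ at hψ1
  change g ≫ r' = ψ ≫ T.mor₂ at hψ2
  have hid : IsIso (φ ≫ ψ) := by
    let θ : T ⟶ T := { hom₁ := 𝟙 _, hom₂ := φ ≫ ψ, hom₃ := 𝟙 _, comm₁ := by
                        rw [reassoc_of% hφ1, hψ1, reassoc_of% h, Category.id_comp]
                       comm₂ := by 
                        rw [Category.assoc, ← hψ2, ← reassoc_of% hφ2, h'] }
    exact isIso₂_of_isIso₁₃ θ hT hT (by dsimp [θ]; infer_instance) (by dsimp [θ]; infer_instance)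
  exact ⟨W, f, g, _, hW, φ, ψ ≫ inv (φ ≫ ψ), by rw [← Category.assoc, IsIso.hom_inv_id]⟩

lemma iso_cone_inr (X X' Z : C) (v : X ⊞ X' ⟶ Z) (w : Z ⟶ X'⟦(1 : ℤ)⟧) (hZ : Triangle.mk (biprod.inr : X' ⟶ X ⊞ X') v w ∈ distTriang C) :
    Nonempty (Z ≅ X) :=
  ⟨Triangle.π₃.mapIso (isoTriangleOfIso₁₂ _ _ hZ (binaryBiproductTriangle_distinguished X' X) (Iso.refl _) 
      (biprod.braiding X X') (by
        change (biprod.inr : X' ⟶ X ⊞ X') ≫ (biprod.braiding X X').hom = 𝟙 X' ≫ biprod.inl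
        rw [Category.id_comp]
        ext <;> simp))⟩

lemma oct_cone [IsTriangulated C] (X X' W : C) (v : X ⊞ X' ⟶ W) (w : W ⟶ (X ⊞ X')⟦(1 : ℤ)⟧) 
    (hW : Triangle.mk (biprod.snd ≫ biprod.inr : X ⊞ X' ⟶ X ⊞ X') v w ∈ distTriang C) :
    (∃ (Z : C) (_ : Nonempty (Z ≅ X)) (a : X⟦(1 : ℤ)⟧ ⟶ W) (b : W ⟶ Z) (c : Z ⟶ X⟦(1 : ℤ)⟧⟦(1 : ℤ)⟧), Triangle.mk a b c ∈ distTriang C) ∧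
    ∃ (φ : X⟦(1 : ℤ)⟧ ⟶ W) (ψ : W ⟶ X⟦(1 : ℤ)⟧), φ ≫ ψ = 𝟙 _ := by
  constructor
  · obtain ⟨Z, v23, w23, hZ⟩ := distinguished_cocone_triangle (biprod.inr : X' ⟶ X ⊞ X')
    have o := Triangulated.someOctahedron rfl (rot_of_distTriang _ (binaryBiproductTriangle_distinguished X X')) hZ hW
    exact ⟨Z, iso_cone_inr _ _ _ _ _ hZ, _, _, _, o.mem⟩
  · obtain ⟨φ, hφ1, hφ2⟩ := complete_distinguished_triangle_morphism _ _ (contractible_distinguished₂ X) hW biprod.inl 0 (by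
      change (0 : X ⟶ 0) ≫ (0 : 0 ⟶ X ⊞ X') = biprod.inl ≫ biprod.snd ≫ biprod.inr
      simp)
    refine ⟨φ, w ≫ biprod.fst⟦1⟧', ?_⟩
    change X⟦(1 : ℤ)⟧ ⟶ W at φ
    change 𝟙 _ ≫ (biprod.inl : X ⟶ X ⊞ X')⟦(1 : ℤ)⟧' = φ ≫ w at hφ2
    rw [Category.id_comp] at hφ2
    rw [← reassoc_of% hφ2, ← Functor.map_comp]; simp

lemma exists_compl {X M : C} (i : X ⟶ M) (r : M ⟶ X) (h : i ≫ r = 𝟙 X) : ∃ X' : C, Nonempty (M ≅ X ⊞ X') := by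
  obtain ⟨X', v, δ, hT⟩ := distinguished_cocone_triangle i
  have hm : Mono i := by
    have : Mono (i ≫ r) := by rw [h]; infer_instance
    exact mono_of_mono i r
  obtain ⟨e, -, -⟩ := exists_iso_binaryBiproduct_of_distTriang _ hT (Triangle.mor₃_eq_zero_of_mono₁ _ hT hm)
  exact ⟨X', ⟨e⟩⟩
end

section
variable {A : Type u} [CommRing A]

/-- bounded complexes of finite free modules -/
def IsFF (L : CochainComplex (ModuleCat.{u} A) ℤ) : Prop :=
  (∃ N : ℤ, ∀ n, N < |n| → Subsingleton (L.X n)) ∧ ∀ n, Module.Free A (L.X n) ∧ Module.Finite A (L.X n)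

lemma IsFF.kproj {L : CochainComplex (ModuleCat.{u} A) ℤ} (h : IsFF L) : L.IsKProjective := by
  obtain ⟨⟨N, hN⟩, hf⟩ := h
  have h1 : L.IsStrictlyLE N := by
    rw [CochainComplex.isStrictlyLE_iff]
    intro i hi
    have := hN i (lt_of_lt_of_le hi (le_abs_self _))
    exact ModuleCat.isZero_of_subsingleton _
  have h2 : ∀ n, Projective (L.X n) := fun n => by
    have := (hf n).1
    exact (IsProjective.iff_projective (L.X n)).1 inferInstance
  exact CochainComplex.isKProjective_of_projective L N

lemma IsFF.single : IsFF ((HomologicalComplex.single (ModuleCat.{u} A) (ComplexShape.up ℤ) 0).obj (ModuleCat.of A A)) := by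
  have h0 : ∀ n : ℤ, n ≠ 0 → Subsingleton (((HomologicalComplex.single (ModuleCat.{u} A) (ComplexShape.up ℤ) 0).obj (ModuleCat.of A A)).X n) :=
    fun n hn => ModuleCat.subsingleton_of_isZero (HomologicalComplex.isZero_single_obj_X _ _ _ _ hn)
  refine ⟨⟨0, fun n hn => h0 n (by rintro rfl; simp at hn)⟩, fun n => ?_⟩
  by_cases hn : n = 0
  · subst hn
    let e := (HomologicalComplex.singleObjXSelf (ComplexShape.up ℤ) 0 (ModuleCat.of A A)).toLinearEquiv
    exact ⟨Module.Free.of_equiv e.symm, Module.Finite.equiv e.symm⟩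
  · have := h0 n hn
    exact ⟨inferInstance, inferInstance⟩

lemma IsFF.shift {L : CochainComplex (ModuleCat.{u} A) ℤ} (h : IsFF L) (m : ℤ) : IsFF (L⟦m⟧) := by
  obtain ⟨⟨N, hN⟩, hf⟩ := h
  refine ⟨⟨N + |m|, fun n hn => hN (n + m) ?_⟩, fun n => hf (n + m)⟩
  have := abs_sub_abs_le_abs_sub n (-m)
  rw [abs_neg, sub_neg_eq_add] at this
  linarith

lemma IsFF.cone {L L' : CochainComplex (ModuleCat.{u} A) ℤ} (h : IsFF L) (h' : IsFF L') (f : L ⟶ L') :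
    IsFF (CochainComplex.mappingCone f) := by
  have e : ∀ n, Nonempty ((CochainComplex.mappingCone f).X n ≃ₗ[A] (L.X (n+1) × L'.X n)) := fun n =>
    ⟨((HomologicalComplex.homotopyCofiber.XIsoBiprod f n (n+1) rfl) ≪≫ ModuleCat.biprodIsoProd _ _).toLinearEquiv⟩
  obtain ⟨⟨N, hN⟩, hf⟩ := h
  obtain ⟨⟨N', hN'⟩, hf'⟩ := h'
  refine ⟨⟨max (N+1) N', fun n hn => ?_⟩, fun n => ?_⟩
  · obtain ⟨e⟩ := e n
    have h1 := hN (n+1) (by 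
      have := abs_sub_abs_le_abs_sub n (-1)
      rw [abs_neg, sub_neg_eq_add, abs_one] at this
      have := lt_of_le_of_lt (le_max_left _ _) hn
      linarith)
    have h2 := hN' n (lt_of_le_of_lt (le_max_right _ _) hn)
    exact e.toEquiv.subsingleton
  · obtain ⟨e⟩ := e n
    have := (hf (n+1)).1
    have := (hf (n+1)).2
    have := (hf' n).1
    have := (hf' n).2
    exact ⟨Module.Free.of_equiv e.symm, Module.Finite.equiv e.symm⟩

variable [HasDerivedCategory.{w} (ModuleCat.{u} A)]

/-- objects represented by bounded finite free complexes -/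
def FFset (A : Type u) [CommRing A] [HasDerivedCategory.{w} (ModuleCat.{u} A)] : Set (DerivedCategory (ModuleCat.{u} A)) :=
  {Z | ∃ L, IsFF L ∧ Nonempty (DerivedCategory.Q.obj L ≅ Z)}

lemma FFset.iso {X Y : DerivedCategory (ModuleCat.{u} A)} (e : X ≅ Y) (h : X ∈ FFset A) : Y ∈ FFset A := by
  obtain ⟨L, hL, ⟨e'⟩⟩ := h
  exact ⟨L, hL, ⟨e' ≪≫ e⟩⟩

lemma FFset.shift (X : DerivedCategory (ModuleCat.{u} A)) (m : ℤ) (h : X ∈ FFset A) : X⟦m⟧ ∈ FFset A := by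
  obtain ⟨L, hL, ⟨e'⟩⟩ := h
  exact ⟨L⟦m⟧, hL.shift m, ⟨(DerivedCategory.Q.commShiftIso m).app L ≪≫ (shiftFunctor _ m).mapIso e'⟩⟩

lemma exists_Q_map {L L' : CochainComplex (ModuleCat.{u} A) ℤ} (h : IsFF L) 
    (φ : DerivedCategory.Q.obj L ⟶ DerivedCategory.Q.obj L') : ∃ f : L ⟶ L', DerivedCategory.Q.map f = φ := by
  have := h.kproj
  obtain ⟨g, hg⟩ := (CochainComplex.IsKProjective.Qh_map_bijective L ((HomotopyCategory.quotient _ _).obj L')).surjective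
    ((DerivedCategory.quotientCompQhIso (ModuleCat.{u} A)).hom.app L ≫ φ ≫ (DerivedCategory.quotientCompQhIso (ModuleCat.{u} A)).inv.app L')
  obtain ⟨f, rfl⟩ := (HomotopyCategory.quotient (ModuleCat.{u} A) (ComplexShape.up ℤ)).map_surjective g
  refine ⟨f, ?_⟩
  have h1 := (DerivedCategory.quotientCompQhIso (ModuleCat.{u} A)).hom.naturality f
  rw [Functor.comp_map, hg] at h1
  simpa using h1.symm

lemma FFset.cone (T : Triangle (DerivedCategory (ModuleCat.{u} A))) (hT : T ∈ distTriang _) (h₁ : T.obj₁ ∈ FFset A)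
    (h₂ : T.obj₂ ∈ FFset A) : T.obj₃ ∈ FFset A := by
  obtain ⟨L, hL, ⟨e⟩⟩ := h₁
  obtain ⟨L', hL', ⟨e'⟩⟩ := h₂
  obtain ⟨f, hf⟩ := exists_Q_map hL (e.hom ≫ T.mor₁ ≫ e'.inv)
  refine ⟨_, hL.cone hL' f, ⟨?_⟩⟩
  exact Triangle.π₃.mapIso (isoTriangleOfIso₁₂ _ _ (DerivedCategory.mappingCone_triangle_distinguished f) hT e e' (by
    change DerivedCategory.Q.map f ≫ _ = _
    rw [hf, Category.assoc, Category.assoc, Iso.inv_hom_id, Category.comp_id]; rfl))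

lemma FFset.cocone (T : Triangle (DerivedCategory (ModuleCat.{u} A))) (hT : T ∈ distTriang _) (h₁ : T.obj₁ ∈ FFset A)
    (h₃ : T.obj₃ ∈ FFset A) : T.obj₂ ∈ FFset A := 
  FFset.cone _ (inv_rot_of_distTriang _ hT) (FFset.shift _ _ h₃) h₁

lemma FFset.single : (DerivedCategory.singleFunctor (ModuleCat.{u} A) 0).obj (ModuleCat.of A A) ∈ FFset A :=
  ⟨_, IsFF.single, ⟨Iso.refl _⟩⟩

theorem FF_retract_thick : IsThickSubcategory {X : DerivedCategory (ModuleCat.{u} A) | 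
    ∃ M ∈ FFset A, ∃ (i : X ⟶ M) (r : M ⟶ X), i ≫ r = 𝟙 X} where
  mem_of_iso {X Y} e := by
    rintro ⟨M, hM, i, r, h⟩
    exact ⟨M, hM, e.inv ≫ i, r ≫ e.hom, by simp [reassoc_of% h]⟩
  zero_mem := ⟨_, FFset.single, 0, 0, (isZero_zero _).eq_of_src _ _⟩
  shift_mem X n := by
    rintro ⟨M, hM, i, r, h⟩
    exact ⟨_, FFset.shift M n hM, i⟦n⟧', r⟦n⟧', by rw [← Functor.map_comp, h, CategoryTheory.Functor.map_id]⟩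
  ext₂ T hT := by
    rintro ⟨M, hM, i, r, h⟩ ⟨N, hN, i', r', h'⟩
    obtain ⟨W, f, g, k, hW, φ, ψ, e⟩ := tri_retract T hT i r h i' r' h'
    exact ⟨W, FFset.cocone _ hW hM hN, φ, ψ, e⟩
  retract_mem X Y i r h := by
    rintro ⟨M, hM, i', r', h'⟩
    exact ⟨M, hM, i ≫ i', r' ≫ r, by simp [reassoc_of% h', h]⟩

theorem exists_FF (X : DerivedCategory (ModuleCat.{u} A)) (hX : IsSmallObject X) :
    ∃ L, IsFF L ∧ ∀ D, IsThickSubcategory D → (X ∈ D ↔ DerivedCategory.Q.obj L ∈ D) := by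
  obtain ⟨M, hM, i, r, hir⟩ := hX _ FF_retract_thick ⟨_, FFset.single, 𝟙 _, 𝟙 _, by simp⟩
  obtain ⟨X', ⟨e⟩⟩ := exists_compl i r hir
  have hM' : (X ⊞ X') ∈ FFset A := FFset.iso e hM
  obtain ⟨W, v13, w13, hW⟩ := distinguished_cocone_triangle (biprod.snd ≫ biprod.inr : X ⊞ X' ⟶ X ⊞ X')
  have hWF : W ∈ FFset A := FFset.cone _ hW hM' hM'
  obtain ⟨L, hL, ⟨eL⟩⟩ := hWF
  obtain ⟨⟨Z, ⟨eZ⟩, a, b, c, hZ⟩, φ, ψ, hφ⟩ := oct_cone X X' W v13 w13 hW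
  refine ⟨L, hL, fun D hD => ⟨fun h => ?_, fun h => ?_⟩⟩
  · exact hD.mem_of_iso eL.symm (hD.ext₂ _ hZ (hD.shift_mem X 1 h) (hD.mem_of_iso eZ.symm h))
  · have h1 := hD.retract_mem _ W φ ψ hφ (hD.mem_of_iso eL h)
    exact hD.mem_of_iso (shiftShiftNeg X 1) (hD.shift_mem _ (-1) h1)

theorem kill_thick (x : A) : IsThickSubcategory {X : DerivedCategory (ModuleCat.{u} A) | ∃ m : ℕ, ∀ n, ∀ v : hH n X, x ^ m • v = 0} where
  mem_of_iso {X Y} e := by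
    rintro ⟨m, hm⟩
    refine ⟨m, fun n v => ?_⟩
    apply (hE n e).symm.injective
    rw [map_smul, hm, map_zero]
  zero_mem := ⟨0, fun n v => by
    have := subsingleton_hH_of_isZero (A := A) n (isZero_zero _)
    exact Subsingleton.elim _ _⟩
  shift_mem X k := by
    rintro ⟨m, hm⟩
    refine ⟨m, fun n v => ?_⟩
    apply (hS k n _ rfl X).injective
    rw [map_smul, hm, map_zero]
  ext₂ T hT := by
    rintro ⟨m, hm⟩ ⟨m', hm'⟩
    refine ⟨m + m', fun n v => ?_⟩
    obtain ⟨y, hy⟩ := (hex₂ T hT n (x ^ m' • v)).1 (by rw [map_smul, hm'])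
    rw [pow_add, mul_smul, ← hy, ← map_smul, hm, map_zero]
  retract_mem X Y i r h := by
    rintro ⟨m, hm⟩
    refine ⟨m, fun n v => ?_⟩
    rw [← hM_id n X (x ^ m • v), ← h, hM_comp, map_smul, hm, map_zero]
end


section
variable {A : Type u} [CommRing A]

section realize
variable (L : CochainComplex (ModuleCat.{u} A) ℤ) (N : ℤ) (hN : ∀ n, N < |n| → Subsingleton (L.X n)) 
  (r : ℤ → ℕ) (b : ∀ k, Module.Basis (Fin (r k)) A (L.X k))

/-- transport between graded pieces -/
noncomputable def trX (k k' : ℤ) : L.X k →ₗ[A] L.X k' :=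
  open Classical in if h : k = k' then (L.XIsoOfEq h).hom.hom else 0

lemma trX_self (k : ℤ) (v : L.X k) : trX L k k v = v := by
  simp [trX]

lemma trX_ne {k k' : ℤ} (h : k ≠ k') (v : L.X k) : trX L k k' v = 0 := by
  simp [trX, h]

/-- index set -/
abbrev IxR (N : ℤ) (r : ℤ → ℕ) : Type := Σ k : (Finset.Icc (-N) N), Fin (r k)

/-- the matrix complex of a bounded finite free complex -/
noncomputable def mcOf : MC A (IxR N r) where
  deg x := x.1
  d := Matrix.of fun x y => (b x.1).repr (L.d y.1 x.1 (b y.1 y.2)) x.2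
  hd x y h := by
    by_contra hne
    apply h
    rw [Matrix.of_apply, L.shape _ _ (fun e => hne (e : (y.1 : ℤ) + 1 = x.1).symm)]
    simp
  dd := by
    ext x z
    rw [Matrix.mul_apply, Fintype.sum_sigma, Matrix.zero_apply]
    refine Finset.sum_eq_zero fun k _ => ?_
    have h1 : ∑ i, (b k).repr (L.d z.1 k (b z.1 z.2)) i • (L.d k x.1 (b k i)) = 0 := by
      have h2 := congrArg (L.d k x.1).hom ((b k).sum_repr (L.d z.1 k (b z.1 z.2)))
      rw [map_sum] at h2
      simp only [map_smul] at h2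
      refine h2.trans ?_
      have h3 := congrArg (fun f => f.hom (b z.1 z.2)) (L.d_comp_d z.1 k x.1)
      exact h3
    have h2 := congrArg (fun v => (b x.1).repr v x.2) h1
    simp only [map_sum, map_smul, Finsupp.coe_finset_sum, Finset.sum_apply, Finsupp.smul_apply, smul_eq_mul, map_zero, Finsupp.zero_apply] at h2
    rw [← h2]
    exact Finset.sum_congr rfl fun i _ => mul_comm _ _

/-- components -/
noncomputable def phiR (k : ℤ) : (IxR N r → A) →ₗ[A] L.X k :=
  (mcOf L N r b).gc.b.constr A (fun y => trX L y.1 k (b y.1 y.2))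

lemma phiR_b (k : ℤ) (y : IxR N r) : phiR L N r b k ((mcOf L N r b).gc.b y) = trX L y.1 k (b y.1 y.2) :=
  Module.Basis.constr_basis _ _ _ _

include hN in
lemma mem_Icc_or (k : ℤ) : k ∈ Finset.Icc (-N) N ∨ Subsingleton (L.X k) := by
  by_cases h : N < |k|
  · exact Or.inr (hN k h)
  · left
    rw [Finset.mem_Icc]
    exact abs_le.1 (not_lt.1 h)

include hN in
lemma phiR_D (k : ℤ) (v : IxR N r → A) (hv : v ∈ (mcOf L N r b).gc.gr Set.univ k) :
    phiR L N r b (k+1) ((mcOf L N r b).gc.D v) = (L.d k (k+1)).hom (phiR L N r b k v) := by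
  have : ((phiR L N r b (k+1) ∘ₗ (mcOf L N r b).gc.D) - (L.d k (k+1)).hom ∘ₗ phiR L N r b k) v ∈ (⊥ : Submodule A (L.X (k+1))) := by
    refine GC.sp_map _ _ ?_ hv
    rintro y ⟨-, hy⟩
    rw [Submodule.mem_bot, LinearMap.sub_apply, sub_eq_zero, LinearMap.comp_apply, LinearMap.comp_apply, phiR_b,
      MC.gc_D, map_sum, Fintype.sum_sigma]
    rcases mem_Icc_or L N hN (k+1) with hk | hk
    swap
    · exact Subsingleton.elim _ _
    change (y.1 : ℤ) = k at hy
    subst hy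
    rw [trX_self, Finset.sum_eq_single ⟨_, hk⟩]
    · refine Eq.trans ?_ ((b (y.1+1)).sum_repr (L.d y.1 (y.1+1) (b y.1 y.2)))
      refine Finset.sum_congr rfl fun i _ => ?_
      rw [map_smul, phiR_b, trX_self]
      rfl
    · intro k' _ hk'
      refine Finset.sum_eq_zero fun i _ => ?_
      rw [map_smul, phiR_b, trX_ne, smul_zero]
      exact fun e => hk' (Subtype.ext e)
    · simp
  rw [Submodule.mem_bot, LinearMap.sub_apply, sub_eq_zero] at this
  exact this

include hN in
lemma phiR_surj (k : ℤ) (v : L.X k) : ∃ w ∈ (mcOf L N r b).gc.gr Set.univ k, phiR L N r b k w = v := by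
  rcases mem_Icc_or L N hN k with hk | hk
  swap
  · exact ⟨0, Submodule.zero_mem _, Subsingleton.elim _ _⟩
  refine ⟨∑ i, (b k).repr v i • (mcOf L N r b).gc.b ⟨⟨k, hk⟩, i⟩, ?_, ?_⟩
  · exact Submodule.sum_mem _ fun i _ => Submodule.smul_mem _ _ (GC.b_mem _ ⟨trivial, rfl⟩)
  · rw [map_sum]
    refine Eq.trans ?_ ((b k).sum_repr v)
    refine Finset.sum_congr rfl fun i _ => ?_
    rw [map_smul, phiR_b, trX_self]

lemma phiR_inj (k : ℤ) (w : IxR N r → A) (hw : w ∈ (mcOf L N r b).gc.gr Set.univ k) (h : phiR L N r b k w = 0) : w = 0 := by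
  apply (mcOf L N r b).gc.b.ext_elem
  intro x
  rw [map_zero, Finsupp.zero_apply]
  by_contra hne
  have hx : (x.1 : ℤ) = k := (((mcOf L N r b).gc.mem_sp).1 hw x hne).2
  subst hx
  apply hne
  have h0 : ((mcOf L N r b).gc.b.coord x - (b x.1).coord x.2 ∘ₗ phiR L N r b x.1) w ∈ (⊥ : Submodule A A) := by
    refine GC.sp_map _ _ ?_ hw
    rintro ⟨⟨k', hk'⟩, i⟩ ⟨-, hy⟩
    obtain ⟨⟨k, hk⟩, j⟩ := x
    change k' = k at hy
    subst hy
    rw [Submodule.mem_bot, LinearMap.sub_apply, sub_eq_zero, LinearMap.comp_apply, phiR_b, trX_self,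
      Module.Basis.coord_apply, Module.Basis.coord_apply, Module.Basis.repr_self, Module.Basis.repr_self, Finsupp.single_apply, Finsupp.single_apply]
    simp
  rw [Submodule.mem_bot, LinearMap.sub_apply, sub_eq_zero, LinearMap.comp_apply, h, map_zero] at h0
  exact h0

/-- linear equivalence -/
noncomputable def eR (k : ℤ) : (mcOf L N r b).gc.gr Set.univ k ≃ₗ[A] L.X k :=
  LinearEquiv.ofBijective ((phiR L N r b k).domRestrict _) ⟨by
    rw [← LinearMap.ker_eq_bot, LinearMap.ker_eq_bot']
    exact fun w hw => Subtype.ext (phiR_inj L N r b k w w.2 hw), fun v => by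
    obtain ⟨w, hw, e⟩ := phiR_surj L N hN r b k v
    exact ⟨⟨w, hw⟩, e⟩⟩

/-- isomorphism of complexes -/
noncomputable def isoR : (mcOf L N r b).gc.real (mcOf L N r b).gc_closed ≅ L :=
  HomologicalComplex.Hom.isoOfComponents (fun k => (eR L N hN r b k).toModuleIso) (by
    intro i j hij
    have hij' : i + 1 = j := hij
    subst hij'
    ext x
    change (mcOf L N r b).gc.gr Set.univ i at x
    change (L.d i (i+1)).hom (phiR L N r b i x) = phiR L N r b (i+1) ((mcOf L N r b).gc.dres (mcOf L N r b).gc_closed i (i+1) x)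
    rw [GC.dres_coe _ _ rfl, phiR_D L N hN r b i x x.2])
end realize

lemma IsFF.exists_MC {L : CochainComplex (ModuleCat.{u} A) ℤ} (h : IsFF L) : 
    ∃ (ι : Type) (_ : Fintype ι) (_ : DecidableEq ι) (Y : MC A ι), Nonempty (Y.gc.real Y.gc_closed ≅ L) := by
  obtain ⟨⟨N, hN⟩, hf⟩ := h
  have : ∀ k, ∃ (n : ℕ), Nonempty (Module.Basis (Fin n) A (L.X k)) := fun k => by
    have h1 := (hf k).1
    have h2 := (hf k).2
    let b := Module.Free.chooseBasis A (L.X k)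
    exact ⟨_, ⟨b.reindex (Fintype.equivFin _)⟩⟩
  choose r b using this
  exact ⟨_, _, inferInstance, mcOf L N r (fun k => (b k).some), ⟨isoR L N hN _ _⟩⟩

variable [HasDerivedCategory.{w} (ModuleCat.{u} A)]

lemma MC.mem_gr {ι : Type} [Fintype ι] [DecidableEq ι] (Y : MC A ι) (k : ℤ) (v : ι → A) :
    v ∈ Y.gc.gr Set.univ k ↔ Y.pr k v = v := by
  rw [GC.gr, GC.mem_sp]
  constructor
  · intro h
    funext i
    unfold MC.pr
    split_ifs with hi
    · rfl
    · by_contra hne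
      exact hi (h i (fun e => hne e.symm)).2
  · intro h l hl
    refine ⟨trivial, ?_⟩
    by_contra hne
    apply hl
    have := congrFun h l
    unfold MC.pr at this
    rw [if_neg (show ¬ Y.deg l = k from hne)] at this
    exact this.symm

lemma MC.pr_pr {ι : Type} [Fintype ι] [DecidableEq ι] (Y : MC A ι) (k : ℤ) (v : ι → A) :
    Y.pr k (Y.pr k v) = Y.pr k v := by
  funext i
  unfold MC.pr
  split_ifs <;> rfl

lemma MC.sum_pr {ι : Type} [Fintype ι] [DecidableEq ι] (Y : MC A ι) (v : ι → A) :
    ∑ k ∈ Finset.univ.image Y.deg, Y.pr k v = v := by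
  funext i
  rw [Finset.sum_apply, Finset.sum_eq_single (Y.deg i)]
  · simp [MC.pr]
  · intro k _ hk
    simp [MC.pr, hk.symm]
  · intro h
    exact absurd (Finset.mem_image_of_mem _ (Finset.mem_univ i)) h

lemma MC.kills_iff {ι : Type} [Fintype ι] [DecidableEq ι] (Y : MC A ι) (x : A) :
    (∀ n, ∀ v : hH n (DerivedCategory.Q.obj (Y.gc.real Y.gc_closed)), x • v = 0) ↔ Y.Kills x := by
  have h1 : (∀ n, ∀ v : hH n (DerivedCategory.Q.obj (Y.gc.real Y.gc_closed)), x • v = 0) ↔ 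
      ∀ n : ℤ, ∀ v : Y.gc.gr Set.univ n, Y.d.mulVec (v : ι → A) = 0 → ∃ w : Y.gc.gr Set.univ (n-1), Y.d.mulVec (w : ι → A) = x • (v : ι → A) := by
    refine forall_congr' fun n => (kill_iff n _ x).trans (forall_congr' fun v => ?_)
    change Y.gc.gr Set.univ n at v
    have e1 : ((Y.gc.real Y.gc_closed).d n (n+1)).hom v = 0 ↔ Y.d.mulVec (v : ι → A) = 0 := by
      refine (Subtype.ext_iff (a1 := Y.gc.dres Y.gc_closed n (n+1) v) (a2 := 0)).trans ?_
      rw [Y.gc.dres_coe Y.gc_closed rfl v]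
      exact Iff.rfl
    refine imp_congr e1 (exists_congr fun w => ?_)
    change Y.gc.gr Set.univ (n-1) at w
    refine (Subtype.ext_iff (a1 := Y.gc.dres Y.gc_closed (n-1) n w) (a2 := x • v)).trans ?_
    rw [Y.gc.dres_coe Y.gc_closed (by ring) w]
    exact Iff.rfl
  rw [h1]
  constructor
  · intro h v hv
    have h2 : ∀ n, ∃ w, Y.d.mulVec w = x • Y.pr n v := fun n => by
      obtain ⟨w, hw⟩ := h n ⟨Y.pr n v, (Y.mem_gr _ _).2 (Y.pr_pr _ _)⟩ (by
        rw [Y.d_pr, hv]; funext i; simp [MC.pr])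
      exact ⟨w, hw⟩
    choose w hw using h2
    refine ⟨∑ k ∈ Finset.univ.image Y.deg, w k, ?_⟩
    rw [Matrix.mulVec_sum]
    simp only [hw]
    rw [← Finset.smul_sum, Y.sum_pr]
  · intro h n v hv
    obtain ⟨w, hw⟩ := h v hv
    refine ⟨⟨Y.pr (n-1) w, (Y.mem_gr _ _).2 (Y.pr_pr _ _)⟩, ?_⟩
    change Y.d.mulVec (Y.pr (n-1) w) = _
    rw [Y.d_pr, hw, sub_add_cancel]
    have := (Y.mem_gr n v).1 v.2
    funext i
    have := congrFun this i
    simp only [MC.pr, Pi.smul_apply, smul_eq_mul] at this ⊢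
    split_ifs at this ⊢ with hi
    · rfl
    · rw [← this, mul_zero]

theorem thomason {D : Set (DerivedCategory (ModuleCat.{u} A))} (hD : IsThickSubcategory D) 
    {X Y : DerivedCategory (ModuleCat.{u} A)} (hX : IsSmallObject X) (hY : IsSmallObject Y) (hYD : Y ∈ D)
    (h : ∀ x : A, (∀ n, ∀ v : hH n Y, x • v = 0) → ∃ m : ℕ, ∀ n, ∀ v : hH n X, x ^ m • v = 0) : X ∈ D := by
  obtain ⟨L, hL, eL⟩ := exists_FF X hX
  obtain ⟨K, hK, eK⟩ := exists_FF Y hY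
  obtain ⟨ι, _, _, P, ⟨eP⟩⟩ := hL.exists_MC
  obtain ⟨κ, _, _, S, ⟨eS⟩⟩ := hK.exists_MC
  have hX' : ∀ D, IsThickSubcategory D → (X ∈ D ↔ DerivedCategory.Q.obj (P.gc.real P.gc_closed) ∈ D) := fun D hD =>
    (eL D hD).trans ⟨fun h => hD.mem_of_iso (DerivedCategory.Q.mapIso eP.symm) h, fun h => hD.mem_of_iso (DerivedCategory.Q.mapIso eP) h⟩
  have hY' : ∀ D, IsThickSubcategory D → (Y ∈ D ↔ DerivedCategory.Q.obj (S.gc.real S.gc_closed) ∈ D) := fun D hD =>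
    (eK D hD).trans ⟨fun h => hD.mem_of_iso (DerivedCategory.Q.mapIso eS.symm) h, fun h => hD.mem_of_iso (DerivedCategory.Q.mapIso eS) h⟩
  refine (hX' D hD).2 (MC.thomason S P hD ((hY' D hD).1 hYD) ?_)
  intro x hx
  obtain ⟨m, hm⟩ := (hY' _ (kill_thick x)).2 ⟨1, by rw [pow_one]; exact (S.kills_iff x).2 hx⟩
  obtain ⟨m', hm'⟩ := h _ hm
  obtain ⟨k, hk⟩ := (hX' _ (kill_thick x)).1 ⟨m * m', by rw [pow_mul]; exact hm'⟩
  exact ⟨k, (P.kills_iff _).1 hk⟩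
end


section Koszul
variable {A : Type u} [CommRing A] [HasDerivedCategory.{w} (ModuleCat.{u} A)]

/-- the unit object -/
noncomputable abbrev sgl (A : Type u) [CommRing A] [HasDerivedCategory.{w} (ModuleCat.{u} A)] : DerivedCategory (ModuleCat.{u} A) :=
  (DerivedCategory.singleFunctor (ModuleCat.{u} A) 0).obj (ModuleCat.of A A)

lemma sgl_small : IsSmallObject (sgl A) := fun _ _ h => h

/-- degree zero homology of the unit object -/
noncomputable def sgl_zero : A ≃ₗ[A] hH 0 (sgl A) :=
  ((DerivedCategory.singleFunctorCompHomologyFunctorIso (ModuleCat.{u} A) 0).app (ModuleCat.of A A)).symm.toLinearEquiv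

lemma sgl_ne (n : ℤ) (hn : n ≠ 0) : Subsingleton (hH n (sgl A)) := by
  have h1 := (HomologicalComplex.exactAt_single_obj (ComplexShape.up ℤ) 0 (ModuleCat.of A A) n hn).isZero_homology
  have h2 := ModuleCat.subsingleton_of_isZero h1
  exact (hQ n ((HomologicalComplex.single (ModuleCat.{u} A) (ComplexShape.up ℤ) 0).obj (ModuleCat.of A A))).toEquiv.subsingleton

lemma small_hw {C : Set (ModuleCat.{u} A)} (hC : HW ⊥ C) (hA : ModuleCat.of A A ∈ C) 
    {X : DerivedCategory (ModuleCat.{u} A)} (hX : IsSmallObject X) (n : ℤ) : hH n X ∈ C := by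
  refine hX _ (homClass_thick hC) (fun n => ?_) n
  by_cases hn : n = 0
  · subst hn
    exact hC.iso (N := hH 0 (sgl A)) sgl_zero hA
  · have := sgl_ne (A := A) n hn
    exact hC.subsing (N := hH n (sgl A))

lemma small_fp (h : IsLeftCoherentRing A) {X : DerivedCategory (ModuleCat.{u} A)} (hX : IsSmallObject X) (n : ℤ) :
    hH n X ∈ finPresModules A := 
  small_hw (fp_hw h) (by change Module.FinitePresentation A A; infer_instance) hX n

lemma small_bounded {X : DerivedCategory (ModuleCat.{u} A)} (hX : IsSmallObject X) : 
    ∃ N : ℤ, ∀ n : ℤ, N < |n| → Subsingleton (hH n X) := 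
  hX _ bounded_thick ⟨0, fun n hn => sgl_ne n (by rintro rfl; simp at hn)⟩

lemma koszul_step (T : Triangle (DerivedCategory (ModuleCat.{u} A))) (hT : T ∈ distTriang _) (y : A) 
    (u : hH 0 T.obj₁ ≃ₗ[A] hH 0 T.obj₂) 
    (h1 : ∀ n, ∀ v, hM n T.mor₁ v = 0 → y • v = 0) 
    (h2 : ∀ n, ∀ v : hH n T.obj₂, hM n T.mor₂ (y • v) = 0)
    (hu : ∀ v, hM 0 T.mor₁ v = y • u v)
    (hp1 : ∀ n : ℤ, 0 < n → Subsingleton (hH n T.obj₁))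
    (hp2 : ∀ n : ℤ, 0 < n → Subsingleton (hH n T.obj₂))
    (I : Ideal A) (q : A →ₗ[A] hH 0 T.obj₂) (hq : Function.Surjective q) (hk : LinearMap.ker q = I) :
    (∀ n, ∀ v : hH n T.obj₃, y ^ 2 • v = 0) ∧ (∀ n : ℤ, 0 < n → Subsingleton (hH n T.obj₃)) ∧ 
     ∃ q : A →ₗ[A] hH 0 T.obj₃, Function.Surjective q ∧ LinearMap.ker q = Ideal.span {y} ⊔ I := by
  refine ⟨fun n v => ?_, fun n hn => ?_, hM 0 T.mor₂ ∘ₗ q, ?_, ?_⟩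
  · have e1 : hM (n+1) T.mor₁ (hδ T n (n+1) rfl v) = 0 := (hex₁ T hT n (n+1) rfl).apply_apply_eq_zero v
    have e2 := h1 _ _ e1
    rw [← map_smul] at e2
    obtain ⟨w, hw⟩ := (hex₃ T hT n (n+1) rfl _).1 e2
    rw [pow_two, mul_smul, ← hw, ← map_smul, h2]
  · have i1 := hp1 (n+1) (by omega)
    have i2 := hp2 n hn
    refine ⟨fun v v' => ?_⟩
    have key : ∀ v : hH n T.obj₃, v = 0 := by
      intro v
      obtain ⟨w, rfl⟩ := (hex₃ T hT n (n+1) rfl v).1 (Subsingleton.elim _ _)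
      rw [Subsingleton.elim w 0, map_zero]
    rw [key v, key v']
  · have i1 := hp1 (0+1) (by omega)
    intro v
    obtain ⟨w, rfl⟩ := (hex₃ T hT 0 (0+1) rfl v).1 (Subsingleton.elim _ _)
    obtain ⟨t, rfl⟩ := hq w
    exact ⟨t, rfl⟩
  · ext t
    rw [Ideal.mem_span_singleton_sup, LinearMap.mem_ker]
    change hM 0 T.mor₂ (q t) = 0 ↔ _
    rw [hex₂ T hT 0 (q t), ← hk]
    constructor
    · rintro ⟨v, hv⟩
      obtain ⟨s, hs⟩ := hq (u v)
      refine ⟨s, t - s * y, ?_, by ring⟩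
      rw [LinearMap.mem_ker, map_sub, ← hv, hu, ← hs, ← map_smul, smul_eq_mul, mul_comm, sub_self]
    · rintro ⟨s, b, hb, rfl⟩
      refine ⟨u.symm (q s), ?_⟩
      rw [hu, u.apply_symm_apply, ← map_smul, map_add, hb, add_zero, smul_eq_mul, mul_comm]

theorem exists_koszul (I : Ideal A) (hI : I.FG) : ∃ K : DerivedCategory (ModuleCat.{u} A), IsSmallObject K ∧ 
    (∀ x ∈ I, ∃ m : ℕ, ∀ n, ∀ v : hH n K, x ^ m • v = 0) ∧ 
    Nonempty ((A ⧸ I) ≃ₗ[A] hH 0 K) := by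
  classical
  have main : ∀ s : Finset A, ∃ K : DerivedCategory (ModuleCat.{u} A), IsSmallObject K ∧ 
    (∀ x ∈ s, ∃ m : ℕ, ∀ n, ∀ v : hH n K, x ^ m • v = 0) ∧ (∀ n : ℤ, 0 < n → Subsingleton (hH n K)) ∧ 
     ∃ q : A →ₗ[A] hH 0 K, Function.Surjective q ∧ LinearMap.ker q = Ideal.span (s : Set A) := by
    intro s
    induction s using Finset.induction_on with
    | empty => 
      refine ⟨sgl A, sgl_small, fun x hx => absurd hx (Finset.notMem_empty x), fun n hn => sgl_ne n hn.ne', sgl_zero.toLinearMap, sgl_zero.surjective, ?_⟩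
      rw [LinearEquiv.ker]; simp
    | insert y s hy ih =>
      obtain ⟨K, hK, hx, hp, q, hq, hk⟩ := ih
      obtain ⟨φ, hφ⟩ := exists_scalar y K
      obtain ⟨K', g, d, hT⟩ := distinguished_cocone_triangle φ
      obtain ⟨c1, c2, q', hq', hk'⟩ := koszul_step (Triangle.mk φ g d) hT y (LinearEquiv.refl A (hH 0 K)) 
        (fun n v hv => (hφ n v).symm.trans hv) 
        (fun n v => (congrArg (hM n g) (hφ n v)).symm.trans ((hex₂ _ hT n).apply_apply_eq_zero v)) (hφ 0) hp hp _ q hq hk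
      refine ⟨K', small_thick.ext₃ _ hT hK hK, ?_, c2, q', hq', ?_⟩
      · intro x hxs
        rcases Finset.mem_insert.1 hxs with rfl | hxs
        · exact ⟨2, c1⟩
        · exact (kill_thick x).ext₃ _ hT (hx x hxs) (hx x hxs)
      · refine Eq.trans hk' ?_
        rw [Finset.coe_insert, Ideal.span_insert]
  obtain ⟨s, rfl⟩ := hI
  obtain ⟨K, hK, hx, hp, q, hq, hk⟩ := main s
  refine ⟨K, hK, ?_, ⟨(Submodule.quotEquivOfEq _ _ hk.symm).trans (q.quotKerEquivOfSurjective hq)⟩⟩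
  obtain ⟨N, hN⟩ := small_bounded hK
  intro x hxs
  have hle : Ideal.span (s : Set A) ≤ (⨅ n : ℤ, Module.annihilator A (hH n K)).radical := by
    rw [Ideal.span_le]
    intro x hxs
    obtain ⟨m, hm⟩ := hx x hxs
    refine ⟨m, ?_⟩
    rw [Submodule.mem_iInf]
    intro n
    rw [Module.mem_annihilator]
    exact hm n
  obtain ⟨m, hm⟩ := hle hxs
  refine ⟨m, fun n v => ?_⟩
  rw [Submodule.mem_iInf] at hm
  exact Module.mem_annihilator.1 (hm n) v
end Koszul


section Filt
variable {A : Type u} [CommRing A] {C : Set (ModuleCat.{u} A)}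

lemma killed_mem (hC : HW ⊥ C) (I : Ideal A) (hI : I.FG) (hq : ModuleCat.of A (A ⧸ I) ∈ C)
    (N : Type u) [AddCommGroup N] [Module A N] [Module.FinitePresentation A N] (hk : ∀ x ∈ I, ∀ m : N, x • m = 0) :
    ModuleCat.of A N ∈ C := by
  obtain ⟨_, _⟩ := exists_str hk
  have hfp : Module.FinitePresentation (A ⧸ I) N := (fp_quot_iff I hI).2 inferInstance
  obtain ⟨n, K, e, hK⟩ := Module.FinitePresentation.exists_fin (A ⧸ I) N
  have : Module.Finite (A ⧸ I) K := Module.Finite.iff_fg.2 hK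
  obtain ⟨m, f, hf⟩ := Module.Finite.exists_fin' (A ⧸ I) K
  let f' : (Fin m → A ⧸ I) →ₗ[A] (Fin n → A ⧸ I) := (K.subtype ∘ₗ f).restrictScalars A
  let g : (Fin n → A ⧸ I) →ₗ[A] N := (e.symm.toLinearMap ∘ₗ K.mkQ).restrictScalars A
  have hg : Function.Surjective g := e.symm.surjective.comp K.mkQ_surjective
  have hgk : LinearMap.range f' = LinearMap.ker g := by
    ext v
    constructor
    · rintro ⟨t, rfl⟩
      change e.symm (K.mkQ (f t)) = 0
      rw [LinearEquiv.map_eq_zero_iff, Submodule.mkQ_apply, Submodule.Quotient.mk_eq_zero]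
      exact (f t).2
    · intro hv
      change e.symm (K.mkQ v) = 0 at hv
      rw [LinearEquiv.map_eq_zero_iff, Submodule.mkQ_apply, Submodule.Quotient.mk_eq_zero] at hv
      obtain ⟨t, ht⟩ := hf ⟨v, hv⟩
      exact ⟨t, congrArg Subtype.val ht⟩
  exact hC.iso ((Submodule.quotEquivOfEq _ _ hgk).trans (g.quotKerEquivOfSurjective hg)) (hC.coker f' (hC.pow hq m) (hC.pow hq n))

lemma filt_mem (h : IsLeftCoherentRing A) (hC : HW ⊥ C) (I : Ideal A) (hI : I.FG) (hq : ModuleCat.of A (A ⧸ I) ∈ C) (m : ℕ) :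
    ∀ (N : Type u) [AddCommGroup N] [Module A N] [Module.FinitePresentation A N], (∀ x ∈ I ^ m, ∀ v : N, x • v = 0) →
    ModuleCat.of A N ∈ C := by
  induction m with
  | zero =>
    intro N _ _ _ hk
    have : Subsingleton N := ⟨fun v w => by
      rw [← one_smul A v, ← one_smul A w, hk 1 (by simp), hk 1 (by simp)]⟩
    exact hC.subsing
  | succ m ih =>
    intro N _ _ _ hk
    have hfin : Module.Finite A N := inferInstance
    have hS : (I • (⊤ : Submodule A N)).FG := Submodule.FG.smul hI hfin.1
    have hS' := CohMod.of_fp h (N := N) _ hS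
    have hQ : Module.FinitePresentation A (N ⧸ (I • (⊤ : Submodule A N))) := by
      refine Module.finitePresentation_of_surjective (Submodule.mkQ _) (Submodule.mkQ_surjective _) ?_
      rwa [Submodule.ker_mkQ]
    refine hC.ext (I • (⊤ : Submodule A N)).subtype (I • (⊤ : Submodule A N)).mkQ (Submodule.subtype_injective _) (Submodule.mkQ_surjective _)
      (LinearMap.exact_subtype_mkQ _) (fun x hx m => by rw [Ideal.mem_bot] at hx; rw [hx, zero_smul]) ?_ ?_
    · refine ih _ ?_
      rintro x hx ⟨v, hv⟩
      apply Subtype.ext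
      change x • v = 0
      refine Submodule.smul_induction_on hv ?_ ?_
      · intro r hr n _
        rw [← mul_smul]
        exact hk _ (by rw [pow_succ]; exact Ideal.mul_mem_mul hx hr) n
      · intro a b ha hb
        rw [smul_add, ha, hb, add_zero]
    · refine killed_mem hC I hI hq _ ?_
      intro x hx v
      obtain ⟨v, rfl⟩ := Submodule.Quotient.mk_surjective _ v
      rw [← Submodule.Quotient.mk_smul, Submodule.Quotient.mk_eq_zero]
      exact Submodule.smul_mem_smul hx trivial

lemma filt_radical (h : IsLeftCoherentRing A) (hC : HW ⊥ C) (I : Ideal A) (hI : I.FG) (hq : ModuleCat.of A (A ⧸ I) ∈ C)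
    (N : Type u) [AddCommGroup N] [Module A N] [Module.FinitePresentation A N] (hk : ∀ x ∈ I, ∃ m : ℕ, ∀ v : N, x ^ m • v = 0) :
    ModuleCat.of A N ∈ C := by
  have hle : I ≤ (Module.annihilator A N).radical := by
    intro x hx
    obtain ⟨m, hm⟩ := hk x hx
    exact ⟨m, Module.mem_annihilator.2 hm⟩
  obtain ⟨m, hm⟩ := Ideal.exists_pow_le_of_le_radical_of_fg hle hI
  exact filt_mem h hC I hI hq m N (fun x hx => Module.mem_annihilator.1 (hm hx))

lemma ann_fg (h : IsLeftCoherentRing A) (N : Type u) [AddCommGroup N] [Module A N] [hN : Module.FinitePresentation A N] :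
    (Module.annihilator A N).FG := by
  obtain ⟨n, s, hs⟩ := Module.Finite.exists_fin (R := A) (M := N)
  let f : A →ₗ[A] (Fin n → N) := LinearMap.pi fun i => LinearMap.toSpanSingleton A N (s i)
  have hker : LinearMap.ker f = Module.annihilator A N := by
    ext x
    rw [LinearMap.mem_ker, Module.mem_annihilator]
    constructor
    · intro hx v
      have hv : v ∈ Submodule.span A (Set.range s) := by rw [hs]; trivial
      induction hv using Submodule.span_induction with
      | mem v hv =>
        obtain ⟨i, rfl⟩ := hv
        exact congrFun hx i
      | zero => exact smul_zero x
      | add v w _ _ hv hw => rw [smul_add, hv, hw, add_zero]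
      | smul a v _ hv => rw [smul_comm, hv, smul_zero]
    · intro hx
      funext i
      exact hx (s i)
  have h1 := (fp_hw h).ker f (by change Module.FinitePresentation A A; infer_instance) ((fp_hw h).pow (show ModuleCat.of A N ∈ finPresModules A from hN) n)
  change Module.FinitePresentation A (LinearMap.ker f) at h1
  rw [← hker]
  exact Module.Finite.iff_fg.1 inferInstance

lemma wideClosure_wide (S : Set (ModuleCat.{u} A)) : IsWideSubcategory (wideClosure S) where
  mem_of_iso e hX C hC := hC.1.mem_of_iso e (hX C hC)
  kernel_mem f hX hY C hC := hC.1.kernel_mem f (hX C hC) (hY C hC)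
  cokernel_mem f hX hY C hC := hC.1.cokernel_mem f (hX C hC) (hY C hC)
  extension_mem S hS h₁ h₃ C hC := hC.1.extension_mem S hS (h₁ C hC) (h₃ C hC)
end Filt

section Surj
variable {A : Type u} [CommRing A] [HasDerivedCategory.{w} (ModuleCat.{u} A)]

/-- modules supported on some object of `D` -/
def Wcl (D : Set (DerivedCategory (ModuleCat.{u} A))) : Set (ModuleCat.{u} A) :=
  {M | ∃ Y ∈ D, ∀ x : A, (∀ n, ∀ v : hH n Y, x • v = 0) → ∃ m : ℕ, ∀ v : M, x ^ m • v = 0}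

lemma kills_retract {X Y : DerivedCategory (ModuleCat.{u} A)} (i : X ⟶ Y) (r : Y ⟶ X) (hir : i ≫ r = 𝟙 X) (x : A)
    (h : ∀ n, ∀ v : hH n Y, x • v = 0) : ∀ n, ∀ v : hH n X, x • v = 0 := by
  intro n v
  have : v = hM n r (hM n i v) := by rw [← hM_comp, hir, hM_id]
  rw [this, ← map_smul, h, map_zero]

lemma Wcl_hw {D : Set (DerivedCategory (ModuleCat.{u} A))} (hD : IsThickSubcategory D) : HW ⊥ (Wcl D) where
  iso {M N} _ _ _ _ e := by
    rintro ⟨Y, hY, hx⟩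
    refine ⟨Y, hY, fun x hxY => ?_⟩
    obtain ⟨m, hm⟩ := hx x hxY
    refine ⟨m, fun v => ?_⟩
    change N at v
    obtain ⟨v, rfl⟩ := e.surjective v
    have h1 : x ^ m • v = 0 := hm v
    have h2 : x ^ m • e v = 0 := by rw [← map_smul, h1, map_zero]
    exact h2
  zero := ⟨0, hD.zero_mem, fun x _ => ⟨0, fun v => rfl⟩⟩
  ker {M N} _ _ _ _ f := by
    rintro ⟨Y, hY, hx⟩ -
    refine ⟨Y, hY, fun x hxY => ?_⟩
    obtain ⟨m, hm⟩ := hx x hxY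
    refine ⟨m, fun v => ?_⟩
    change LinearMap.ker f at v
    have h1 : x ^ m • (v : M) = 0 := hm v
    exact Subtype.ext h1
  coker {M N} _ _ _ _ f := by
    rintro - ⟨Y, hY, hx⟩
    refine ⟨Y, hY, fun x hxY => ?_⟩
    obtain ⟨m, hm⟩ := hx x hxY
    refine ⟨m, fun v => ?_⟩
    change N ⧸ LinearMap.range f at v
    obtain ⟨v, rfl⟩ := Submodule.Quotient.mk_surjective _ v
    have h1 : x ^ m • (v : N) = 0 := hm v
    have h2 : x ^ m • (Submodule.Quotient.mk v : N ⧸ LinearMap.range f) = 0 := by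
      rw [← Submodule.Quotient.mk_smul, h1]; rfl
    exact h2
  killed _ := bot_killed
  ext {L N Q} _ _ _ _ _ _ f g hf hg he _ := by
    rintro ⟨Y, hY, hx⟩ ⟨Y', hY', hx'⟩
    refine ⟨Y ⊞ Y', hD.biprod _ _ hY hY', fun x hxY => ?_⟩
    obtain ⟨m, hm⟩ := hx x (kills_retract biprod.inl biprod.fst biprod.inl_fst x hxY)
    obtain ⟨m', hm'⟩ := hx' x (kills_retract biprod.inr biprod.snd biprod.inr_snd x hxY)
    refine ⟨m + m', fun v => ?_⟩
    change N at v
    have h1 : x ^ m' • g v = 0 := hm' (g v)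
    rw [← map_smul] at h1
    obtain ⟨l, hl⟩ := (he _).1 h1
    have h2 : x ^ m • l = 0 := hm l
    have h3 : x ^ (m + m') • v = 0 := by
      rw [pow_add, mul_smul, ← hl, ← map_smul, h2, map_zero]
    exact h3

lemma gSet_sub {D : Set (DerivedCategory (ModuleCat.{u} A))} {C : Set (ModuleCat.{u} A)} (hC : HW ⊥ C) 
    (h : ∀ X ∈ D, ∀ n, hH n X ∈ C) : gSet D ⊆ C := by
  intro M hM
  refine hM C ⟨hC.wide, ?_⟩
  rintro N ⟨X, hX, n, ⟨e⟩⟩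
  exact hC.iso (M := hH n X) (N := N) e.toLinearEquiv (h X hX n)

lemma gSet_mem {D : Set (DerivedCategory (ModuleCat.{u} A))} {X : DerivedCategory (ModuleCat.{u} A)} (hX : X ∈ D) (n : ℤ) :
    hH n X ∈ gSet D := 
  fun _ hC => hC.2 ⟨X, hX, n, ⟨Iso.refl _⟩⟩

lemma gSet_Wcl {D : Set (DerivedCategory (ModuleCat.{u} A))} (hD : IsThickSubcategory D) : gSet D ⊆ Wcl D := 
  gSet_sub (Wcl_hw hD) fun X hX n => ⟨X, hX, fun x hx => ⟨1, fun v => by rw [pow_one]; exact hx n v⟩⟩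

lemma Wcl_unif {D : Set (DerivedCategory (ModuleCat.{u} A))} (hD : IsThickSubcategory D) (X : DerivedCategory (ModuleCat.{u} A))
    (hX : ∀ n, hH n X ∈ Wcl D) (s : Finset ℤ) : 
    ∃ Y ∈ D, ∀ x : A, (∀ n, ∀ v : hH n Y, x • v = 0) → ∃ m : ℕ, ∀ n ∈ s, ∀ v : hH n X, x ^ m • v = 0 := by
  classical
  induction s using Finset.induction_on with
  | empty => exact ⟨0, hD.zero_mem, fun x _ => ⟨0, fun n hn => absurd hn (Finset.notMem_empty n)⟩⟩
  | insert k s hk ih =>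
    obtain ⟨Y, hY, hx⟩ := ih
    obtain ⟨Y', hY', hx'⟩ := hX k
    refine ⟨Y ⊞ Y', hD.biprod _ _ hY hY', fun x hxY => ?_⟩
    obtain ⟨m, hm⟩ := hx x (kills_retract biprod.inl biprod.fst biprod.inl_fst x hxY)
    obtain ⟨m', hm'⟩ := hx' x (kills_retract biprod.inr biprod.snd biprod.inr_snd x hxY)
    refine ⟨m + m', fun n hn v => ?_⟩
    rcases Finset.mem_insert.1 hn with rfl | hn
    · rw [pow_add, mul_smul, hm', smul_zero]
    · rw [add_comm, pow_add, mul_smul, hm n hn, smul_zero]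

theorem gSet_lattice (h : IsLeftCoherentRing A) {D : Set (DerivedCategory (ModuleCat.{u} A))} (hD : D ∈ thickLatticeSmall.{w} A) : 
    gSet D ∈ wideLatticeFP A :=
  ⟨wideClosure_wide _, ⟨_, gSet_mem hD.1.zero_mem 0⟩, gSet_sub (fp_hw h) fun X hX n => small_fp h (hD.2 X hX) n⟩

theorem fSet_gSet {D : Set (DerivedCategory (ModuleCat.{u} A))} (hD : D ∈ thickLatticeSmall.{w} A) : 
    fSet (gSet D) = D := by
  apply Set.Subset.antisymm
  · rintro X ⟨hX, hn⟩
    obtain ⟨N, hN⟩ := small_bounded hX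
    obtain ⟨Y, hY, hx⟩ := Wcl_unif hD.1 X (fun n => gSet_Wcl hD.1 (hn n)) (Finset.Icc (-N) N)
    refine thomason hD.1 hX (hD.2 Y hY) hY fun x hxY => ?_
    obtain ⟨m, hm⟩ := hx x hxY
    refine ⟨m, fun n v => ?_⟩
    by_cases hnN : N < |n|
    · have := hN n hnN
      exact Subsingleton.elim _ _
    · exact hm n (Finset.mem_Icc.2 (abs_le.1 (not_lt.1 hnN))) v
  · intro X hX
    exact ⟨hD.2 X hX, fun n => gSet_mem hX n⟩

theorem cyclic_mem (h : IsLeftCoherentRing A) (hA : fIsLatticeIso.{w} A) {C : Set (ModuleCat.{u} A)} (hC : C ∈ wideLatticeFP A)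
    (M : Type u) [AddCommGroup M] [Module A M] (hM : ModuleCat.of A M ∈ C) : 
    ModuleCat.of A (A ⧸ Module.annihilator A M) ∈ C := by
  have hw := hC.1.hw hC.2.1
  have hD := fSet_mem.{w} hw
  have hsub : C ⊆ gSet (fSet C) := (hA.2.1 C hC _ (gSet_lattice h hD)).1 (fSet_gSet hD).ge
  obtain ⟨Y, hY, hx⟩ := gSet_Wcl hD.1 (hsub hM)
  have hfp : Module.FinitePresentation A M := hC.2.2 hM
  obtain ⟨K, hK, hKx, ⟨e⟩⟩ := exists_koszul.{w} (Module.annihilator A M) (ann_fg h M)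
  have hKD : K ∈ fSet C := by
    refine thomason hD.1 hK hY.1 hY fun x hxY => ?_
    obtain ⟨m, hm⟩ := hx x hxY
    obtain ⟨m', hm'⟩ := hKx (x ^ m) (Module.mem_annihilator.2 hm)
    exact ⟨m * m', by rw [pow_mul]; exact hm'⟩
  exact hw.iso (M := hH 0 K) e.symm (hKD.2 0)
end Surj

section Final
variable {A : Type u} [CommRing A] 

theorem cyclic_mem_quot [HasDerivedCategory.{w} (ModuleCat.{u} A)] (h : IsLeftCoherentRing A) (hA : fIsLatticeIso.{w} A) (a : Ideal A) (ha : a.FG) 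
    {C : Set (ModuleCat.{u} (A ⧸ a))} (hC : C ∈ wideLatticeFP (A ⧸ a))
    (M : Type u) [AddCommGroup M] [Module (A ⧸ a) M] (hM : ModuleCat.of (A ⧸ a) M ∈ C) : 
    ModuleCat.of (A ⧸ a) ((A ⧸ a) ⧸ Module.annihilator (A ⧸ a) M) ∈ C := by
  have hw := hC.1.hw hC.2.1
  let _ : Module A M := Module.compHom M (Ideal.Quotient.mk a)
  have hst : IsScalarTower A (A ⧸ a) M := IsScalarTower.of_algebraMap_smul fun r m => rfl
  have key : ∀ (r : A) (m : M), Ideal.Quotient.mk a r • m = r • m := fun r m => rfl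
  have hE : ModuleCat.of A M ∈ E0 a C := (E0_iff hw).2 hM
  have hcup := Cup_hw ha hw
  have hcl : Cup C ∈ wideLatticeFP A := ⟨hcup.wide, ⟨_, hcup.zero⟩, Cup_fp h ha hw hC.2.2⟩
  have h1 := cyclic_mem h hA hcl M ⟨0, hE⟩
  have haJ : a ≤ Module.annihilator A M := fun x hx => Module.mem_annihilator.2 (E0_killed hE x hx)
  have hk : ∀ x ∈ a, ∀ m : A ⧸ Module.annihilator A M, x • m = 0 := by
    intro x hx m
    obtain ⟨m, rfl⟩ := Submodule.Quotient.mk_surjective _ m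
    rw [← Submodule.Quotient.mk_smul, Submodule.Quotient.mk_eq_zero]
    exact Ideal.mul_mem_right _ _ (haJ hx)
  have h2 := Cup_down ha hw h1 hk
  obtain ⟨iM, iT⟩ := exists_str hk
  rw [E0_iff hw] at h2
  let q : (A ⧸ a) →ₗ[A ⧸ a] (A ⧸ Module.annihilator A M) := 
    LinearMap.toSpanSingleton (A ⧸ a) (A ⧸ Module.annihilator A M) (Submodule.Quotient.mk 1)
  have hqr : ∀ r : A, q (Ideal.Quotient.mk a r) = Submodule.Quotient.mk r := by
    intro r
    change Ideal.Quotient.mk a r • (Submodule.Quotient.mk 1 : A ⧸ Module.annihilator A M) = _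
    refine (algebraMap_smul (A ⧸ a) r (Submodule.Quotient.mk 1 : A ⧸ Module.annihilator A M)).trans ?_
    rw [← Submodule.Quotient.mk_smul, smul_eq_mul, mul_one]
  have hq : Function.Surjective q := by
    intro v
    obtain ⟨r, rfl⟩ := Submodule.Quotient.mk_surjective _ v
    exact ⟨_, hqr r⟩
  have hker : LinearMap.ker q = Module.annihilator (A ⧸ a) M := by
    ext s
    obtain ⟨r, rfl⟩ := Ideal.Quotient.mk_surjective s
    rw [LinearMap.mem_ker, hqr, Submodule.Quotient.mk_eq_zero, Module.mem_annihilator, Module.mem_annihilator]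
    exact Iff.rfl
  exact hw.iso ((q.quotKerEquivOfSurjective hq).symm.trans (Submodule.quotEquivOfEq _ _ hker)) h2

theorem main_quot [HasDerivedCategory.{w} (ModuleCat.{u} A)] (h : IsLeftCoherentRing A) (a : Ideal A) (ha : a.FG) 
    [HasDerivedCategory.{w} (ModuleCat.{u} (A ⧸ a))] (hA : fIsLatticeIso.{w} A) : fIsLatticeIso.{w} (A ⧸ a) := by
  have hq := coh_quot a h ha
  refine ⟨fun C hC => fSet_mem (hC.1.hw hC.2.1), fun C₁ hC₁ C₂ hC₂ => ⟨fun hf M hM => ?_, fun hs X hX => ⟨hX.1, fun n => hs (hX.2 n)⟩⟩, 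
    fun D hD => ⟨gSet D, gSet_lattice hq hD, fSet_gSet hD⟩⟩
  have hw₁ := hC₁.1.hw hC₁.2.1
  have hw₂ := hC₂.1.hw hC₂.2.1
  have hfp : Module.FinitePresentation (A ⧸ a) M := hC₁.2.2 hM
  have hI := ann_fg hq M
  have h1 := cyclic_mem_quot h hA a ha hC₁ M hM
  obtain ⟨K, hK, hKx, ⟨e⟩⟩ := exists_koszul.{w} (Module.annihilator (A ⧸ a) M) hI
  have hKf : K ∈ fSet C₁ := by
    refine ⟨hK, fun n => ?_⟩
    have hn : Module.FinitePresentation (A ⧸ a) (hH n K) := small_fp hq hK n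
    exact filt_radical hq hw₁ _ hI h1 (hH n K) fun x hx => (hKx x hx).imp fun m hm => hm n
  have h2 := hw₂.iso (M := hH 0 K) e.symm ((hf hKf).2 0)
  exact killed_mem hw₂ _ hI h2 M fun x hx m => Module.mem_annihilator.1 hx m
end Final

/-- Theorem 4.6, first part: suppose `R` is a commutative coherent
ring such that the map `f_R`, from wide subcategories of finitely presented `R`-modules
to thick subcategories of small objects of `D(R)`, is a (lattice) isomorphism, and let
`a` be a finitely generated ideal of `R`.  Then `f_{R/a}` is also an isomorphism. -/
theorem fIsLatticeIso_quotient (R : Type u) [CommRing R]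
    [HasDerivedCategory.{w} (ModuleCat.{u} R)]
    (hcoh : IsLeftCoherentRing R)
    (a : Ideal R) (ha : a.FG)
    [HasDerivedCategory.{w} (ModuleCat.{u} (R ⧸ a))]
    (hR : fIsLatticeIso R) :
    fIsLatticeIso (R ⧸ a) := by
  exact main_quot hcoh a ha hR
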